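/- Let x → ∞. Then max_{n ≤ x} log δ(δ(n)) = (√(log x)/log₂ x)·( c/√2 + O(log₃ x / log₂ x) ), where c = (8·∑_{l=1}^∞ (log(1 + 1/l))²)^{1/2} and log_k denotes the k-fold iterated natural logarithm. -/

import Mathlib

open Filter

/-- `r2 n` counts the representations of `n` as a sum of two squares
(signs and order counted). -/
noncomputable def r2 (n : ℕ) : ℕ :=
  Nat.card {p : ℤ × ℤ // p.1 ^ 2 + p.2 ^ 2 = (n : ℤ)}

/- `delta` is the function `δ(n) = r₂(n)/4`, viewed as a real-valued function of a real
variable (taking the value `0` outside of the natural numbers) so that it can be iterated. -/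
open scoped Classical in
noncomputable def delta : ℝ → ℝ := fun x =>
  if h : ∃ n : ℕ, (n : ℝ) = x then (r2 h.choose : ℝ) / 4 else 0

/-- The constant `c = (8·∑_{l=1}^∞ (log(1 + 1/l))²)^{1/2}`. -/
noncomputable def cBEFS : ℝ :=
  Real.sqrt (8 * ∑' l : ℕ, (Real.log (1 + 1 / ((l : ℝ) + 1))) ^ 2)

/-
By unique factorization in `ℤ[i]`, `δ(m) ≤ ∏ (k_p + 1)` over the split primes `p ≡ 1 (mod 4)`,
`k_p` being the exponent of `p` in `m`, and `log (k + 1)` is the sum of the decreasing increments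
`a_l = log (1 + 1 / (l + 1))`, `l < k`. If `m = δ(n)` is to be divisible by `p ^ k`, then `n` must
be divisible by a split prime to a power of about `p`, for each of the `k` factors: the price of the
factor `p` is about `p log √X`, where `X = log n`, and its `l`-th occurrence gains `a_l`.

Linear programming with the multiplier `1 / y` tells which factors to buy: those with `p ≤ a_l y`.
Buying exactly these, each with a new split prime of size at most `y log³ y`, is the lower bound.
For the upper bound the same multiplier is used; the factors of `n` below `√X / log³ X` contribute
negligibly, and all the others cost at least as much as stated. Both bounds become sums over the
split primes up to `a_l y`, summed over `l`, and balance at `y ~ 2 √(X / E)` with `E = ∑ a_l²`,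
which gives `2 √(E X) / log X` with a relative error `O(log log X / log X)`.

The sums over primes need the prime number theorem modulo 4 with relative error
`O(log log x / log x)`. The functions `L(s, χ)`, their derivatives and their inverses are
`O(|im s| ^ ε)` in `1 ≤ re s ≤ 2`, so Perron's formula bounds the Riesz means of
`(Λ(n) 1_{n ≡ a} - 1 / φ(q)) log² n` by `O(x²)`, which saves a factor `log² x`.
-/

namespace IteratedDelta

open Asymptotics Topology

/-! ### Relative errors of size `log log x / log x` -/

section RelativeError

variable {α β : Type*} {l : Filter α} {ε f f₁ f₂ g g₁ g₂ h : α → ℝ}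

/-- `f = g (1 + O(ε))` along the filter `l`. The theorem and all prime number estimates below
are statements of this form, so that their constants never have to be tracked. -/
def IsRelClose (l : Filter α) (ε f g : α → ℝ) : Prop :=
  (fun x ↦ f x - g x) =O[l] fun x ↦ ε x * g x

namespace IsRelClose

theorem refl (l : Filter α) (ε f : α → ℝ) : IsRelClose l ε f f := by
  simpa only [IsRelClose, sub_self] using isBigO_zero _ _

theorem congr' (hfg : IsRelClose l ε f g) (hf : f =ᶠ[l] f₁) (hg : g =ᶠ[l] g₁) :
    IsRelClose l ε f₁ g₁ :=
  IsBigO.congr' hfg (hf.sub hg) (EventuallyEq.rfl.mul hg)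

theorem isEquivalent (hε : Tendsto ε l (𝓝 0)) (hfg : IsRelClose l ε f g) : f ~[l] g := by
  have hεg : (fun x ↦ ε x * g x) =o[l] fun x ↦ 1 * g x :=
    ((isLittleO_one_iff ℝ).2 hε).mul_isBigO (isBigO_refl g l)
  simpa only [one_mul] using! IsBigO.trans_isLittleO hfg hεg

theorem add_isBigO (hfg : IsRelClose l ε f g) (hh : h =O[l] fun x ↦ ε x * g x) :
    IsRelClose l ε (fun x ↦ f x + h x) g :=
  (IsBigO.add hfg hh).congr_left fun x ↦ by ring

theorem add (h₁ : IsRelClose l ε f₁ g) (h₂ : IsRelClose l ε f₂ g) :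
    IsRelClose l ε (fun x ↦ f₁ x + f₂ x) (fun x ↦ g x + g x) :=
  (IsBigO.add h₁ h₂).trans (isBigO_const_mul_self 2⁻¹ _ l |>.congr_left fun x ↦ by ring)
    |>.congr_left fun x ↦ by ring

theorem symm (hε : Tendsto ε l (𝓝 0)) (hfg : IsRelClose l ε f g) : IsRelClose l ε g f :=
  (IsBigO.trans hfg ((isBigO_refl ε l).mul
    (hfg.isEquivalent hε).symm.isBigO)).neg_left.congr_left fun _ ↦ neg_sub _ _

theorem trans (hε : Tendsto ε l (𝓝 0)) (hfg : IsRelClose l ε f g) (hgh : IsRelClose l ε g h) :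
    IsRelClose l ε f h := by
  have hfg' := IsBigO.trans hfg ((isBigO_refl ε l).mul (hgh.isEquivalent hε).isBigO)
  exact (hfg'.add hgh).congr_left fun x ↦ by ring

theorem mul (hε : Tendsto ε l (𝓝 0)) (h₁ : IsRelClose l ε f₁ g₁) (h₂ : IsRelClose l ε f₂ g₂) :
    IsRelClose l ε (fun x ↦ f₁ x * f₂ x) (fun x ↦ g₁ x * g₂ x) := by
  have hleft : (fun x ↦ (f₁ x - g₁ x) * f₂ x) =O[l] fun x ↦ ε x * g₁ x * g₂ x :=
    IsBigO.mul h₁ (h₂.isEquivalent hε).isBigO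
  have hright : (fun x ↦ g₁ x * (f₂ x - g₂ x)) =O[l] fun x ↦ g₁ x * (ε x * g₂ x) :=
    (isBigO_refl g₁ l).mul h₂
  exact ((hleft.congr_right fun x ↦ by ring).add
    (hright.congr_right fun x ↦ by ring)).congr_left fun x ↦ by ring

theorem const_mul (hfg : IsRelClose l ε f g) (c : ℝ) :
    IsRelClose l ε (fun x ↦ c * f x) (fun x ↦ c * g x) :=
  ((isBigO_refl (fun _ ↦ c) l).mul hfg).congr (fun x ↦ by ring) fun x ↦ by ring

theorem pow (hε : Tendsto ε l (𝓝 0)) (hfg : IsRelClose l ε f g) (k : ℕ) :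
    IsRelClose l ε (fun x ↦ f x ^ k) (fun x ↦ g x ^ k) := by
  induction k with
  | zero => simpa only [pow_zero] using refl l ε _
  | succ k ih => simpa only [pow_succ] using ih.mul hε hfg

theorem inv (hε : Tendsto ε l (𝓝 0)) (hfg : IsRelClose l ε f g) :
    IsRelClose l ε (fun x ↦ (f x)⁻¹) (fun x ↦ (g x)⁻¹) := by
  have hequiv := hfg.isEquivalent hε
  obtain ⟨u, hu, hfu⟩ := hequiv.exists_eq_mul
  have hzero : ∀ᶠ x in l, g x = 0 ∨ f x ≠ 0 ∧ g x ≠ 0 := by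
    filter_upwards [hfu, hu.eventually_ne one_ne_zero] with x hx hux
    rcases eq_or_ne (g x) 0 with hg | hg
    · exact Or.inl hg
    · exact Or.inr ⟨by simp [hx, hux, hg], hg⟩
  have hprod : (fun x ↦ (f x - g x) * ((f x)⁻¹ * (g x)⁻¹)) =O[l]
      fun x ↦ ε x * g x * ((g x)⁻¹ * (g x)⁻¹) :=
    IsBigO.mul hfg (hequiv.inv.isBigO.mul (isBigO_refl _ l))
  refine (hprod.neg_left.congr' ?_ ?_)
  · filter_upwards [hfu, hzero] with x hx hcases
    rcases hcases with hg | ⟨hf, hg⟩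
    · simp [hx, hg]
    · field_simp
      ring
  · filter_upwards with x
    rcases eq_or_ne (g x) 0 with hg | hg
    · simp [hg]
    · field_simp

theorem div (hε : Tendsto ε l (𝓝 0)) (h₁ : IsRelClose l ε f₁ g₁) (h₂ : IsRelClose l ε f₂ g₂) :
    IsRelClose l ε (fun x ↦ f₁ x / f₂ x) (fun x ↦ g₁ x / g₂ x) := by
  simpa only [div_eq_mul_inv] using h₁.mul hε (h₂.inv hε)

theorem sandwich (h₁ : IsRelClose l ε f₁ g) (h₂ : IsRelClose l ε f₂ g)
    (hlow : ∀ᶠ x in l, f₁ x ≤ f x) (hupp : ∀ᶠ x in l, f x ≤ f₂ x) : IsRelClose l ε f g := by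
  refine IsBigO.trans (.of_bound' ?_) ((IsBigO.norm_left h₁).add (IsBigO.norm_left h₂))
  filter_upwards [hlow, hupp] with x hx₁ hx₂
  simp only [Real.norm_eq_abs]
  rw [abs_of_nonneg (a := |_| + |_|) (by positivity), abs_le]
  constructor <;>
    linarith [neg_abs_le (f₁ x - g x), le_abs_self (f₂ x - g x), abs_nonneg (f₁ x - g x),
      abs_nonneg (f₂ x - g x)]

theorem comp_tendsto {m : Filter β} {u : β → α} (hfg : IsRelClose l ε f g)
    (hu : Tendsto u m l) :
    IsRelClose m (fun y ↦ ε (u y)) (fun y ↦ f (u y)) (fun y ↦ g (u y)) :=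
  IsBigO.comp_tendsto hfg hu

theorem mono_error {ε' : α → ℝ} (hfg : IsRelClose l ε f g) (hε : ε =O[l] ε') :
    IsRelClose l ε' f g :=
  IsBigO.trans hfg (hε.mul (isBigO_refl g l))

theorem exists_abs_sub_le (hfg : IsRelClose l ε f g) :
    ∃ C > 0, ∀ᶠ x in l, |f x - g x| ≤ C * |ε x * g x| := by
  simpa only [Real.norm_eq_abs] using IsBigO.exists_pos hfg |>.imp fun C hC ↦ ⟨hC.1, hC.2.bound⟩

end IsRelClose

end RelativeError

section LogLogRatio

/-- The relative error `log log x / log x` of all the asymptotic formulas below. -/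
noncomputable def logLogRatio (x : ℝ) : ℝ := Real.log (Real.log x) / Real.log x

theorem tendsto_logLogRatio : Tendsto logLogRatio atTop (𝓝 0) :=
  Real.isLittleO_log_id_atTop.tendsto_div_nhds_zero.comp Real.tendsto_log_atTop

theorem tendsto_log_log_atTop : Tendsto (fun x ↦ Real.log (Real.log x)) atTop atTop :=
  Real.tendsto_log_atTop.comp Real.tendsto_log_atTop

theorem const_isBigO_log_log (c : ℝ) :
    (fun _ : ℝ ↦ c) =O[atTop] fun x ↦ Real.log (Real.log x) :=
  (isLittleO_const_left.2 (Or.inr (tendsto_norm_atTop_atTop.comp tendsto_log_log_atTop))).isBigO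

theorem logLogRatio_eventually_pos : ∀ᶠ x in atTop, 0 < logLogRatio x := by
  filter_upwards [tendsto_log_log_atTop.eventually_gt_atTop 0,
    Real.tendsto_log_atTop.eventually_gt_atTop 0] with x hloglog hlog
  exact div_pos hloglog hlog

theorem inv_log_isBigO_logLogRatio : (fun x ↦ (Real.log x)⁻¹) =O[atTop] logLogRatio := by
  refine .of_bound' ?_
  filter_upwards [tendsto_log_log_atTop.eventually_ge_atTop 1,
    Real.tendsto_log_atTop.eventually_gt_atTop 0] with x hloglog hlog
  rw [logLogRatio, Real.norm_of_nonneg (by positivity), Real.norm_of_nonneg (by positivity),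
    inv_eq_one_div]
  gcongr

theorem isRelClose_log_mul_rpow_mul_log_rpow {c a : ℝ} (hc : 0 < c) (ha : a ≠ 0) (b : ℝ) :
    IsRelClose atTop logLogRatio (fun x ↦ Real.log (c * (x ^ a * Real.log x ^ b)))
      (fun x ↦ a * Real.log x) := by
  have herror := ((const_isBigO_log_log (Real.log c)).add
    ((isBigO_refl _ _).const_mul_left b)).const_mul_right (c := a) ha
  refine IsBigO.congr' herror ?_ ?_
  · filter_upwards [eventually_gt_atTop 0, Real.tendsto_log_atTop.eventually_gt_atTop 0]
      with x hx hlog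
    rw [Real.log_mul hc.ne' (by positivity), Real.log_mul (by positivity) (by positivity),
      Real.log_rpow hx, Real.log_rpow hlog]
    ring
  · filter_upwards [Real.tendsto_log_atTop.eventually_gt_atTop 0] with x hlog
    rw [logLogRatio]
    field_simp

theorem logLogRatio_comp_isBigO {u : ℝ → ℝ} {a : ℝ} (ha : 0 < a)
    (hu : IsRelClose atTop logLogRatio (fun x ↦ Real.log (u x)) (fun x ↦ a * Real.log x)) :
    (fun x ↦ logLogRatio (u x)) =O[atTop] logLogRatio := by
  have hequiv := hu.isEquivalent tendsto_logLogRatio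
  have hlog : (fun x ↦ (Real.log (u x))⁻¹) =O[atTop] fun x ↦ (Real.log x)⁻¹ :=
    (hequiv.inv.isBigO.congr_right fun x ↦ mul_inv a _).trans (isBigO_const_mul_self _ _ _)
  have hlogx := Real.tendsto_log_atTop.const_mul_atTop ha
  have hlogmul : (fun x ↦ Real.log (a * Real.log x)) =O[atTop] fun x ↦ Real.log (Real.log x) := by
    refine ((const_isBigO_log_log (Real.log a)).add (isBigO_refl _ _)).congr' ?_ .rfl
    filter_upwards [Real.tendsto_log_atTop.eventually_gt_atTop 0] with x hx
    rw [Real.log_mul ha.ne' hx.ne']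
  have hloglog := (hequiv.log hlogx).isBigO.trans hlogmul
  simpa only [div_eq_mul_inv] using! hloglog.mul hlog

end LogLogRatio

/-! ### `L`-functions on the line `re s = 1` -/

section AnalyticEstimates

open MeasureTheory Set Complex

section BoundedDiscrepancy

variable {f : ℕ → ℂ} {κ : ℂ} {B : ℝ} {M : ℕ} {s : ℂ}

/-- The error in approximating the sum of `f` over `(M, t]` by `κ (t - M)`. Its Mellin transform
is the tail term of the Euler–Maclaurin formula of order one for the Dirichlet series of `f`. -/
noncomputable def tailRemainder (f : ℕ → ℂ) (κ : ℂ) (M : ℕ) (t : ℝ) : ℂ :=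
  ∑ k ∈ Finset.Ioc M ⌊t⌋₊, f k - κ * (max (t - M) 0 : ℝ)

theorem tailRemainder_of_le {t : ℝ} (h : t ≤ M) : tailRemainder f κ M t = 0 := by
  simp [tailRemainder, Finset.Ioc_eq_empty_of_le (Nat.floor_le_of_le h), h]

theorem norm_tailRemainder_le (hB : ∀ n : ℕ, ‖∑ k ∈ Finset.range n, f k - n * κ‖ ≤ B) (t : ℝ) :
    ‖tailRemainder f κ M t‖ ≤ 2 * B + ‖κ‖ := by
  have hB0 : 0 ≤ B := (norm_nonneg _).trans (hB 0)
  rcases le_total t M with ht | ht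
  · rw [tailRemainder_of_le ht, norm_zero]
    positivity
  have hMt : M ≤ ⌊t⌋₊ := Nat.le_floor ht
  have hsplit : tailRemainder f κ M t =
      (∑ k ∈ Finset.range (⌊t⌋₊ + 1), f k - (⌊t⌋₊ + 1 : ℕ) * κ) -
        (∑ k ∈ Finset.range (M + 1), f k - (M + 1 : ℕ) * κ) - κ * (t - ⌊t⌋₊ : ℝ) := by
    rw [tailRemainder, max_eq_left (sub_nonneg.2 ht), ← Finset.Ico_add_one_add_one_eq_Ioc,
      Finset.sum_Ico_eq_sub _ (by lia)]
    push_cast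
    ring
  have hfract : ‖κ * (t - ⌊t⌋₊ : ℝ)‖ ≤ ‖κ‖ := by
    have h0 : 0 ≤ t - ⌊t⌋₊ := sub_nonneg.2 (Nat.floor_le (M.cast_nonneg.trans ht))
    rw [norm_mul, norm_real, Real.norm_of_nonneg h0]
    exact mul_le_of_le_one_right (norm_nonneg _) (by linarith [Nat.lt_floor_add_one t])
  rw [hsplit]
  linarith [norm_sub_le ((∑ k ∈ Finset.range (⌊t⌋₊ + 1), f k - (⌊t⌋₊ + 1 : ℕ) * κ) -
    (∑ k ∈ Finset.range (M + 1), f k - (M + 1 : ℕ) * κ)) (κ * (t - ⌊t⌋₊ : ℝ)),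
    norm_sub_le (∑ k ∈ Finset.range (⌊t⌋₊ + 1), f k - (⌊t⌋₊ + 1 : ℕ) * κ)
      (∑ k ∈ Finset.range (M + 1), f k - (M + 1 : ℕ) * κ), hB (⌊t⌋₊ + 1), hB (M + 1)]

theorem measurable_tailRemainder : Measurable (tailRemainder f κ M) :=
  ((measurable_from_nat (f := fun n ↦ ∑ k ∈ Finset.Ioc M n, f k)).comp Nat.measurable_floor).sub
    (by fun_prop)

theorem differentiableAt_mellin_tailRemainder
    (hB : ∀ n : ℕ, ‖∑ k ∈ Finset.range n, f k - n * κ‖ ≤ B) (hM : 0 < M) (hs : 0 < s.re) :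
    DifferentiableAt ℂ (fun s ↦ mellin (tailRemainder f κ M) (-s)) s := by
  have hM1 : (1 : ℝ) ≤ M := by exact_mod_cast hM
  refine DifferentiableAt.fun_comp' s (mellin_differentiableAt_of_isBigO_rpow (a := 0)
    (b := -s.re - 1) ?_ ?_ (by simpa using hs) ?_ (by simp)) differentiableAt_fun_id.fun_neg
  · refine ((locallyIntegrable_const (2 * B + ‖κ‖)).mono
      measurable_tailRemainder.aestronglyMeasurable ?_).locallyIntegrableOn _
    exact ae_of_all _ fun t ↦ (norm_tailRemainder_le hB t).trans (le_abs_self _)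
  · simp only [neg_zero, Real.rpow_zero]
    exact isBigO_of_le' (c := 2 * B + ‖κ‖) _ fun t ↦ by simpa using norm_tailRemainder_le hB t
  · refine (isBigO_zero _ _).congr' ?_ EventuallyEq.rfl
    filter_upwards [mem_nhdsWithin_of_mem_nhds (Iio_mem_nhds one_pos)] with t ht
    exact (tailRemainder_of_le ((le_of_lt ht).trans hM1)).symm

theorem mellin_tailRemainder (s : ℂ) : mellin (tailRemainder f κ M) (-s) =
    ∫ t in Ioi (M : ℝ), (t : ℂ) ^ (-s - 1) • tailRemainder f κ M t := by
  refine setIntegral_eq_of_subset_of_forall_sdiff_eq_zero measurableSet_Ioi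
    (Ioi_subset_Ioi M.cast_nonneg) fun t ht ↦ ?_
  rw [tailRemainder_of_le (by simpa using ht.2), smul_zero]

theorem norm_cpow_smul_tailRemainder_le
    (hB : ∀ n : ℕ, ‖∑ k ∈ Finset.range n, f k - n * κ‖ ≤ B) (s : ℂ) {t : ℝ} (ht : 0 < t) :
    ‖(t : ℂ) ^ (-s - 1) • tailRemainder f κ M t‖ ≤ (2 * B + ‖κ‖) * t ^ (-s.re - 1) := by
  rw [norm_smul, norm_cpow_eq_rpow_re_of_pos ht, mul_comm]
  exact mul_le_mul_of_nonneg_right (norm_tailRemainder_le hB t) (by positivity)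

theorem norm_mellin_tailRemainder_le
    (hB : ∀ n : ℕ, ‖∑ k ∈ Finset.range n, f k - n * κ‖ ≤ B) (hM : 0 < M) (hs : 0 < s.re) :
    ‖mellin (tailRemainder f κ M) (-s)‖ ≤ (2 * B + ‖κ‖) * ((M : ℝ) ^ (-s.re) / s.re) := by
  have hM0 : (0 : ℝ) < M := by exact_mod_cast hM
  rw [mellin_tailRemainder]
  calc _ ≤ ∫ t in Ioi (M : ℝ), (2 * B + ‖κ‖) * t ^ (-s.re - 1) :=
        norm_integral_le_of_norm_le
          ((integrableOn_Ioi_rpow_of_lt (by linarith) hM0).const_mul _)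
          ((ae_restrict_mem measurableSet_Ioi).mono fun t ht ↦
            norm_cpow_smul_tailRemainder_le hB s (hM0.trans ht))
    _ = _ := by
        rw [integral_const_mul, integral_Ioi_rpow_of_lt (by linarith) hM0, sub_add_cancel,
          neg_div_neg_eq]

theorem integrableOn_cpow_smul_tailRemainder
    (hB : ∀ n : ℕ, ‖∑ k ∈ Finset.range n, f k - n * κ‖ ≤ B) (hM : 0 < M) (hs : 0 < s.re) :
    IntegrableOn (fun t : ℝ ↦ (t : ℂ) ^ (-s - 1) • tailRemainder f κ M t) (Ioi (M : ℝ)) := by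
  have hM0 : (0 : ℝ) < M := by exact_mod_cast hM
  refine Integrable.mono' ((integrableOn_Ioi_rpow_of_lt (by linarith : -s.re - 1 < -1)
    hM0).const_mul (2 * B + ‖κ‖)) ?_ ((ae_restrict_mem measurableSet_Ioi).mono fun t ht ↦
      norm_cpow_smul_tailRemainder_le hB s (hM0.trans ht))
  refine AEStronglyMeasurable.fun_smul (ContinuousOn.aestronglyMeasurable (fun t ht ↦ ?_)
    measurableSet_Ioi) measurable_tailRemainder.aestronglyMeasurable
  exact (continuousAt_ofReal_cpow_const _ _ (.inr (hM0.trans ht).ne')).continuousWithinAt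

theorem sub_mul_cpow_sub_one {t : ℝ} (ht : 0 < t) (c s : ℂ) :
    (t - c) * (t : ℂ) ^ (-s - 1) = (t : ℂ) ^ (-s) - c * (t : ℂ) ^ (-s - 1) := by
  have ht0 : (t : ℂ) ≠ 0 := by exact_mod_cast ht.ne'
  rw [cpow_sub _ _ ht0, cpow_one]
  field_simp

theorem integrableOn_Ioi_sub_mul_cpow {a : ℝ} (ha : 0 < a) (hs : 1 < s.re) :
    IntegrableOn (fun t : ℝ ↦ (t - a : ℂ) * (t : ℂ) ^ (-s - 1)) (Ioi a) := by
  refine IntegrableOn.congr_fun ?_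
    (fun t ht ↦ (sub_mul_cpow_sub_one (ha.trans ht) a s).symm) measurableSet_Ioi
  exact (integrableOn_Ioi_cpow_of_lt (by simpa using hs) ha).sub
    ((integrableOn_Ioi_cpow_of_lt (by simp; linarith) ha).const_mul _)

theorem mul_integral_Ioi_sub_mul_cpow {a : ℝ} (ha : 0 < a) (hs : 1 < s.re) :
    s * ∫ t in Ioi a, (t - a : ℂ) * (t : ℂ) ^ (-s - 1) = (a : ℂ) ^ (1 - s) / (s - 1) := by
  have hac : (a : ℂ) ≠ 0 := by exact_mod_cast ha.ne'
  have hs0 : s ≠ 0 := fun h ↦ by norm_num [h] at hs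
  have hs1 : s - 1 ≠ 0 := sub_ne_zero.2 fun h ↦ by norm_num [h] at hs
  have hs1' : -s + 1 ≠ 0 := fun h ↦ hs1 (by linear_combination -h)
  have hre : (-s).re < -1 := by simpa using hs
  have hre' : (-s - 1).re < -1 := by simp; linarith
  rw [setIntegral_congr_fun measurableSet_Ioi
      fun t ht ↦ sub_mul_cpow_sub_one (ha.trans ht) (a : ℂ) s,
    integral_sub (integrableOn_Ioi_cpow_of_lt hre ha)
      ((integrableOn_Ioi_cpow_of_lt hre' ha).const_mul _), integral_const_mul,
    integral_Ioi_cpow_of_lt hre ha, integral_Ioi_cpow_of_lt hre' ha, sub_add_cancel,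
    cpow_add _ _ hac, cpow_one, sub_eq_add_neg 1 s, cpow_add _ _ hac, cpow_one]
  field_simp
  ring

theorem LSeries_tail_eq_mul_integral (hf : ∀ n, ‖f n‖ ≤ 1) (hM : 0 < M) (hs : 1 < s.re) :
    LSeries (fun n ↦ if M < n then f n else 0) s =
      s * ∫ t in Ioi (M : ℝ), (∑ k ∈ Finset.Ioc M ⌊t⌋₊, f k) * (t : ℂ) ^ (-(s + 1)) := by
  have hnorm (n : ℕ) : ‖if M < n then f n else 0‖ ≤ 1 := by
    split_ifs
    exacts [hf n, by simp]
  have hpartial (n : ℕ) :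
      ∑ k ∈ Finset.Icc 1 n, (if M < k then f k else 0) = ∑ k ∈ Finset.Ioc M n, f k := by
    rw [← Finset.sum_filter]
    congr 1
    grind
  have hbigO : (fun n : ℕ ↦ ∑ k ∈ Finset.Icc 1 n, ‖if M < k then f k else 0‖)
      =O[atTop] fun n ↦ (n : ℝ) ^ (1 : ℝ) :=
    isBigO_of_le _ fun n ↦ by
      rw [Real.norm_of_nonneg (by positivity), Real.rpow_one, Real.norm_natCast]
      simpa using Finset.sum_le_sum fun k (_ : k ∈ Finset.Icc 1 n) ↦ hnorm k
  rw [LSeries_eq_mul_integral' _ zero_le_one hs hbigO]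
  simp_rw [hpartial]
  congr 1
  refine setIntegral_eq_of_subset_of_forall_sdiff_eq_zero measurableSet_Ioi
    (Ioi_subset_Ioi (by exact_mod_cast hM)) fun t ht ↦ ?_
  rw [Finset.Ioc_eq_empty_of_le (Nat.floor_le_of_le (by simpa using ht.2)), Finset.sum_empty,
    zero_mul]

theorem LSeries_tail_eq (hf : ∀ n, ‖f n‖ ≤ 1)
    (hB : ∀ n : ℕ, ‖∑ k ∈ Finset.range n, f k - n * κ‖ ≤ B) (hM : 0 < M) (hs : 1 < s.re) :
    LSeries (fun n ↦ if M < n then f n else 0) s =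
      κ * ((M : ℂ) ^ (1 - s) / (s - 1)) + s * mellin (tailRemainder f κ M) (-s) := by
  have hM0 : (0 : ℝ) < M := by exact_mod_cast hM
  have hdecomp : ∀ t ∈ Ioi (M : ℝ), (∑ k ∈ Finset.Ioc M ⌊t⌋₊, f k) * (t : ℂ) ^ (-(s + 1)) =
      κ * ((t - (M : ℝ) : ℂ) * (t : ℂ) ^ (-s - 1)) +
        (t : ℂ) ^ (-s - 1) • tailRemainder f κ M t := fun t ht ↦ by
    rw [tailRemainder, max_eq_left (sub_nonneg.2 (le_of_lt ht)), smul_eq_mul, neg_add']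
    push_cast
    ring
  rw [LSeries_tail_eq_mul_integral hf hM hs, setIntegral_congr_fun measurableSet_Ioi hdecomp,
    integral_add ((integrableOn_Ioi_sub_mul_cpow hM0 hs).const_mul κ)
      (integrableOn_cpow_smul_tailRemainder hB hM (by linarith)), integral_const_mul,
    ← mellin_tailRemainder, mul_add, mul_left_comm, mul_integral_Ioi_sub_mul_cpow hM0 hs,
    ofReal_natCast]

/-- The first `M` terms of the Dirichlet series of `f` together with the Euler–Maclaurin
approximation to its tail; it continues the series to the half plane `0 < re s`. -/
noncomputable def truncatedLSeries (f : ℕ → ℂ) (κ : ℂ) (M : ℕ) (s : ℂ) : ℂ :=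
  ∑ n ∈ Finset.range (M + 1), LSeries.term f s n +
    (κ * ((M : ℂ) ^ (1 - s) / (s - 1)) + s * mellin (tailRemainder f κ M) (-s))

theorem LSeries_eq_truncatedLSeries (hf : ∀ n, ‖f n‖ ≤ 1)
    (hB : ∀ n : ℕ, ‖∑ k ∈ Finset.range n, f k - n * κ‖ ≤ B) (hM : 0 < M) (hs : 1 < s.re) :
    LSeries f s = truncatedLSeries f κ M s := by
  have hsummable : LSeriesSummable f s :=
    LSeriesSummable_of_bounded_of_one_lt_re (fun n _ ↦ hf n) hs
  have htail : LSeriesSummable (fun n ↦ if M < n then f n else 0) s :=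
    hsummable.norm.of_norm_bounded fun n ↦ LSeries.norm_term_le s (by split_ifs <;> simp)
  rw [truncatedLSeries, ← LSeries_tail_eq hf hB hM hs, ← sub_eq_iff_eq_add,
    ← LSeries_sub hsummable htail, LSeries, tsum_eq_sum (s := Finset.range (M + 1))]
  · refine Finset.sum_congr rfl fun n hn ↦ ?_
    simp [LSeries.term, (Nat.le_of_lt_succ (Finset.mem_range.1 hn)).not_gt]
  · intro n hn
    simp [LSeries.term, show M < n by simpa using hn]

theorem differentiableAt_truncatedLSeries
    (hB : ∀ n : ℕ, ‖∑ k ∈ Finset.range n, f k - n * κ‖ ≤ B) (hM : 0 < M) (hs : 0 < s.re)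
    (hs1 : s ≠ 1) : DifferentiableAt ℂ (truncatedLSeries f κ M) s := by
  have hMc : (M : ℂ) ≠ 0 := by exact_mod_cast hM.ne'
  refine DifferentiableAt.fun_add (DifferentiableAt.fun_sum fun n _ ↦
    (LSeries.hasDerivAt_term f n s).differentiableAt) (DifferentiableAt.fun_add ?_ ?_)
  · refine (DifferentiableAt.fun_div (d := fun s ↦ s - 1) ?_ (by fun_prop)
      (sub_ne_zero.2 hs1)).const_mul κ
    exact DifferentiableAt.const_cpow (by fun_prop) (.inl hMc)
  · exact differentiableAt_fun_id.fun_mul (differentiableAt_mellin_tailRemainder hB hM hs)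

theorem eq_truncatedLSeries_of_preconnected {F : ℂ → ℂ} {U : Set ℂ} {z : ℂ} (hU : IsOpen U)
    (hU' : IsPreconnected U) (hz : z ∈ U) (hz1 : 1 < z.re) (hUre : ∀ w ∈ U, 0 < w.re)
    (hU1 : 1 ∉ U) (hF : DifferentiableOn ℂ F U) (hFL : ∀ s, 1 < s.re → F s = LSeries f s)
    (hf : ∀ n, ‖f n‖ ≤ 1) (hB : ∀ n : ℕ, ‖∑ k ∈ Finset.range n, f k - n * κ‖ ≤ B)
    (hM : 0 < M) : EqOn F (truncatedLSeries f κ M) U := by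
  refine (hF.analyticOnNhd hU).eqOn_of_preconnected_of_eventuallyEq
    (DifferentiableOn.analyticOnNhd (fun w hw ↦ (differentiableAt_truncatedLSeries hB hM
      (hUre w hw) (ne_of_mem_of_not_mem hw hU1)).differentiableWithinAt) hU) hU' hz ?_
  filter_upwards [(isOpen_lt continuous_const continuous_re).mem_nhds hz1] with w hw
  rw [hFL w hw, LSeries_eq_truncatedLSeries hf hB hM hw]

theorem eq_truncatedLSeries {F : ℂ → ℂ} (hF : ∀ s ≠ 1, DifferentiableAt ℂ F s)
    (hFL : ∀ s, 1 < s.re → F s = LSeries f s) (hf : ∀ n, ‖f n‖ ≤ 1)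
    (hB : ∀ n : ℕ, ‖∑ k ∈ Finset.range n, f k - n * κ‖ ≤ B) (hM : 0 < M) (hs : 0 < s.re)
    (hs' : s.im ≠ 0) : F s = truncatedLSeries f κ M s := by
  have hdiff {U : Set ℂ} (hU : 1 ∉ U) : DifferentiableOn ℂ F U := fun w hw ↦
    (hF w (ne_of_mem_of_not_mem hw hU)).differentiableWithinAt
  rcases hs'.lt_or_gt with him | him
  · have hU1 : (1 : ℂ) ∉ {z : ℂ | 0 < z.re} ∩ {z : ℂ | z.im < 0} := by simp
    exact eq_truncatedLSeries_of_preconnected (z := 2 - I)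
      ((isOpen_re_gt 0).inter (isOpen_im_lt 0))
      ((convex_halfSpace_re_gt 0).inter (convex_halfSpace_im_lt 0)).isPreconnected
      (by simp) (by simp) (fun w hw ↦ hw.1) hU1 (hdiff hU1) hFL hf hB hM ⟨hs, him⟩
  · have hU1 : (1 : ℂ) ∉ {z : ℂ | 0 < z.re} ∩ {z : ℂ | 0 < z.im} := by simp
    exact eq_truncatedLSeries_of_preconnected (z := 2 + I)
      ((isOpen_re_gt 0).inter (isOpen_im_gt 0))
      ((convex_halfSpace_re_gt 0).inter (convex_halfSpace_im_gt 0)).isPreconnected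
      (by simp) (by simp) (fun w hw ↦ hw.1) hU1 (hdiff hU1) hFL hf hB hM ⟨hs, him⟩

theorem sum_range_rpow_sub_one_le {ε : ℝ} (hε : 0 < ε) (hε1 : ε < 1) (M : ℕ) :
    ∑ n ∈ Finset.range (M + 1), (n : ℝ) ^ (ε - 1) ≤ (M : ℝ) ^ ε / ε := by
  induction M with
  | zero => simp [hε.ne', (sub_neg.2 hε1).ne]
  | succ M ih =>
    set m : ℝ := ((M + 1 : ℕ) : ℝ) with hm
    have hm1 : 1 ≤ m := by simp [hm]
    have hm0 : 0 < m := by linarith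
    have hbernoulli := rpow_one_add_le_one_add_mul_self (s := -m⁻¹)
      (neg_le_neg (inv_le_one_of_one_le₀ hm1)) hε.le hε1.le
    have hM : (M : ℝ) = m * (1 + -m⁻¹) := by
      field_simp
      simp [hm]
    have hstep : (M : ℝ) ^ ε ≤ m ^ ε - ε * m ^ (ε - 1) := by
      rw [hM, Real.mul_rpow hm0.le (by linarith [inv_le_one_of_one_le₀ hm1])]
      refine (mul_le_mul_of_nonneg_left hbernoulli (by positivity)).trans_eq ?_
      rw [Real.rpow_sub_one hm0.ne']
      ring
    calc ∑ n ∈ Finset.range (M + 1 + 1), (n : ℝ) ^ (ε - 1) ≤ (M : ℝ) ^ ε / ε + m ^ (ε - 1) := by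
          rw [Finset.sum_range_succ]
          gcongr
      _ ≤ (m ^ ε - ε * m ^ (ε - 1)) / ε + m ^ (ε - 1) := by gcongr
      _ = m ^ ε / ε := by
          field_simp
          ring

theorem norm_sum_term_le (hf : ∀ n, ‖f n‖ ≤ 1) {ε : ℝ} (hε : 0 < ε) (hε1 : ε < 1)
    (hs : 1 - ε ≤ s.re) : ‖∑ n ∈ Finset.range (M + 1), LSeries.term f s n‖ ≤ (M : ℝ) ^ ε / ε := by
  refine (norm_sum_le_of_le _ fun n _ ↦ ?_).trans (sum_range_rpow_sub_one_le hε hε1 M)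
  rcases n.eq_zero_or_pos with rfl | hn
  · simp [Real.rpow_nonneg]
  rw [LSeries.norm_term_eq, if_neg hn.ne', div_eq_mul_inv, ← Real.rpow_neg n.cast_nonneg]
  calc ‖f n‖ * (n : ℝ) ^ (-s.re) ≤ 1 * (n : ℝ) ^ (ε - 1) := by
        gcongr
        exacts [hf n, by exact_mod_cast hn, by linarith]
    _ = _ := one_mul _

theorem norm_div_re_le {ε : ℝ} (hε1 : ε < 1) (hε : 0 ≤ ε) (hs : 1 - ε ≤ s.re) (hM : 0 < M)
    (hsM : |s.im| ≤ 2 * M) : ‖s‖ / s.re ≤ 3 / (1 - ε) * M := by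
  have hM1 : (1 : ℝ) ≤ M := by exact_mod_cast hM
  have hε' : 0 < 1 - ε := by linarith
  have hs0 : 0 < s.re := by linarith
  calc ‖s‖ / s.re ≤ (s.re + |s.im|) / s.re := by
        gcongr
        exact (norm_le_abs_re_add_abs_im s).trans_eq (by rw [abs_of_pos hs0])
    _ = 1 + |s.im| / s.re := by field_simp
    _ ≤ M / (1 - ε) + 2 * M / (1 - ε) := by
        gcongr
        rw [le_div_iff₀ hε']
        linarith
    _ = 3 / (1 - ε) * M := by ring

theorem norm_truncatedLSeries_le (hf : ∀ n, ‖f n‖ ≤ 1)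
    (hB : ∀ n : ℕ, ‖∑ k ∈ Finset.range n, f k - n * κ‖ ≤ B) {ε : ℝ} (hε : 0 < ε) (hε1 : ε < 1)
    (hs : 1 - ε ≤ s.re) (hM : 0 < M) (him : 1 ≤ |s.im|) (hsM : |s.im| ≤ 2 * M) :
    ‖truncatedLSeries f κ M s‖ ≤
      (1 / ε + (‖κ‖ + (2 * B + ‖κ‖) * (3 / (1 - ε)))) * (M : ℝ) ^ ε := by
  have hM1 : (1 : ℝ) ≤ M := by exact_mod_cast hM
  have hs0 : 0 < s.re := by linarith
  have hB0 : 0 ≤ B := (norm_nonneg _).trans (hB 0)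
  have hpow : (M : ℝ) ^ (1 - s.re) ≤ (M : ℝ) ^ ε :=
    Real.rpow_le_rpow_of_exponent_le hM1 (by linarith)
  have hmain : ‖κ * ((M : ℂ) ^ (1 - s) / (s - 1))‖ ≤ ‖κ‖ * (M : ℝ) ^ ε := by
    have hs1 : 1 ≤ ‖s - 1‖ := him.trans (by simpa using abs_im_le_norm (s - 1))
    rw [norm_mul, norm_div, norm_natCast_cpow_of_pos hM, sub_re, one_re]
    exact mul_le_mul_of_nonneg_left ((div_le_self (by positivity) hs1).trans hpow) (norm_nonneg _)
  have hmellin : ‖s * mellin (tailRemainder f κ M) (-s)‖ ≤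
      (2 * B + ‖κ‖) * (3 / (1 - ε)) * (M : ℝ) ^ ε := by
    calc _ ≤ ‖s‖ * ((2 * B + ‖κ‖) * ((M : ℝ) ^ (-s.re) / s.re)) := by
          rw [norm_mul]
          gcongr
          exact norm_mellin_tailRemainder_le hB hM hs0
      _ = (2 * B + ‖κ‖) * (‖s‖ / s.re) * (M : ℝ) ^ (-s.re) := by ring
      _ ≤ (2 * B + ‖κ‖) * (3 / (1 - ε) * M) * (M : ℝ) ^ (-s.re) := by
          gcongr
          exact norm_div_re_le hε1 hε.le hs hM hsM
      _ = (2 * B + ‖κ‖) * (3 / (1 - ε)) * (M : ℝ) ^ (1 - s.re) := by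
          rw [sub_eq_neg_add 1 s.re, Real.rpow_add_one (by linarith)]
          ring
      _ ≤ _ := by
          have : 0 < 1 - ε := by linarith
          gcongr
  refine ((norm_add_le _ _).trans (add_le_add (norm_sum_term_le hf hε hε1 hs)
    ((norm_add_le _ _).trans (add_le_add hmain hmellin)))).trans_eq ?_
  ring

theorem exists_norm_le_abs_im_rpow {F : ℂ → ℂ} (hF : ∀ s ≠ 1, DifferentiableAt ℂ F s)
    (hFL : ∀ s, 1 < s.re → F s = LSeries f s) (hf : ∀ n, ‖f n‖ ≤ 1)
    (hB : ∀ n : ℕ, ‖∑ k ∈ Finset.range n, f k - n * κ‖ ≤ B) {ε : ℝ} (hε : 0 < ε) (hε1 : ε < 1) :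
    ∃ C, ∀ s : ℂ, 1 - ε ≤ s.re → 1 ≤ |s.im| → ‖F s‖ ≤ C * |s.im| ^ ε := by
  have hB0 : 0 ≤ B := (norm_nonneg _).trans (hB 0)
  refine ⟨1 / ε + (‖κ‖ + (2 * B + ‖κ‖) * (3 / (1 - ε))), fun s hs him ↦ ?_⟩
  have hM : 0 < ⌊|s.im|⌋₊ := Nat.floor_pos.2 him
  have hM1 : (1 : ℝ) ≤ ⌊|s.im|⌋₊ := by exact_mod_cast hM
  rw [eq_truncatedLSeries hF hFL hf hB hM (by linarith) (abs_pos.1 (by linarith))]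
  refine (norm_truncatedLSeries_le hf hB hε hε1 hs hM him
    (by linarith [Nat.lt_floor_add_one |s.im|])).trans (mul_le_mul_of_nonneg_left ?_ ?_)
  · exact Real.rpow_le_rpow (by positivity) (Nat.floor_le (abs_nonneg _)) hε.le
  · have : 0 < 1 - ε := by linarith
    positivity

end BoundedDiscrepancy

section DirichletCharacter

open DirichletCharacter

variable {N : ℕ} [NeZero N] (χ : DirichletCharacter ℂ N)

theorem exists_norm_sum_sub_le_of_periodic {g : ℕ → ℂ} (hg : Function.Periodic g N) :
    ∃ κ : ℂ, ∃ B : ℝ, ∀ n : ℕ, ‖∑ k ∈ Finset.range n, g k - n * κ‖ ≤ B := by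
  set κ := (∑ k ∈ Finset.range N, g k) / N
  have hperiod : Function.Periodic (fun n : ℕ ↦ ∑ k ∈ Finset.range n, g k - n * κ) N := fun n ↦ by
    have hN : (N : ℂ) ≠ 0 := by exact_mod_cast NeZero.ne N
    have hNκ : N * κ = ∑ k ∈ Finset.range N, g k := by
      simp only [κ]
      field_simp
    have hshift : ∑ k ∈ Finset.range n, g (N + k) = ∑ k ∈ Finset.range n, g k :=
      Finset.sum_congr rfl fun k _ ↦ by rw [add_comm, hg]
    dsimp only
    rw [add_comm n, Finset.sum_range_add, hshift]
    push_cast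
    linear_combination -hNκ
  refine ⟨κ, ∑ j ∈ Finset.range N, ‖∑ k ∈ Finset.range j, g k - j * κ‖, fun n ↦ ?_⟩
  rw [← hperiod.map_mod_nat n]
  exact Finset.single_le_sum (f := fun j : ℕ ↦ ‖∑ k ∈ Finset.range j, g k - j * κ‖)
    (fun _ _ ↦ norm_nonneg _) (Finset.mem_range.2 (n.mod_lt (NeZero.pos N)))

theorem exists_norm_LFunction_le {ε : ℝ} (hε : 0 < ε) (hε1 : ε < 1) :
    ∃ C, ∀ s : ℂ, 1 - ε ≤ s.re → 1 ≤ |s.im| → ‖LFunction χ s‖ ≤ C * |s.im| ^ ε := by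
  obtain ⟨κ, B, hB⟩ := exists_norm_sum_sub_le_of_periodic (N := N) (g := fun n ↦ χ n)
    fun n ↦ by simp
  exact exists_norm_le_abs_im_rpow (fun s hs ↦ differentiableAt_LFunction χ s (.inl hs))
    (fun s hs ↦ LFunction_eq_LSeries χ hs) (fun n ↦ χ.norm_le_one n) hB hε hε1

end DirichletCharacter

section Subpolynomial

/-- Going to infinity inside the strip `1 ≤ re s ≤ 2`, upwards or downwards. -/
def verticalStrip : Filter ℂ :=
  comap (fun s ↦ |s.im|) atTop ⊓ 𝓟 {s | s.re ∈ Icc 1 2}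

theorem eventually_verticalStrip {p : ℂ → Prop} :
    (∀ᶠ s in verticalStrip, p s) ↔ ∃ T, ∀ s : ℂ, s.re ∈ Icc 1 2 → T ≤ |s.im| → p s := by
  simp only [verticalStrip, eventually_inf_principal,
    (atTop_basis.comap fun s : ℂ ↦ |s.im|).eventually_iff, true_and, mem_preimage, mem_Ici,
    mem_ofPred_eq]
  exact exists_congr fun T ↦ forall_congr' fun s ↦ imp.swap

theorem tendsto_abs_im_verticalStrip : Tendsto (fun s : ℂ ↦ |s.im|) verticalStrip atTop :=
  tendsto_comap.mono_left inf_le_left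

theorem eventually_ne_one_verticalStrip : ∀ᶠ s in verticalStrip, s ≠ 1 ∧ 1 ≤ s.re :=
  eventually_verticalStrip.2 ⟨1, fun s hs him ↦ ⟨by rintro rfl; norm_num at him, hs.1⟩⟩

/-- Growth slower than every power of `|im s|`. Unlike a bound with a fixed exponent, this is
stable under products. -/
def IsSubpolynomial (F : ℂ → ℂ) : Prop :=
  ∀ ε : ℝ, 0 < ε → F =O[verticalStrip] fun s ↦ |s.im| ^ ε

namespace IsSubpolynomial

variable {F G : ℂ → ℂ}

theorem of_le_one (h : ∀ ε : ℝ, 0 < ε → ε < 1 → F =O[verticalStrip] fun s ↦ |s.im| ^ ε) :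
    IsSubpolynomial F := fun ε hε ↦ by
  refine (h (min ε (1 / 2)) (by positivity)
    (min_lt_of_right_lt one_half_lt_one)).trans (IsBigO.of_bound 1 ?_)
  filter_upwards [tendsto_abs_im_verticalStrip.eventually_ge_atTop 1] with s hs
  rw [one_mul, Real.norm_of_nonneg (by positivity), Real.norm_of_nonneg (by positivity)]
  exact Real.rpow_le_rpow_of_exponent_le hs (min_le_left _ _)

theorem add (hF : IsSubpolynomial F) (hG : IsSubpolynomial G) :
    IsSubpolynomial fun s ↦ F s + G s :=
  fun ε hε ↦ (hF ε hε).add (hG ε hε)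

theorem mul (hF : IsSubpolynomial F) (hG : IsSubpolynomial G) :
    IsSubpolynomial fun s ↦ F s * G s := fun ε hε ↦ by
  refine ((hF (ε / 2) (by positivity)).mul (hG (ε / 2) (by positivity))).congr_right fun s ↦ ?_
  rw [← Real.rpow_add_of_nonneg (abs_nonneg _) (by positivity) (by positivity), add_halves]

theorem const_mul (hF : IsSubpolynomial F) (c : ℂ) : IsSubpolynomial fun s ↦ c * F s :=
  fun ε hε ↦ (hF ε hε).const_mul_left c

theorem pow (hF : IsSubpolynomial F) (k : ℕ) :
    IsSubpolynomial fun s ↦ F s ^ (k + 1) := by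
  induction k with
  | zero => simpa using hF
  | succ k ih => simpa only [pow_succ _ (k + 1)] using ih.mul hF

theorem sum {ι : Type*} {t : Finset ι} {F : ι → ℂ → ℂ} (hF : ∀ i ∈ t, IsSubpolynomial (F i)) :
    IsSubpolynomial fun s ↦ ∑ i ∈ t, F i s :=
  fun ε hε ↦ IsBigO.fun_sum fun i hi ↦ hF i hi ε hε

theorem iteratedDeriv (hF : ∀ s ≠ 1, DifferentiableAt ℂ F s)
    (hgrowth : ∀ ε : ℝ, 0 < ε → ε < 1 →
      ∃ C, ∀ s : ℂ, 1 - ε ≤ s.re → 1 ≤ |s.im| → ‖F s‖ ≤ C * |s.im| ^ ε) (j : ℕ) :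
    IsSubpolynomial (iteratedDeriv j F) := .of_le_one fun ε hε hε1 ↦ by
  obtain ⟨C, hC⟩ := hgrowth ε hε hε1
  have hclose (s z : ℂ) (hz : z ∈ Metric.closedBall s ε) :
      |z.re - s.re| ≤ ε ∧ |z.im - s.im| ≤ ε := by
    rw [mem_closedBall_iff_norm] at hz
    exact ⟨(abs_re_le_norm (z - s)).trans hz, (abs_im_le_norm (z - s)).trans hz⟩
  refine IsBigO.of_bound (j.factorial * (|C| * 2 ^ ε) / ε ^ j) ?_
  refine eventually_verticalStrip.2 ⟨2, fun s hs him ↦ ?_⟩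
  have hdiff : DiffContOnCl ℂ F (Metric.ball s ε) := by
    refine DifferentiableOn.diffContOnCl fun z hz ↦ (hF z ?_).differentiableWithinAt
    rintro rfl
    have := (hclose s 1 (Metric.closure_ball_subset_closedBall hz)).2
    rw [one_im, zero_sub, abs_neg] at this
    linarith
  have hsphere : ∀ z ∈ Metric.sphere s ε, ‖F z‖ ≤ |C| * (2 * |s.im|) ^ ε := fun z hz ↦ by
    obtain ⟨hre, him'⟩ := hclose s z (Metric.sphere_subset_closedBall hz)
    have hlow := abs_sub_abs_le_abs_sub s.im z.im
    have hupp := abs_sub_abs_le_abs_sub z.im s.im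
    rw [abs_sub_comm] at hlow
    refine (hC z (by linarith [(abs_le.1 hre).1, hs.1]) (by linarith)).trans ?_
    gcongr
    exacts [le_abs_self C, by linarith]
  refine (norm_iteratedDeriv_le_of_forall_mem_sphere_norm_le j hε hdiff hsphere).trans_eq ?_
  rw [Real.mul_rpow two_pos.le (abs_nonneg _), Real.norm_of_nonneg (by positivity)]
  ring

theorem congr' (hF : IsSubpolynomial F) (h : F =ᶠ[verticalStrip] G) :
    IsSubpolynomial G :=
  fun ε hε ↦ (hF ε hε).congr' h .rfl

theorem exists_norm_le (hF : IsSubpolynomial F)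
    (hcont : ContinuousOn F {s | 1 ≤ s.re}) {ε : ℝ} (hε : 0 < ε) :
    ∃ C, ∀ s : ℂ, s.re ∈ Icc 1 2 → ‖F s‖ ≤ C * (1 + |s.im|) ^ ε := by
  obtain ⟨C, hC, hbound⟩ := (hF ε hε).exists_nonneg
  obtain ⟨T, hT⟩ := eventually_verticalStrip.1 hbound.bound
  obtain ⟨B, hB⟩ := ((isCompact_Icc (a := (1 : ℝ)) (b := 2)).reProdIm
    (isCompact_Icc (a := -T) (b := T))).exists_bound_of_continuousOn
      (hcont.mono fun s hs ↦ hs.1.1)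
  refine ⟨max B C, fun s hs ↦ ?_⟩
  have hpow : 1 ≤ (1 + |s.im|) ^ ε := Real.one_le_rpow (by linarith [abs_nonneg s.im]) hε.le
  rcases le_total T |s.im| with hlarge | hsmall
  · calc ‖F s‖ ≤ C * |s.im| ^ ε := by simpa [Real.abs_rpow_of_nonneg] using hT s hs hlarge
      _ ≤ max B C * (1 + |s.im|) ^ ε := by gcongr; exacts [le_max_right .., by linarith]
  · calc ‖F s‖ ≤ B := hB s ⟨hs, abs_le.1 hsmall⟩
      _ ≤ max B C * 1 := by rw [mul_one]; exact le_max_left ..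
      _ ≤ max B C * (1 + |s.im|) ^ ε := by gcongr

end IsSubpolynomial

end Subpolynomial

section ZeroFree

theorem le_of_pow_three_le {κ C K u x b : ℝ} (hκ : 0 < κ) (hK : 0 < K) (hu : 0 < u) (hb : 0 ≤ b)
    (hκK : 16 * K * C ^ 4 * κ ≤ 1) (hx : κ / u ^ 5 ≤ x) (h : x ^ 3 ≤ K * u * b ^ 4) :
    2 * κ * C ≤ b * u ^ 4 := by
  refine le_of_pow_le_pow_left₀ four_ne_zero (by positivity) (le_of_mul_le_mul_left ?_ hK)
  calc K * (2 * κ * C) ^ 4 = 16 * K * C ^ 4 * κ * κ ^ 3 := by ring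
    _ ≤ 1 * κ ^ 3 := by gcongr
    _ = (κ / u ^ 5) ^ 3 * u ^ 15 := by field_simp
    _ ≤ (K * u * b ^ 4) * u ^ 15 := by
        gcongr
        exact (pow_le_pow_left₀ (by positivity) hx 3).trans h
    _ = K * (b * u ^ 4) ^ 4 := by ring

theorem norm_sub_le_of_norm_deriv_le {F : ℂ → ℂ} {D : ℝ} {s : ℂ} (hs : s.re ∈ Icc 1 2)
    (hF : ∀ z : ℂ, z.re ∈ Icc 1 2 → z.im = s.im → DifferentiableAt ℂ F z ∧ ‖deriv F z‖ ≤ D)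
    {x : ℝ} (hx : 1 + x ∈ Icc s.re 2) : ‖F (1 + x + I * s.im) - F s‖ ≤ D * x := by
  have hconv : Convex ℝ (Icc (1 : ℝ) 2 ×ℂ {s.im}) := 
    ((convex_Icc 1 2).linear_preimage reLm).inter ((convex_singleton _).linear_preimage imLm)
  have hdist : ‖(1 + x + I * s.im : ℂ) - s‖ ≤ x := by
    have : (1 + x + I * s.im : ℂ) - s = (1 + x - s.re : ℝ) := by apply Complex.ext <;> simp
    rw [this, norm_real, Real.norm_of_nonneg (by linarith [hx.1])]
    linarith [hs.1]
  have hD : 0 ≤ D := (norm_nonneg _).trans (hF s hs rfl).2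
  refine (hconv.norm_image_sub_le_of_norm_deriv_le (fun z hz ↦ (hF z hz.1 hz.2).1)
    (fun z hz ↦ (hF z hz.1 hz.2).2) ⟨hs, rfl⟩ ⟨?_, ?_⟩).trans
      (mul_le_mul_of_nonneg_left hdist hD)
  · simpa using ⟨by linarith [hs.1, hx.1], hx.2⟩
  · simp

-- The point `s` is compared with the point at distance `κ / u ^ 5` to the right of the line
-- `re s = 1`: there the three-four-one inequality bounds `F` from below by twice what the mean
-- value theorem can take away on the way back to `s`.
theorem le_norm_mul_pow_four {F : ℂ → ℂ} {C K κ u : ℝ} {s : ℂ} (hs : s.re ∈ Icc 1 2) (hC : 0 < C)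
    (hK : 0 < K) (hu : 1 ≤ u) (hκ : 0 < κ) (hκ1 : κ ≤ 1) (hκK : 16 * K * C ^ 4 * κ ≤ 1)
    (hF : ∀ z : ℂ, z.re ∈ Icc 1 2 → z.im = s.im → DifferentiableAt ℂ F z ∧ ‖deriv F z‖ ≤ C * u)
    (h341 : ∀ x ∈ Ioc (0 : ℝ) 1, x ^ 3 ≤ K * u * ‖F (1 + x + I * s.im)‖ ^ 4) :
    κ * C ≤ ‖F s‖ * u ^ 4 := by
  have hu0 : 0 < u := by linarith
  have hκC : 0 < κ * C := by positivity
  have hδ1 : κ / u ^ 5 ≤ 1 := (div_le_self hκ.le (one_le_pow₀ hu)).trans hκ1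
  have hright {x : ℝ} (hx : κ / u ^ 5 ≤ x) (hx1 : x ≤ 1) :
      2 * κ * C ≤ ‖F (1 + x + I * s.im)‖ * u ^ 4 :=
    le_of_pow_three_le hκ hK hu0 (norm_nonneg _) hκK hx
      (h341 x ⟨(by positivity : 0 < κ / u ^ 5).trans_le hx, hx1⟩)
  rcases le_total (κ / u ^ 5) (s.re - 1) with hfar | hnear
  · have h := hright hfar (by linarith [hs.2])
    rw [show (1 + (s.re - 1 : ℝ) + I * s.im : ℂ) = s by apply Complex.ext <;> simp] at h
    linarith
  · have h := hright le_rfl hδ1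
    have hmv := norm_sub_le_of_norm_deriv_le hs hF (x := κ / u ^ 5)
      ⟨by linarith, by linarith⟩
    have hloss : C * u * (κ / u ^ 5) * u ^ 4 = κ * C := by field_simp
    have htri := norm_sub_norm_le (F (1 + (κ / u ^ 5 : ℝ) + I * s.im)) (F s)
    have hmul := mul_le_mul_of_nonneg_right (htri.trans hmv) (pow_nonneg hu0.le 4)
    rw [sub_mul, hloss] at hmul
    linarith

end ZeroFree

section DirichletCharacterLowerBound

open DirichletCharacter

variable {N : ℕ} [NeZero N] (χ : DirichletCharacter ℂ N)

theorem isSubpolynomial_iteratedDeriv_LFunction (j : ℕ) :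
    IsSubpolynomial (iteratedDeriv j (LFunction χ)) :=
  .iteratedDeriv (fun s hs ↦ differentiableAt_LFunction χ s (.inl hs))
    (fun _ hε hε1 ↦ exists_norm_LFunction_le χ hε hε1) j

theorem exists_norm_LFunctionTrivChar_mul_le :
    ∃ C, ∀ x ∈ Ioc (0 : ℝ) 1, ‖LFunctionTrivChar N (1 + x)‖ * x ≤ C := by
  have hcont : Continuous fun x : ℝ ↦ LFunctionTrivChar₁ N (1 + x) :=
    (differentiable_LFunctionTrivChar₁ N).continuous.comp (by fun_prop)
  obtain ⟨C, hC⟩ := (isCompact_Icc (a := (0 : ℝ)) (b := 1)).exists_bound_of_continuousOn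
    hcont.continuousOn
  refine ⟨C, fun x hx ↦ ?_⟩
  have hne : (1 + x : ℂ) ≠ 1 := by simpa using hx.1.ne'
  simpa [LFunctionTrivChar₁, Function.update_of_ne hne, abs_of_pos hx.1, mul_comm]
    using hC x (Ioc_subset_Icc_self hx)

theorem exists_pow_three_le_norm_LFunction {ε : ℝ} (hε : 0 < ε) (hε1 : ε < 1) :
    ∃ K > 0, ∀ t : ℝ, 2 ≤ |t| → ∀ x ∈ Ioc (0 : ℝ) 1,
      x ^ 3 ≤ K * |t| ^ ε * ‖LFunction χ (1 + x + I * t)‖ ^ 4 := by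
  obtain ⟨C₁, hC₁⟩ := exists_norm_LFunctionTrivChar_mul_le (N := N)
  obtain ⟨C₂, hC₂⟩ := exists_norm_LFunction_le (χ ^ 2) hε hε1
  refine ⟨|C₁| ^ 3 * (|C₂| * 2 ^ ε) + 1, by positivity, fun t ht x hx ↦ ?_⟩
  have hx0 := hx.1
  have him : |(1 + x + 2 * I * t : ℂ).im| = 2 * |t| := by simp [abs_mul]
  have hsq : ‖LFunction (χ ^ 2) (1 + x + 2 * I * t)‖ ≤ |C₂| * 2 ^ ε * |t| ^ ε := by
    have h := hC₂ (1 + x + 2 * I * t) (by simp; linarith) (by rw [him]; linarith)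
    rw [him, Real.mul_rpow two_pos.le (abs_nonneg _), ← mul_assoc] at h
    exact h.trans (by gcongr; exact le_abs_self C₂)
  have htriv := (hC₁ x hx).trans (le_abs_self C₁)
  have h341 := norm_LFunction_product_ge_one χ hx0 t
  rw [norm_mul, norm_mul, norm_pow, norm_pow] at h341
  calc x ^ 3 = x ^ 3 * 1 := (mul_one _).symm
    _ ≤ x ^ 3 * (‖LFunctionTrivChar N (1 + x)‖ ^ 3 * ‖LFunction χ (1 + x + I * t)‖ ^ 4 *
          ‖LFunction (χ ^ 2) (1 + x + 2 * I * t)‖) := by gcongr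
    _ = (‖LFunctionTrivChar N (1 + x)‖ * x) ^ 3 * ‖LFunction χ (1 + x + I * t)‖ ^ 4 *
          ‖LFunction (χ ^ 2) (1 + x + 2 * I * t)‖ := by ring
    _ ≤ |C₁| ^ 3 * ‖LFunction χ (1 + x + I * t)‖ ^ 4 * (|C₂| * 2 ^ ε * |t| ^ ε) := by gcongr
    _ = |C₁| ^ 3 * (|C₂| * 2 ^ ε) * |t| ^ ε * ‖LFunction χ (1 + x + I * t)‖ ^ 4 := by ring
    _ ≤ _ := by
        gcongr
        exact le_add_of_nonneg_right zero_le_one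

theorem isSubpolynomial_inv_LFunction : IsSubpolynomial fun s ↦ (LFunction χ s)⁻¹ :=
  .of_le_one fun ε hε hε1 ↦ by
  have hε4 : 0 < ε / 4 := by positivity
  obtain ⟨K, hK, h341⟩ := exists_pow_three_le_norm_LFunction χ hε4 (by linarith)
  obtain ⟨C, hC, hderiv⟩ :=
    (isSubpolynomial_iteratedDeriv_LFunction χ 1 (ε / 4) hε4).exists_pos
  rw [iteratedDeriv_one] at hderiv
  obtain ⟨T, hT⟩ := eventually_verticalStrip.1 hderiv.bound
  set κ := 1 / (16 * K * C ^ 4 + 1) with hκ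
  have hκ1 : κ ≤ 1 := div_le_one_of_le₀ (le_add_of_nonneg_left (by positivity)) (by positivity)
  have hκK : 16 * K * C ^ 4 * κ ≤ 1 := by
    rw [hκ, mul_one_div]
    exact div_le_one_of_le₀ (by linarith) (by positivity)
  refine IsBigO.of_bound (κ * C)⁻¹ (eventually_verticalStrip.2 ⟨max T 2, fun s hs him ↦ ?_⟩)
  have him2 : 2 ≤ |s.im| := (le_max_right _ _).trans him
  have hlower : κ * C ≤ ‖LFunction χ s‖ * (|s.im| ^ (ε / 4)) ^ 4 := by
    refine le_norm_mul_pow_four hs hC hK (Real.one_le_rpow (by linarith) hε4.le) (by positivity)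
      hκ1 hκK (fun z hz hzs ↦ ⟨differentiableAt_LFunction χ z (.inl ?_), ?_⟩) (h341 s.im him2)
    · rintro rfl
      rw [← hzs] at him2
      norm_num at him2
    · simpa [hzs, abs_of_nonneg (Real.rpow_nonneg (abs_nonneg s.im) _)] using
        hT z hz (by rw [hzs]; exact (le_max_left _ _).trans him)
  rw [← Real.rpow_mul_natCast (abs_nonneg _), Nat.cast_ofNat, div_mul_cancel₀ _ four_ne_zero]
    at hlower
  have hL : 0 < ‖LFunction χ s‖ :=
    pos_of_mul_pos_left ((mul_pos (by positivity) hC).trans_le hlower) (by positivity)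
  rw [norm_inv, Real.norm_of_nonneg (by positivity), inv_mul_eq_div, inv_eq_one_div,
    div_le_div_iff₀ hL (by positivity)]
  linarith

end DirichletCharacterLowerBound

theorem iteratedDeriv_two_logDeriv {f : ℂ → ℂ} {s : ℂ} (hf : AnalyticAt ℂ f s) (h0 : f s ≠ 0) :
    iteratedDeriv 2 (logDeriv f) s =
      iteratedDeriv 3 f s * (f s)⁻¹ - 3 * (iteratedDeriv 2 f s * iteratedDeriv 1 f s * (f s)⁻¹ ^ 2)
        + 2 * (iteratedDeriv 1 f s * (f s)⁻¹) ^ 3 := by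
  have hderiv (z : ℂ) (hz : AnalyticAt ℂ f z) (hz0 : f z ≠ 0) :
      HasDerivAt (logDeriv f) (deriv (deriv f) z / f z - logDeriv f z ^ 2) z := by
    refine (hz.deriv.differentiableAt.hasDerivAt.div
      hz.differentiableAt.hasDerivAt hz0).congr_deriv ?_
    rw [logDeriv_apply]
    field_simp
  have heq : deriv (logDeriv f) =ᶠ[𝓝 s] fun z ↦ deriv (deriv f) z / f z - logDeriv f z ^ 2 := by
    filter_upwards [hf.eventually_analyticAt, hf.continuousAt.eventually_ne h0] with z hz hz0
    exact (hderiv z hz hz0).deriv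
  have hderiv₂ := (hf.deriv.deriv.differentiableAt.hasDerivAt.fun_div
    hf.differentiableAt.hasDerivAt h0).fun_sub ((hderiv s hf h0).fun_pow 2)
  simp only [iteratedDeriv_succ, iteratedDeriv_zero]
  rw [heq.deriv_eq, hderiv₂.deriv, logDeriv_apply, Nat.add_one_sub_one, pow_one]
  field_simp
  push_cast
  ring

section LogDerivatives

open DirichletCharacter ArithmeticFunction.vonMangoldt

theorem analyticAt_LFunction {N : ℕ} [NeZero N] (χ : DirichletCharacter ℂ N) {s : ℂ}
    (hs : s ≠ 1) : AnalyticAt ℂ (LFunction χ) s :=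
  DifferentiableOn.analyticAt (fun z hz ↦
    (differentiableAt_LFunction χ z (.inl hz)).differentiableWithinAt)
    (isOpen_compl_singleton.mem_nhds hs)

theorem analyticAt_logDeriv {f : ℂ → ℂ} {s : ℂ} (hf : AnalyticAt ℂ f s) (h0 : f s ≠ 0) :
    AnalyticAt ℂ (logDeriv f) s :=
  hf.deriv.div hf h0

theorem isSubpolynomial_iteratedDeriv_two_logDeriv_LFunction {N : ℕ} [NeZero N]
    (χ : DirichletCharacter ℂ N) :
    IsSubpolynomial (iteratedDeriv 2 (logDeriv (LFunction χ))) := by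
  have hL := isSubpolynomial_iteratedDeriv_LFunction χ
  have hinv := isSubpolynomial_inv_LFunction χ
  refine ((((hL 3).mul hinv).add ((((hL 2).mul (hL 1)).mul (hinv.pow 1)).const_mul (-3))).add
    ((((hL 1).mul hinv).pow 2).const_mul 2)).congr' ?_
  filter_upwards [eventually_ne_one_verticalStrip] with s ⟨hs1, hs⟩
  rw [iteratedDeriv_two_logDeriv (analyticAt_LFunction χ hs1)
    (LFunction_ne_zero_of_one_le_re χ (.inr hs1) hs)]
  ring

theorem isSubpolynomial_iteratedDeriv_riemannZeta (j : ℕ) :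
    IsSubpolynomial (iteratedDeriv j riemannZeta) := by
  rw [← LFunction_modOne_eq (χ := 1)]
  exact isSubpolynomial_iteratedDeriv_LFunction 1 j

/-- `ζ(s) - 1 / (s - 1)`, with its limit as value at the removable singularity `s = 1`. -/
noncomputable def zetaSubPole : ℂ → ℂ :=
  Function.update (fun s ↦ riemannZeta s - 1 / (s - 1)) 1 Real.eulerMascheroniConstant

theorem analyticAt_zetaSubPole (s : ℂ) : AnalyticAt ℂ zetaSubPole s := by
  have hdiff (z : ℂ) (hz : z ≠ 1) : DifferentiableAt ℂ zetaSubPole z := by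
    refine ((differentiableAt_riemannZeta hz).fun_sub ((differentiableAt_const 1).fun_div
      (differentiableAt_id.sub_const 1) (sub_ne_zero.2 hz))).congr_of_eventuallyEq ?_
    filter_upwards [isOpen_compl_singleton.mem_nhds hz] with w hw
    exact Function.update_of_ne hw _ _
  refine Complex.analyticAt_of_differentiable_on_punctured_nhds_of_continuousAt ?_ ?_
  · rcases eq_or_ne s 1 with rfl | hs
    · exact eventually_mem_nhdsWithin.mono hdiff
    · exact eventually_nhdsWithin_of_eventually_nhds
        (.mono (isOpen_compl_singleton.mem_nhds hs) hdiff)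
  · rcases eq_or_ne s 1 with rfl | hs
    · exact continuousAt_update_same.2 tendsto_riemannZeta_sub_one_div
    · exact (hdiff s hs).continuousAt

section Coefficients

variable {q : ℕ} (a : ZMod q)

/-- The difference between the von Mangoldt function restricted to the class of `a` modulo `q` and
the constant `1 / φ(q)`, its mean value when `a` is a unit. -/
noncomputable def residueError (n : ℕ) : ℝ :=
  residueClass a n - (q.totient : ℝ)⁻¹

theorem ofReal_residueError : (fun n ↦ (residueError a n : ℂ)) =
    (fun n ↦ (residueClass a n : ℂ)) - (q.totient : ℂ)⁻¹ • 1 := by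
  ext n
  simp [residueError]

theorem LSeriesSummable_residueClass {s : ℂ} (hs : 1 < s.re) :
    LSeriesSummable (fun n ↦ (residueClass a n : ℂ)) s :=
  LSeriesSummable_of_abscissaOfAbsConv_lt_re
    ((abscissaOfAbsConv_residueClass_le_one a).trans_lt (by exact_mod_cast hs))

theorem LSeriesSummable_residueError {s : ℂ} (hs : 1 < s.re) :
    LSeriesSummable (fun n ↦ (residueError a n : ℂ)) s := by
  rw [ofReal_residueError]
  exact (LSeriesSummable_residueClass a hs).sub ((LSeriesSummable_one_iff.2 hs).smul _)

end Coefficients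

variable {q : ℕ} [NeZero q]

/-- The continuation of the L-series of `residueError a` to the closed half-plane `1 ≤ re s`. -/
noncomputable def residueErrorLFunction (a : ZMod q) (s : ℂ) : ℂ :=
  LFunctionResidueClassAux a s - (q.totient : ℂ)⁻¹ * zetaSubPole s

variable {a : ZMod q}

theorem residueErrorLFunction_eq_LSeries (ha : IsUnit a) {s : ℂ} (hs : 1 < s.re) :
    residueErrorLFunction a s = LSeries (fun n ↦ (residueError a n : ℂ)) s := by
  have hs1 : s ≠ 1 := by rintro rfl; simp at hs
  rw [ofReal_residueError, LSeries_sub (LSeriesSummable_residueClass a hs)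
    ((LSeriesSummable_one_iff.2 hs).smul _), LSeries_smul, LSeries_one_eq_riemannZeta hs,
    residueErrorLFunction, eqOn_LFunctionResidueClassAux ha hs, zetaSubPole,
    Function.update_of_ne hs1]
  ring

theorem LFunctionTrivChar₁_ne_zero {s : ℂ} (hs : 1 ≤ s.re) : LFunctionTrivChar₁ q s ≠ 0 := by
  rcases eq_or_ne s 1 with rfl | hs1
  · exact LFunctionTrivChar₁_apply_one_ne_zero q
  · rw [LFunctionTrivChar₁, Function.update_of_ne hs1]
    exact mul_ne_zero (sub_ne_zero.2 hs1) (LFunction_ne_zero_of_one_le_re 1 (.inr hs1) hs)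

theorem analyticAt_residueErrorLFunction {s : ℂ} (hs : 1 ≤ s.re) :
    AnalyticAt ℂ (residueErrorLFunction a) s := by
  have htriv : AnalyticAt ℂ (LFunctionTrivChar₁ q) s :=
    (differentiable_LFunctionTrivChar₁ q).analyticAt s
  refine (analyticAt_const.fun_mul ((htriv.deriv.neg.fun_div htriv
    (LFunctionTrivChar₁_ne_zero hs)).fun_sub (Finset.analyticAt_fun_sum _ fun χ hχ ↦ ?_))).fun_sub
    (analyticAt_const.fun_mul (analyticAt_zetaSubPole s))
  have hχ1 : χ ≠ 1 := by simpa using hχ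
  have hL : AnalyticAt ℂ (LFunction χ) s := (differentiable_LFunction hχ1).analyticAt s
  exact (analyticAt_const.fun_mul hL.deriv).fun_div hL
    (LFunction_ne_zero_of_one_le_re χ (.inl hχ1) hs)

theorem residueErrorLFunction_eq_sum_logDeriv (ha : IsUnit a) {s : ℂ} (hs1 : s ≠ 1)
    (h0 : LFunctionTrivChar q s ≠ 0) :
    residueErrorLFunction a s = -(q.totient : ℂ)⁻¹ *
      (∑ χ : DirichletCharacter ℂ q, χ a⁻¹ * logDeriv (LFunction χ) s + riemannZeta s) := by
  have ha' : IsUnit a⁻¹ := .of_mul_eq_one a (ZMod.inv_mul_of_unit a ha)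
  have hs1' := sub_ne_zero.2 hs1
  have htriv : deriv (LFunctionTrivChar₁ q) s / LFunctionTrivChar₁ q s =
      1 / (s - 1) + logDeriv (LFunctionTrivChar q) s := by
    rw [deriv_LFunctionTrivChar₁_apply_of_ne_one q hs1, LFunctionTrivChar₁,
      Function.update_of_ne hs1, logDeriv_apply]
    field_simp
    ring
  let : DecidableEq (DirichletCharacter ℂ q) := fun _ _ ↦ Classical.propDecidable _
  rw [Fintype.sum_eq_add_sum_compl 1, MulChar.one_apply ha', residueErrorLFunction,
    LFunctionResidueClassAux, neg_div, htriv, zetaSubPole, Function.update_of_ne hs1]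
  simp only [logDeriv_apply, mul_div_assoc, LFunctionTrivChar]
  ring

theorem isSubpolynomial_iteratedDeriv_residueErrorLFunction (ha : IsUnit a) :
    IsSubpolynomial (iteratedDeriv 2 (residueErrorLFunction a)) := by
  refine (((IsSubpolynomial.sum (t := .univ) fun χ _ ↦
    (isSubpolynomial_iteratedDeriv_two_logDeriv_LFunction χ).const_mul (χ a⁻¹)).add
    (isSubpolynomial_iteratedDeriv_riemannZeta 2)).const_mul (-(q.totient : ℂ)⁻¹)).congr' ?_
  filter_upwards [eventually_ne_one_verticalStrip] with s ⟨hs1, hs⟩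
  have h0 (χ : DirichletCharacter ℂ q) : LFunction χ s ≠ 0 :=
    LFunction_ne_zero_of_one_le_re χ (.inr hs1) hs
  have heq : residueErrorLFunction a =ᶠ[𝓝 s] fun z ↦ -(q.totient : ℂ)⁻¹ *
      (∑ χ : DirichletCharacter ℂ q, χ a⁻¹ * logDeriv (LFunction χ) z + riemannZeta z) := by
    filter_upwards [isOpen_compl_singleton.mem_nhds hs1,
      (analyticAt_LFunction (1 : DirichletCharacter ℂ q) hs1).continuousAt.eventually_ne (h0 1)]
      with z hz hz0 using residueErrorLFunction_eq_sum_logDeriv ha hz hz0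
  have hlog (χ : DirichletCharacter ℂ q) :
      ContDiffAt ℂ 2 (fun z ↦ χ a⁻¹ * logDeriv (LFunction χ) z) s :=
    contDiffAt_const.mul (analyticAt_logDeriv (analyticAt_LFunction χ hs1) (h0 χ)).contDiffAt
  have hzeta : ContDiffAt ℂ 2 riemannZeta s := by
    rw [← LFunction_modOne_eq (χ := 1)]
    exact (analyticAt_LFunction 1 hs1).contDiffAt
  rw [heq.iteratedDeriv_eq, iteratedDeriv_const_mul_field,
    iteratedDeriv_fun_add (ContDiffAt.sum fun χ _ ↦ hlog χ) hzeta,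
    iteratedDeriv_fun_sum fun χ _ ↦ hlog χ]
  simp only [iteratedDeriv_const_mul_field]

theorem exists_norm_LSeries_logMul_residueError_le (ha : IsUnit a) {ε : ℝ} (hε : 0 < ε) :
    ∃ C, ∀ s : ℂ, 1 < s.re → s.re ≤ 2 →
      ‖LSeries (LSeries.logMul^[2] fun n ↦ (residueError a n : ℂ)) s‖ ≤ C * (1 + |s.im|) ^ ε := by
  have hcont : ContinuousOn (iteratedDeriv 2 (residueErrorLFunction a)) {s | 1 ≤ s.re} :=
    fun s hs ↦ by
      simp only [iteratedDeriv_succ, iteratedDeriv_zero]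
      exact (analyticAt_residueErrorLFunction hs).deriv.deriv.continuousAt.continuousWithinAt
  obtain ⟨C, hbound⟩ :=
    (isSubpolynomial_iteratedDeriv_residueErrorLFunction ha).exists_norm_le hcont hε
  refine ⟨C, fun s hs hs2 ↦ ?_⟩
  have heq : LSeries (fun n ↦ (residueError a n : ℂ)) =ᶠ[𝓝 s] residueErrorLFunction a := by
    filter_upwards [(isOpen_lt continuous_const continuous_re).mem_nhds hs] with z hz
    exact (residueErrorLFunction_eq_LSeries ha hz).symm
  have habs : LSeries.abscissaOfAbsConv (fun n ↦ (residueError a n : ℂ)) < s.re :=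
    (LSeries.abscissaOfAbsConv_le_of_forall_lt_LSeriesSummable fun y hy ↦
      LSeriesSummable_residueError a (by simpa using hy)).trans_lt (by exact_mod_cast hs)
  have hderiv := LSeries_iteratedDeriv 2 habs
  rw [neg_one_sq, one_mul, heq.iteratedDeriv_eq] at hderiv
  exact hderiv ▸ hbound s ⟨hs.le, hs2⟩

end LogDerivatives

/-! ### Perron integrals -/

section Perron

/-- The weight `(1 - t)⁺` on `t > 0`, cutting off a Riesz mean. -/
noncomputable def rieszKernel : ℝ → ℂ :=
  (Ioc 0 1).indicator fun t ↦ 1 - (t : ℂ)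

theorem rieszKernel_of_pos {t : ℝ} (ht : 0 < t) : rieszKernel t = ((max 0 (1 - t) : ℝ) : ℂ) := by
  rcases le_or_gt t 1 with h | h
  · rw [rieszKernel, indicator_of_mem (mem_Ioc.2 ⟨ht, h⟩), max_eq_right (by linarith)]
    push_cast
    rfl
  · rw [rieszKernel, indicator_of_notMem fun hmem ↦ h.not_ge hmem.2, max_eq_left (by linarith),
      ofReal_zero]

theorem continuousAt_rieszKernel {t : ℝ} (ht : 0 < t) : ContinuousAt rieszKernel t := by
  have hcont : Continuous fun u : ℝ ↦ ((max 0 (1 - u) : ℝ) : ℂ) := by fun_prop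
  refine hcont.continuousAt.congr ?_
  filter_upwards [lt_mem_nhds ht] with u hu using (rieszKernel_of_pos hu).symm

theorem hasMellin_rieszKernel {s : ℂ} (hs : 0 < s.re) :
    HasMellin rieszKernel s (1 / s - 1 / (s + 1)) := by
  have hone := hasMellin_one_Ioc hs
  have hid := hasMellin_cpow_Ioc 1 (s := s) (by rw [one_re]; linarith)
  have hsub := hasMellin_sub hone.1 hid.1
  rw [hone.2, hid.2] at hsub
  simp only [cpow_one, ← indicator_sub] at hsub
  exact hsub

theorem norm_mellin_rieszKernel_le {s : ℂ} (hs : 1 ≤ s.re) :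
    ‖mellin rieszKernel s‖ ≤ 2 * (1 + |s.im|) ^ (-2 : ℝ) := by
  have hs0 : s ≠ 0 := by rintro rfl; norm_num at hs
  have hs1 : s + 1 ≠ 0 := fun h ↦ by
    have := congrArg re h
    rw [add_re, one_re, zero_re] at this
    linarith
  have hnorm (z : ℂ) (hz : 1 ≤ z.re) : √(1 + z.im ^ 2) ≤ ‖z‖ := by
    rw [norm_def, normSq_apply]
    exact Real.sqrt_le_sqrt (by nlinarith)
  have hprod : 1 + s.im ^ 2 ≤ ‖s‖ * ‖s + 1‖ := by
    rw [← Real.mul_self_sqrt (by positivity : 0 ≤ 1 + s.im ^ 2)]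
    have hsucc := hnorm (s + 1) (by rw [add_re, one_re]; linarith)
    rw [add_im, one_im, add_zero] at hsucc
    exact mul_le_mul (hnorm s hs) hsucc (by positivity) (by positivity)
  have hinv : 1 / s - 1 / (s + 1) = (s * (s + 1))⁻¹ := by field_simp; ring
  rw [(hasMellin_rieszKernel (by linarith)).2, hinv, norm_inv, norm_mul,
    Real.rpow_neg (by positivity), Real.rpow_two, inv_eq_one_div, ← div_eq_mul_inv,
    div_le_div_iff₀ (by positivity) (by positivity)]
  nlinarith [sq_abs s.im, sq_nonneg (1 - |s.im|)]

theorem verticalIntegrable_mellin_rieszKernel {σ : ℝ} (hσ : 1 ≤ σ) :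
    VerticalIntegrable (mellin rieszKernel) σ := by
  have hdom : Integrable fun y : ℝ ↦ (1 + ‖y‖) ^ (-2 : ℝ) := integrable_one_add_norm (by simp)
  refine (hdom.const_mul 2).mono' ?_ (.of_forall fun y ↦ ?_)
  · have heq : (fun y : ℝ ↦ mellin rieszKernel (σ + y * I)) =
        fun y : ℝ ↦ 1 / ((σ : ℂ) + y * I) - 1 / ((σ : ℂ) + y * I + 1) := by
      ext y
      exact (hasMellin_rieszKernel (by simp; linarith)).2
    rw [heq]
    exact Measurable.aestronglyMeasurable (by fun_prop)
  · simpa using norm_mellin_rieszKernel_le (s := σ + y * I) (by simpa using hσ)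

/-- The contribution of the `n`-th term of the Dirichlet series of `g` to Perron's integral. -/
noncomputable def perronIntegrand (g : ℕ → ℂ) (σ x : ℝ) (n : ℕ) (y : ℝ) : ℂ :=
  LSeries.term g (σ + y * I) n * ((x : ℂ) ^ ((σ : ℂ) + y * I) * mellin rieszKernel (σ + y * I))

variable (g : ℕ → ℂ) {σ x : ℝ}

theorem norm_perronIntegrand (hx : 0 < x) (n : ℕ) (y : ℝ) :
    ‖perronIntegrand g σ x n y‖ =
      ‖LSeries.term g σ n‖ * (x ^ σ * ‖mellin rieszKernel (σ + y * I)‖) := by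
  rw [perronIntegrand, norm_mul, norm_mul, norm_cpow_eq_rpow_re_of_pos hx, LSeries.norm_term_eq,
    LSeries.norm_term_eq]
  simp

theorem integrable_perronIntegrand (hσ : 1 ≤ σ) (hx : 0 < x) (n : ℕ) :
    Integrable (perronIntegrand g σ x n) := by
  have hM : Integrable fun y : ℝ ↦ mellin rieszKernel (σ + y * I) :=
    verticalIntegrable_mellin_rieszKernel hσ
  refine ((hM.norm.const_mul (x ^ σ)).const_mul ‖LSeries.term g σ n‖).mono' ?_
    (.of_forall fun y ↦ (norm_perronIntegrand g hx n y).le)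
  have hcpow : Continuous fun y : ℝ ↦ (x : ℂ) ^ ((σ : ℂ) + y * I) :=
    Continuous.const_cpow (by fun_prop) (.inl (ofReal_ne_zero.2 hx.ne'))
  refine AEStronglyMeasurable.mul ?_ (hcpow.aestronglyMeasurable.mul hM.1)
  refine Continuous.aestronglyMeasurable ?_
  rcases eq_or_ne n 0 with rfl | hn
  · simpa only [LSeries.term_zero] using continuous_const
  · have hn0 : (n : ℂ) ≠ 0 := Nat.cast_ne_zero.2 hn
    simp only [LSeries.term_of_ne_zero hn]
    exact continuous_const.div (.const_cpow (by fun_prop) (.inl hn0))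
      fun y ↦ by simp [cpow_eq_zero_iff, hn0]

theorem integral_perronIntegrand (hσ : 1 ≤ σ) (hx : 0 < x) {n : ℕ} (hn : n ≠ 0) :
    1 / (2 * (Real.pi : ℂ)) * ∫ y, perronIntegrand g σ x n y = g n * rieszKernel (n / x) := by
  have hn0 : (0 : ℝ) < n := by positivity
  have hcpow (s : ℂ) : ((n : ℂ) / x) ^ (-s) = (x : ℂ) ^ s / (n : ℂ) ^ s := by
    have := div_cpow_ofReal_nonneg hn0.le hx.le (-s)
    rw [ofReal_natCast] at this
    rw [this, cpow_neg, cpow_neg]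
    field_simp
  rw [← mellinInv_mellin_eq σ rieszKernel (by positivity)
    (hasMellin_rieszKernel (by rw [ofReal_re]; linarith)).1
    (verticalIntegrable_mellin_rieszKernel hσ) (continuousAt_rieszKernel (by positivity)),
    mellinInv, real_smul, mul_left_comm (g n)]
  push_cast
  congr 1
  rw [← integral_const_mul]
  congr with y
  rw [perronIntegrand, LSeries.term_of_ne_zero hn, smul_eq_mul, hcpow]
  ring

theorem sum_mul_one_sub_div_eq_integral (hσ : 1 ≤ σ) (hx : 0 < x) (hg : LSeriesSummable g σ) :
    ∑ n ∈ Finset.Icc 1 ⌊x⌋₊, g n * ((1 - n / x : ℝ) : ℂ) =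
      1 / (2 * (Real.pi : ℂ)) * ∫ y : ℝ, LSeries g (σ + y * I) *
        ((x : ℂ) ^ ((σ : ℂ) + y * I) * mellin rieszKernel (σ + y * I)) := by
  have hsummable : Summable fun n ↦ ∫ y, ‖perronIntegrand g σ x n y‖ := by
    simp_rw [norm_perronIntegrand g hx, integral_const_mul]
    exact hg.norm.mul_right _
  have hswap := hasSum_integral_of_summable_integral_norm
    (integrable_perronIntegrand g hσ hx) hsummable
  simp only [perronIntegrand, tsum_mul_right] at hswap
  change _ = _ * ∫ y : ℝ, (∑' n, LSeries.term g (σ + y * I) n) * _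
  rw [← hswap.tsum_eq, ← tsum_mul_left, tsum_eq_sum (s := Finset.Icc 1 ⌊x⌋₊)]
  · refine Finset.sum_congr rfl fun n hn ↦ ?_
    obtain ⟨hn1, hnx⟩ := Finset.mem_Icc.1 hn
    have hn0 : n ≠ 0 := by lia
    refine .trans ?_ (integral_perronIntegrand g hσ hx hn0).symm
    rw [rieszKernel_of_pos (by positivity), max_eq_right]
    exact sub_nonneg.2 ((div_le_one hx).2 ((Nat.le_floor_iff hx.le).1 hnx))
  · intro n hn
    rcases eq_or_ne n 0 with rfl | hn0
    · simp
    · have hxn : x < n := (Nat.floor_lt hx.le).1 (by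
        by_contra! h
        exact hn (Finset.mem_Icc.2 ⟨Nat.one_le_iff_ne_zero.2 hn0, h⟩))
      refine (integral_perronIntegrand g hσ hx hn0).trans ?_
      rw [rieszKernel_of_pos (by positivity), max_eq_left, ofReal_zero, mul_zero]
      exact sub_nonpos.2 ((one_le_div hx).2 hxn.le)

-- The abscissa `1 + 1 / log x` makes `x ^ σ = e * x`.
theorem exists_norm_sum_mul_one_sub_div_le {ε C : ℝ} (hε : ε < 1)
    (hsummable : ∀ s : ℂ, 1 < s.re → LSeriesSummable g s)
    (hbound : ∀ s : ℂ, 1 < s.re → s.re ≤ 2 → ‖LSeries g s‖ ≤ C * (1 + |s.im|) ^ ε) :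
    ∃ K, ∀ x : ℝ, Real.exp 1 ≤ x →
      ‖∑ n ∈ Finset.Icc 1 ⌊x⌋₊, g n * ((1 - n / x : ℝ) : ℂ)‖ ≤ K * x := by
  refine ⟨1 / (2 * Real.pi) * (2 * Real.exp 1 * C * ∫ y : ℝ, (1 + ‖y‖) ^ (ε - 2)), fun x hx ↦ ?_⟩
  have hdom : Integrable fun y : ℝ ↦ (1 + ‖y‖) ^ (ε - 2) := by
    simpa using integrable_one_add_norm (E := ℝ) (μ := volume) (r := 2 - ε) (by simp; linarith)
  have hx0 : 0 < x := (Real.exp_pos 1).trans_le hx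
  have hlog : 1 ≤ Real.log x := (Real.le_log_iff_exp_le hx0).2 hx
  set σ := 1 + 1 / Real.log x with hσ
  have hσ1 : 1 < σ := lt_add_of_pos_right 1 (by positivity)
  have hσ2 : σ ≤ 2 := by linarith [(div_le_one (by linarith)).2 hlog]
  have hxσ : x ^ σ = Real.exp 1 * x := by
    rw [hσ, Real.rpow_add hx0, Real.rpow_one, Real.rpow_def_of_pos hx0,
      mul_one_div_cancel (by linarith), mul_comm]
  have hpi : ‖1 / (2 * (Real.pi : ℂ))‖ = 1 / (2 * Real.pi) := by simp [abs_of_pos Real.pi_pos]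
  rw [sum_mul_one_sub_div_eq_integral g hσ1.le hx0 (hsummable σ (by simpa using hσ1)), norm_mul,
    hpi, mul_assoc, mul_right_comm, ← integral_const_mul]
  refine mul_le_mul_of_nonneg_left (norm_integral_le_of_norm_le (hdom.const_mul _) ?_)
    (by positivity)
  filter_upwards with y
  have hL := hbound (σ + y * I) (by simpa using hσ1) (by simpa using hσ2)
  have hM := norm_mellin_rieszKernel_le (s := σ + y * I) (by simpa using hσ1.le)
  simp only [add_im, ofReal_im, mul_im, ofReal_re, I_im, I_re, mul_one, mul_zero, add_zero,
    zero_add] at hL hM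
  have hre : ((σ : ℂ) + y * I).re = σ := by simp
  rw [norm_mul, norm_mul, norm_cpow_eq_rpow_re_of_pos hx0, hre, hxσ]
  calc _ ≤ C * (1 + |y|) ^ ε * (Real.exp 1 * x * (2 * (1 + |y|) ^ (-2 : ℝ))) :=
        mul_le_mul hL (by gcongr) (by positivity) ((norm_nonneg _).trans hL)
    _ = 2 * Real.exp 1 * C * x * ((1 + |y|) ^ ε * (1 + |y|) ^ (-2 : ℝ)) := by ring
    _ = 2 * Real.exp 1 * C * x * (1 + ‖y‖) ^ (ε - 2) := by
        rw [← Real.rpow_add (by positivity), Real.norm_eq_abs, ← sub_eq_add_neg]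

end Perron

/-- The summatory function `∑_{n ≤ x} f(n)` of an arithmetic function; it ignores `f 0`. -/
noncomputable def summatory (f : ℕ → ℝ) (x : ℝ) : ℝ :=
  ∑ n ∈ Finset.Icc 1 ⌊x⌋₊, f n

/-- The first Riesz mean `∑_{n ≤ x} f(n) (x - n)`, not divided by `x`; as a function of `x` it is
the integral of the summatory function of `f`. -/
noncomputable def rieszSum (f : ℕ → ℝ) (x : ℝ) : ℝ :=
  summatory (fun n ↦ f n * (x - n)) x

theorem exists_abs_rieszSum_residueError_mul_log_sq_le {q : ℕ} [NeZero q] {a : ZMod q}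
    (ha : IsUnit a) :
    ∃ C, ∀ x : ℝ, Real.exp 1 ≤ x →
      |rieszSum (fun n ↦ residueError a n * Real.log n ^ 2) x| ≤ C * x ^ 2 := by
  set g : ℕ → ℂ := LSeries.logMul^[2] fun n ↦ (residueError a n : ℂ) with hg
  have habs : LSeries.abscissaOfAbsConv g ≤ 1 := by
    rw [LSeries.absicssaOfAbsConv_logPowMul]
    exact LSeries.abscissaOfAbsConv_le_of_forall_lt_LSeriesSummable fun y hy ↦
      LSeriesSummable_residueError a (by simpa using hy)
  obtain ⟨C, hC⟩ := exists_norm_LSeries_logMul_residueError_le ha one_half_pos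
  obtain ⟨K, hK⟩ := exists_norm_sum_mul_one_sub_div_le g one_half_lt_one
    (fun s hs ↦ LSeriesSummable_of_abscissaOfAbsConv_lt_re
      (habs.trans_lt (by exact_mod_cast hs))) hC
  refine ⟨K, fun x hx ↦ ?_⟩
  have hx0 : 0 < x := (Real.exp_pos 1).trans_le hx
  have hsum : ∑ n ∈ Finset.Icc 1 ⌊x⌋₊, g n * ((1 - n / x : ℝ) : ℂ) =
      ((rieszSum (fun n ↦ residueError a n * Real.log n ^ 2) x / x : ℝ) : ℂ) := by
    rw [rieszSum, summatory, Finset.sum_div, ofReal_sum]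
    refine Finset.sum_congr rfl fun n _ ↦ ?_
    simp only [hg, Function.iterate_succ, Function.iterate_zero, Function.comp, id, LSeries.logMul]
    push_cast
    have := ofReal_ne_zero.2 hx0.ne'
    field_simp
  have hbound := hK x hx
  rw [hsum, norm_real, Real.norm_eq_abs, abs_div, abs_of_pos hx0, div_le_iff₀ hx0] at hbound
  linarith

end AnalyticEstimates

/-! ### Primes in arithmetic progressions -/

section PrimesInProgressions

open ArithmeticFunction.vonMangoldt (residueClass)

section Unsmoothing

variable {f g : ℕ → ℝ} {x y h E : ℝ}

theorem summatory_sub_summatory (f : ℕ → ℝ) (hxy : x ≤ y) :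
    summatory f y - summatory f x = ∑ n ∈ Finset.Ioc ⌊x⌋₊ ⌊y⌋₊, f n := by
  rw [sub_eq_iff_eq_add']
  exact (Finset.sum_Ioc_consecutive f (Nat.zero_le _) (Nat.floor_le_floor hxy)).symm

theorem summatory_sub_summatory_le {B : ℝ} (hx : 0 ≤ x) (hxy : x ≤ y) (hB : 0 ≤ B)
    (hf : ∀ n : ℕ, x < n → n ≤ y → f n ≤ B) :
    summatory f y - summatory f x ≤ (y - x + 1) * B := by
  rw [summatory_sub_summatory f hxy]
  refine (Finset.sum_le_card_nsmul _ _ B fun n hn ↦ ?_).trans ?_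
  · rw [Finset.mem_Ioc, Nat.floor_lt hx, Nat.le_floor_iff (hx.trans hxy)] at hn
    exact hf n hn.1 hn.2
  · rw [Nat.card_Ioc, nsmul_eq_mul, Nat.cast_sub (Nat.floor_le_floor hxy)]
    gcongr
    linarith [Nat.floor_le (hx.trans hxy), Nat.lt_floor_add_one x]

theorem rieszSum_add_sub_rieszSum (f : ℕ → ℝ) (hh : 0 ≤ h) :
    rieszSum f (x + h) - rieszSum f x =
      h * summatory f x + ∑ n ∈ Finset.Ioc ⌊x⌋₊ ⌊x + h⌋₊, f n * (x + h - n) := by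
  rw [← summatory_sub_summatory _ (by linarith), rieszSum, rieszSum]
  simp only [summatory, Finset.mul_sum]
  simp only [mul_sub, mul_add, Finset.sum_sub_distrib, Finset.sum_add_distrib, mul_comm h]
  ring

theorem mul_summatory_le_rieszSum_sub (hf : ∀ n, 0 ≤ f n) (hh : 0 ≤ h) (hx : 0 ≤ x) :
    h * summatory f x ≤ rieszSum f (x + h) - rieszSum f x := by
  rw [rieszSum_add_sub_rieszSum f hh]
  refine le_add_of_nonneg_right (Finset.sum_nonneg fun n hn ↦ mul_nonneg (hf n) ?_)
  have := (Nat.le_floor_iff (by linarith)).1 (Finset.mem_Ioc.1 hn).2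
  linarith

theorem rieszSum_sub_le_mul_summatory (hf : ∀ n, 0 ≤ f n) (hh : 0 ≤ h) (hx : 0 ≤ x) :
    rieszSum f (x + h) - rieszSum f x ≤ h * summatory f (x + h) := by
  rw [rieszSum_add_sub_rieszSum f hh, ← le_sub_iff_add_le', ← mul_sub,
    summatory_sub_summatory f (by linarith), Finset.mul_sum]
  refine Finset.sum_le_sum fun n hn ↦ ?_
  have := (Nat.floor_lt hx).1 (Finset.mem_Ioc.1 hn).1
  rw [mul_comm]
  exact mul_le_mul_of_nonneg_right (by linarith) (hf n)

theorem mul_abs_summatory_sub_le (hf : ∀ n, 0 ≤ f n) (hg : ∀ n, 0 ≤ g n) (hh : 0 ≤ h)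
    (hhx : h ≤ x) (hE : ∀ y ∈ Set.Icc (x - h) (x + h), |rieszSum f y - rieszSum g y| ≤ E) :
    h * |summatory f x - summatory g x| ≤
      h * (summatory g (x + h) - summatory g (x - h)) + 2 * E := by
  have hx : 0 ≤ x := hh.trans hhx
  have hleft := abs_le.1 (hE (x - h) ⟨le_rfl, by linarith⟩)
  have hmid := abs_le.1 (hE x ⟨by linarith, by linarith⟩)
  have hright := abs_le.1 (hE (x + h) ⟨by linarith, le_rfl⟩)
  have hf₁ := rieszSum_sub_le_mul_summatory hf hh (sub_nonneg.2 hhx)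
  have hf₂ := mul_summatory_le_rieszSum_sub hf hh hx
  have hg₁ := mul_summatory_le_rieszSum_sub hg hh (sub_nonneg.2 hhx)
  have hg₂ := rieszSum_sub_le_mul_summatory hg hh hx
  have hg₃ := rieszSum_sub_le_mul_summatory hg hh (sub_nonneg.2 hhx)
  have hg₄ := mul_summatory_le_rieszSum_sub hg hh hx
  rw [sub_add_cancel] at hf₁ hg₁ hg₃
  rw [← abs_of_nonneg hh, ← abs_mul, abs_of_nonneg hh, abs_le]
  constructor <;> linarith

theorem isBigO_summatory_sub (hf : ∀ n, 0 ≤ f n) (hg : ∀ n, 0 ≤ g n) {K : ℝ}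
    (hgK : ∀ n, g n ≤ K * Real.log n ^ 2)
    (hfg : (fun x ↦ rieszSum f x - rieszSum g x) =O[atTop] fun x : ℝ ↦ x ^ 2) :
    (fun x ↦ summatory f x - summatory g x) =O[atTop] fun x ↦ x * Real.log x := by
  obtain ⟨C, hC0, hC⟩ := hfg.exists_pos
  obtain ⟨y₀, hy₀⟩ := eventually_atTop.1 hC.bound
  have hK : 0 ≤ K := by
    have := (hg 2).trans (hgK 2)
    exact nonneg_of_mul_nonneg_left this (by positivity)
  refine .of_bound (12 * K + 8 * C) ?_
  filter_upwards [eventually_ge_atTop 2, eventually_ge_atTop (2 * y₀),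
    Real.tendsto_log_atTop.eventually_ge_atTop 2] with x hx2 hxy hlog
  set h := x / Real.log x
  have hhx : h * Real.log x = x := div_mul_cancel₀ x (by linarith)
  have hh2 : h ≤ x / 2 := div_le_div_of_nonneg_left (by linarith) two_pos hlog
  have hh1 : 1 ≤ h := (one_le_div (by linarith)).2 (Real.log_le_self (by linarith))
  have hE : ∀ y ∈ Set.Icc (x - h) (x + h), |rieszSum f y - rieszSum g y| ≤ C * (2 * x) ^ 2 := by
    intro y hy
    refine (hy₀ y (by linarith [hy.1])).trans ?_
    rw [Real.norm_of_nonneg (sq_nonneg y)]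
    gcongr <;> linarith [hy.1, hy.2]
  have hmain := mul_abs_summatory_sub_le hf hg (by linarith) (by linarith) hE
  have hshort : summatory g (x + h) - summatory g (x - h) ≤ 3 * h * (K * (2 * Real.log x) ^ 2) := by
    have hlog2x : Real.log (x + h) ≤ 2 * Real.log x := by
      rw [← Real.log_rpow (by linarith), Real.rpow_two]
      exact Real.log_le_log (by linarith) (by nlinarith)
    calc _ ≤ (x + h - (x - h) + 1) * (K * Real.log (x + h) ^ 2) :=
          summatory_sub_summatory_le (by linarith) (by linarith) (by positivity) fun n hn hnx ↦
            (hgK n).trans (by gcongr; linarith)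
      _ ≤ _ := by gcongr <;> linarith [Real.log_nonneg (show 1 ≤ x + h by linarith)]
  rw [Real.norm_eq_abs, Real.norm_of_nonneg (by positivity)]
  refine le_of_mul_le_mul_left (hmain.trans ?_) (show 0 < h by linarith)
  calc _ ≤ h * (3 * h * (K * (2 * Real.log x) ^ 2)) + 2 * (C * (2 * (h * Real.log x)) ^ 2) := by
        rw [hhx]
        gcongr
    _ = h * ((12 * K + 8 * C) * (h * Real.log x * Real.log x)) := by ring
    _ = _ := by rw [hhx]

end Unsmoothing

section LogWeights

theorem summatory_mul_log_pow_le {u : ℕ → ℝ} {x : ℝ} (hx : 0 ≤ x)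
    (hu : ∀ n : ℕ, n ≤ x → 0 ≤ u n) (k : ℕ) :
    summatory (fun n ↦ u n * Real.log n ^ k) x ≤ summatory u x * Real.log x ^ k := by
  rw [summatory, summatory, Finset.sum_mul]
  refine Finset.sum_le_sum fun n hn ↦ ?_
  obtain ⟨hn1, hnx⟩ := Finset.mem_Icc.1 hn
  rw [Nat.le_floor_iff hx] at hnx
  have hn1' : (1 : ℝ) ≤ n := by exact_mod_cast hn1
  have := hu n hnx
  have := Real.log_nonneg hn1'
  gcongr

theorem le_summatory_mul_log_pow {u : ℕ → ℝ} {x y M : ℝ} (hy : 1 ≤ y) (hyx : y ≤ x)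
    (hu : ∀ n : ℕ, n ≤ x → u n ∈ Set.Icc 0 M) (k : ℕ) :
    (summatory u x - M * y) * Real.log y ^ k ≤ summatory (fun n ↦ u n * Real.log n ^ k) x := by
  have hlogy := Real.log_nonneg hy
  have hM : 0 ≤ M := by
    have h0 := hu 0 (by push_cast; linarith)
    exact h0.1.trans h0.2
  have hsmall : summatory u y ≤ M * y := by
    refine (Finset.sum_le_card_nsmul _ _ M fun n hn ↦ (hu n ?_).2).trans ?_
    · exact ((Nat.le_floor_iff (by linarith)).1 (Finset.mem_Icc.1 hn).2).trans hyx
    · rw [Nat.card_Icc, Nat.add_sub_cancel, nsmul_eq_mul, mul_comm]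
      gcongr
      exact Nat.floor_le (by linarith)
  have hhead : 0 ≤ summatory (fun n ↦ u n * Real.log n ^ k) y := by
    refine Finset.sum_nonneg fun n hn ↦
      mul_nonneg (hu n ?_).1 (pow_nonneg (Real.log_natCast_nonneg n) k)
    exact ((Nat.le_floor_iff (by linarith)).1 (Finset.mem_Icc.1 hn).2).trans hyx
  have htail : (summatory u x - summatory u y) * Real.log y ^ k ≤
      summatory (fun n ↦ u n * Real.log n ^ k) x - summatory (fun n ↦ u n * Real.log n ^ k) y := by
    rw [summatory_sub_summatory _ hyx, summatory_sub_summatory _ hyx, Finset.sum_mul]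
    refine Finset.sum_le_sum fun n hn ↦ ?_
    rw [Finset.mem_Ioc, Nat.floor_lt (by linarith), Nat.le_floor_iff (by linarith)] at hn
    have := (hu n hn.2).1
    gcongr
    exact hn.1.le
  calc _ ≤ (summatory u x - summatory u y) * Real.log y ^ k := by gcongr
    _ ≤ _ := by linarith

theorem isBigO_logLogRatio_mul {f g : ℝ → ℝ} (h : f =O[atTop] fun x ↦ g x / Real.log x) :
    f =O[atTop] fun x ↦ logLogRatio x * g x :=
  h.trans <| (inv_log_isBigO_logLogRatio.mul (isBigO_refl g atTop)).congr_left fun x ↦ by ring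

theorem isRelClose_log_div_log_sq :
    IsRelClose atTop logLogRatio (fun x ↦ Real.log (x / Real.log x ^ 2)) Real.log := by
  refine (isRelClose_log_mul_rpow_mul_log_rpow one_pos one_ne_zero (-2)).congr' ?_
    (.of_forall fun x ↦ one_mul _)
  filter_upwards [Real.tendsto_log_atTop.eventually_ge_atTop 0] with x hx
  rw [one_mul, Real.rpow_one, Real.rpow_neg hx, Real.rpow_two, div_eq_mul_inv]

theorem isRelClose_summatory_mul_log_pow {u : ℝ → ℕ → ℝ} {M : ℝ → ℝ}
    (hu : ∀ (x : ℝ) (n : ℕ), n ≤ x → u x n ∈ Set.Icc 0 (M x))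
    (hM : (fun x ↦ M x * x / Real.log x) =O[atTop] fun x ↦ summatory (u x) x) (k : ℕ) :
    IsRelClose atTop logLogRatio (fun x ↦ summatory (fun n ↦ u x n * Real.log n ^ k) x)
      (fun x ↦ summatory (u x) x * Real.log x ^ k) := by
  have hlogy := isRelClose_log_div_log_sq.pow tendsto_logLogRatio k
  have hhead : (fun x ↦ -(M x * (x / Real.log x ^ 2))) =O[atTop]
      fun x ↦ logLogRatio x * summatory (u x) x :=
    isBigO_logLogRatio_mul <| (hM.mul (isBigO_refl (fun x ↦ (Real.log x)⁻¹) _)).neg_left.congr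
      (fun x ↦ by ring) fun x ↦ (div_eq_mul_inv _ _).symm
  have hlower := ((IsRelClose.refl atTop logLogRatio _).add_isBigO hhead).mul
    tendsto_logLogRatio hlogy
  refine hlower.sandwich (.refl _ _ _) ?_ ?_
  · filter_upwards [Real.tendsto_log_atTop.eventually_ge_atTop 1, eventually_ge_atTop 0,
      (Real.isLittleO_pow_log_id_atTop (n := 2)).eventuallyLE] with x hlog hx hsq
    rw [← sub_eq_add_neg]
    refine le_summatory_mul_log_pow ?_ ?_ (hu x) k
    · rw [one_le_div (by positivity)]
      simpa [abs_of_nonneg hx] using hsq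
    · exact div_le_self hx (one_le_pow₀ hlog)
  · filter_upwards [eventually_ge_atTop 0] with x hx
    exact summatory_mul_log_pow_le hx (fun n hn ↦ (hu x n hn).1) k

end LogWeights

section Integers

theorem one_isBigO_div_log : (fun _ : ℝ ↦ (1 : ℝ)) =O[atTop] fun x ↦ x / Real.log x := by
  refine .of_bound' ?_
  filter_upwards [eventually_gt_atTop 0, Real.tendsto_log_atTop.eventually_gt_atTop 0]
    with x hx hlog
  rw [norm_one, Real.norm_of_nonneg (by positivity), one_le_div hlog]
  exact Real.log_le_self hx.le

theorem div_log_isBigO_self (g : ℝ → ℝ) : (fun x ↦ g x / Real.log x) =O[atTop] g := by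
  have hlog : (fun x ↦ (Real.log x)⁻¹) =O[atTop] fun _ ↦ (1 : ℝ) :=
    (tendsto_inv_atTop_zero.comp Real.tendsto_log_atTop).isBigO_one ℝ
  simpa only [div_eq_mul_inv, mul_one] using (isBigO_refl g atTop).mul hlog

theorem isRelClose_summatory_one :
    IsRelClose atTop logLogRatio (summatory fun _ ↦ 1) fun x ↦ x := by
  refine isBigO_logLogRatio_mul (IsBigO.trans (.of_bound' ?_) one_isBigO_div_log)
  filter_upwards [eventually_ge_atTop 0] with x hx
  rw [norm_one, Real.norm_eq_abs, abs_le]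
  simp only [summatory, Finset.sum_const, Nat.card_Icc, Nat.add_sub_cancel, nsmul_one]
  constructor <;> linarith [Nat.floor_le hx, Nat.lt_floor_add_one x]

theorem rieszSum_one (x : ℝ) :
    rieszSum (fun _ ↦ 1) x = ⌊x⌋₊ * x - ⌊x⌋₊ * (⌊x⌋₊ + 1) / 2 := by
  have hgauss : ∀ N : ℕ, ∑ n ∈ Finset.Icc 1 N, (n : ℝ) = N * (N + 1) / 2 := fun N ↦ by
    induction N with
    | zero => simp
    | succ N ih => rw [Finset.sum_Icc_succ_top (by lia), ih]; push_cast; ring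
  simp only [rieszSum, summatory, one_mul, Finset.sum_sub_distrib, hgauss, Finset.sum_const,
    Nat.card_Icc, Nat.add_sub_cancel, nsmul_eq_mul]

theorem isRelClose_rieszSum_one :
    IsRelClose atTop logLogRatio (rieszSum fun _ ↦ 1) fun x ↦ 2⁻¹ * x ^ 2 := by
  have hself : (fun x ↦ x) =O[atTop] fun x ↦ (2⁻¹ * x ^ 2) / Real.log x :=
    (((isBigO_refl (fun x ↦ x) _).mul one_isBigO_div_log).const_mul_right
      (inv_ne_zero two_ne_zero)).congr (fun x ↦ mul_one x) fun x ↦ by ring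
  refine isBigO_logLogRatio_mul (IsBigO.trans (.of_bound' ?_) hself)
  filter_upwards [eventually_ge_atTop 0] with x hx
  rw [Real.norm_eq_abs, Real.norm_of_nonneg hx, rieszSum_one, abs_le]
  constructor <;> nlinarith [Nat.floor_le hx, Nat.lt_floor_add_one x]

theorem isRelClose_summatory_log_pow (k : ℕ) :
    IsRelClose atTop logLogRatio (summatory fun n ↦ Real.log n ^ k)
      fun x ↦ x * Real.log x ^ k := by
  have hbound : (fun x ↦ 1 * x / Real.log x) =O[atTop] summatory fun _ ↦ 1 :=
    ((div_log_isBigO_self _).trans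
      (isRelClose_summatory_one.isEquivalent tendsto_logLogRatio).symm.isBigO).congr_left
      fun x ↦ by ring
  have hlog := isRelClose_summatory_mul_log_pow (u := fun _ _ ↦ 1) (fun _ _ _ ↦ by simp) hbound k
  simp only [one_mul] at hlog
  exact hlog.trans tendsto_logLogRatio (isRelClose_summatory_one.mul tendsto_logLogRatio
    (.refl _ _ _))

theorem isRelClose_rieszSum_log_pow (k : ℕ) :
    IsRelClose atTop logLogRatio (rieszSum fun n ↦ Real.log n ^ k)
      fun x ↦ 2⁻¹ * x ^ 2 * Real.log x ^ k := by
  have hbound : (fun x ↦ x * x / Real.log x) =O[atTop] rieszSum fun _ ↦ 1 :=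
    ((div_log_isBigO_self _).trans ((isBigO_self_const_mul (inv_ne_zero two_ne_zero) _ _).trans
      (isRelClose_rieszSum_one.isEquivalent tendsto_logLogRatio).symm.isBigO)).congr_left
      fun x ↦ by ring
  have hriesz : rieszSum (fun _ ↦ 1) = fun x ↦ summatory (fun n ↦ x - n) x := by
    ext x
    simp only [rieszSum, one_mul]
  rw [hriesz] at hbound
  have hlog := isRelClose_summatory_mul_log_pow (u := fun x n ↦ x - n) (M := fun x ↦ x)
    (fun x n hn ↦ ⟨by linarith, by simp⟩) hbound k
  refine (hlog.congr' (.of_forall fun x ↦ ?_) .rfl).trans tendsto_logLogRatio ?_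
  · simp only [rieszSum, mul_comm]
  · exact (hriesz ▸ isRelClose_rieszSum_one).mul tendsto_logLogRatio (.refl _ _ _)

end Integers

section Primes

variable {q : ℕ} (a : ZMod q)

/-- The indicator function of the primes congruent to `a` modulo `q`. -/
noncomputable def primeIndicator : ℕ → ℝ :=
  Set.indicator {p : ℕ | p.Prime ∧ (p : ZMod q) = a} 1

theorem primeIndicator_mem_Icc (n : ℕ) : primeIndicator a n ∈ Set.Icc 0 1 := by
  by_cases hn : n ∈ {p : ℕ | p.Prime ∧ (p : ZMod q) = a} <;> simp [primeIndicator, hn]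

theorem residueClass_nonneg (n : ℕ) : 0 ≤ residueClass a n :=
  Set.indicator_nonneg (fun _ _ ↦ ArithmeticFunction.vonMangoldt_nonneg) n

theorem residueClass_sub_mem_Icc (n : ℕ) :
    residueClass a n - primeIndicator a n * Real.log n ∈
      Set.Icc 0 (if ¬ n.Prime then ArithmeticFunction.vonMangoldt n else 0) := by
  have hvM : 0 ≤ ArithmeticFunction.vonMangoldt n := ArithmeticFunction.vonMangoldt_nonneg
  by_cases hn : n.Prime <;> by_cases ha : (n : ZMod q) = a <;>
    simp [residueClass, primeIndicator, Set.indicator, hn, ha, hvM,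
      ArithmeticFunction.vonMangoldt_apply_prime]

variable {a} {w : ℝ → ℕ → ℝ} {M : ℝ → ℝ}

theorem abs_summatory_residueClass_sub_le {w : ℕ → ℝ} {x M : ℝ} (hx : 1 ≤ x)
    (hw : ∀ n : ℕ, n ≤ x → w n ∈ Set.Icc 0 M) :
    |summatory (fun n ↦ residueClass a n * Real.log n ^ 2 * w n) x -
        summatory (fun n ↦ primeIndicator a n * w n * Real.log n ^ 3) x| ≤
      2 * (M * √x * Real.log x ^ 3) := by
  have hM : 0 ≤ M := by
    have h0 := hw 0 (by push_cast; linarith)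
    exact h0.1.trans h0.2
  have hpsi := Chebyshev.psi_sub_theta_le hx
  rw [Chebyshev.psi_sub_theta_eq_sum_not_prime, Finset.sum_filter] at hpsi
  rw [summatory, summatory, ← Finset.sum_sub_distrib]
  calc _ ≤ ∑ n ∈ Finset.Icc 1 ⌊x⌋₊,
          M * Real.log x ^ 2 * (if ¬ n.Prime then ArithmeticFunction.vonMangoldt n else 0) := by
        refine (Finset.abs_sum_le_sum_abs _ _).trans (Finset.sum_le_sum fun n hn ↦ ?_)
        obtain ⟨hn1, hnx⟩ := Finset.mem_Icc.1 hn
        rw [Nat.le_floor_iff (by linarith)] at hnx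
        obtain ⟨hlow, hupp⟩ := residueClass_sub_mem_Icc a n
        obtain ⟨hw0, hwM⟩ := hw n hnx
        have := Real.log_natCast_nonneg n
        have hlog := Real.log_le_log (by exact_mod_cast hn1) hnx
        calc _ = |w n * Real.log n ^ 2 * (residueClass a n - primeIndicator a n * Real.log n)| := by
              congr 1; ring
          _ = w n * Real.log n ^ 2 * (residueClass a n - primeIndicator a n * Real.log n) :=
              abs_of_nonneg (by positivity)
          _ ≤ _ := by gcongr
    _ ≤ M * Real.log x ^ 2 * (2 * √x * Real.log x) := by
        rw [← Finset.mul_sum]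
        gcongr
        exact hpsi
    _ = _ := by ring

theorem sqrt_mul_log_sq_isBigO_self : (fun x ↦ √x * Real.log x ^ 2) =O[atTop] fun x ↦ x := by
  have hlog : (fun x ↦ Real.log x ^ 2) =O[atTop] fun x ↦ √x := by
    simpa [Real.sqrt_eq_rpow] using (isLittleO_log_rpow_rpow_atTop 2 one_half_pos).isBigO
  refine ((isBigO_refl (fun x ↦ √x) _).mul hlog).congr' .rfl ?_
  filter_upwards [eventually_ge_atTop 0] with x hx
  exact Real.mul_self_sqrt hx

variable {κ : ℝ}

theorem IsRelClose.summatory_primeIndicator_mul_log_pow_three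
    (h : IsRelClose atTop logLogRatio
      (fun x ↦ summatory (fun n ↦ residueClass a n * Real.log n ^ 2 * w x n) x)
      fun x ↦ κ * (M x * x) * Real.log x ^ 2) (hκ : κ ≠ 0)
    (hw : ∀ (x : ℝ) (n : ℕ), n ≤ x → w x n ∈ Set.Icc 0 (M x)) :
    IsRelClose atTop logLogRatio
      (fun x ↦ summatory (fun n ↦ primeIndicator a n * w x n * Real.log n ^ 3) x)
      fun x ↦ κ * (M x * x) * Real.log x ^ 2 := by
  have hpowers : (fun x ↦ M x * √x * Real.log x ^ 3) =O[atTop]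
      fun x ↦ κ * (M x * x) * Real.log x ^ 2 / Real.log x := by
    have := ((isBigO_refl (fun x ↦ M x * Real.log x) _).mul
      sqrt_mul_log_sq_isBigO_self).const_mul_right hκ
    refine this.congr' (.of_forall fun x ↦ by ring) ?_
    filter_upwards [Real.tendsto_log_atTop.eventually_gt_atTop 0] with x hx
    field_simp
  have hdiff : (fun x ↦ summatory (fun n ↦ residueClass a n * Real.log n ^ 2 * w x n) x -
      summatory (fun n ↦ primeIndicator a n * w x n * Real.log n ^ 3) x) =O[atTop]
        fun x ↦ M x * √x * Real.log x ^ 3 := by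
    refine .of_bound 2 ?_
    filter_upwards [eventually_ge_atTop 1] with x hx
    exact (abs_summatory_residueClass_sub_le hx (hw x)).trans
      (mul_le_mul_of_nonneg_left (le_abs_self _) zero_le_two)
  exact (h.add_isBigO (isBigO_logLogRatio_mul (hdiff.trans hpowers)).neg_left).congr'
    (.of_forall fun x ↦ by ring) .rfl

theorem primeIndicator_mul_mem_Icc {w M : ℝ} (hw : w ∈ Set.Icc 0 M) (n : ℕ) :
    primeIndicator a n * w ∈ Set.Icc 0 M := by
  obtain ⟨hi0, hi1⟩ := primeIndicator_mem_Icc a n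
  exact ⟨mul_nonneg hi0 hw.1, (mul_le_of_le_one_left hw.1 hi1).trans hw.2⟩

theorem IsRelClose.div_log_isBigO_summatory_primeIndicator
    (h : IsRelClose atTop logLogRatio
      (fun x ↦ summatory (fun n ↦ primeIndicator a n * w x n * Real.log n ^ 3) x)
      fun x ↦ κ * (M x * x) * Real.log x ^ 2) (hκ : κ ≠ 0)
    (hw : ∀ (x : ℝ) (n : ℕ), n ≤ x → w x n ∈ Set.Icc 0 (M x)) :
    (fun x ↦ M x * x / Real.log x) =O[atTop]
      fun x ↦ summatory (fun n ↦ primeIndicator a n * w x n) x := by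
  have hcube : (fun x ↦ κ * (M x * x) * Real.log x ^ 2) =O[atTop]
      fun x ↦ summatory (fun n ↦ primeIndicator a n * w x n) x * Real.log x ^ 3 := by
    refine (h.isEquivalent tendsto_logLogRatio).symm.isBigO.trans (.of_bound' ?_)
    filter_upwards [eventually_ge_atTop 0] with x hx
    have hnonneg (n : ℕ) (hn : n ≤ x) := (primeIndicator_mul_mem_Icc (a := a) (hw x n hn) n).1
    refine abs_le_abs_of_nonneg ?_ (summatory_mul_log_pow_le hx hnonneg 3)
    exact Finset.sum_nonneg fun n hn ↦
      mul_nonneg (hnonneg n ((Nat.le_floor_iff hx).1 (Finset.mem_Icc.1 hn).2))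
        (pow_nonneg (Real.log_natCast_nonneg n) 3)
  refine ((hcube.mul (isBigO_refl (fun x ↦ (Real.log x ^ 3)⁻¹) _)).const_mul_left κ⁻¹).congr' ?_ ?_
  all_goals
    filter_upwards [Real.tendsto_log_atTop.eventually_gt_atTop 0] with x hx
    field_simp

theorem IsRelClose.summatory_primeIndicator
    (h : IsRelClose atTop logLogRatio
      (fun x ↦ summatory (fun n ↦ residueClass a n * Real.log n ^ 2 * w x n) x)
      fun x ↦ κ * (M x * x) * Real.log x ^ 2) (hκ : κ ≠ 0)
    (hw : ∀ (x : ℝ) (n : ℕ), n ≤ x → w x n ∈ Set.Icc 0 (M x)) :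
    IsRelClose atTop logLogRatio (fun x ↦ summatory (fun n ↦ primeIndicator a n * w x n) x)
      fun x ↦ κ * (M x * x) / Real.log x := by
  have hcube := h.summatory_primeIndicator_mul_log_pow_three hκ hw
  have hlog := ((isRelClose_summatory_mul_log_pow
    (fun x n hn ↦ primeIndicator_mul_mem_Icc (hw x n hn) n)
    (hcube.div_log_isBigO_summatory_primeIndicator hκ hw) 3).symm tendsto_logLogRatio).trans
    tendsto_logLogRatio hcube
  refine (hlog.div tendsto_logLogRatio (.refl _ _ fun x ↦ Real.log x ^ 3)).congr' ?_ ?_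
  all_goals
    filter_upwards [Real.tendsto_log_atTop.eventually_gt_atTop 0] with x hx
    field_simp

end Primes

section PrimeNumberTheorem

variable {q : ℕ} [NeZero q] {a : ZMod q}

theorem inv_totient_ne_zero (q : ℕ) [NeZero q] : (q.totient : ℝ)⁻¹ ≠ 0 := by
  simpa using NeZero.ne q

theorem rieszSum_residueClass_sub_isBigO (ha : IsUnit a) :
    (fun x ↦ rieszSum (fun n ↦ residueClass a n * Real.log n ^ 2) x -
      rieszSum (fun n ↦ (q.totient : ℝ)⁻¹ * Real.log n ^ 2) x) =O[atTop] fun x : ℝ ↦ x ^ 2 := by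
  obtain ⟨C, hC⟩ := exists_abs_rieszSum_residueError_mul_log_sq_le ha
  refine .of_bound C ?_
  filter_upwards [eventually_ge_atTop (Real.exp 1)] with x hx
  rw [Real.norm_eq_abs, Real.norm_of_nonneg (sq_nonneg x)]
  refine le_of_eq_of_le (congrArg _ ?_) (hC x hx)
  rw [rieszSum, rieszSum, rieszSum, summatory, summatory, summatory, ← Finset.sum_sub_distrib]
  exact Finset.sum_congr rfl fun n _ ↦ by rw [residueError]; ring

theorem summatory_const_mul (c : ℝ) (f : ℕ → ℝ) (x : ℝ) :
    summatory (fun n ↦ c * f n) x = c * summatory f x :=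
  (Finset.mul_sum _ _ _).symm

theorem rieszSum_const_mul (c : ℝ) (f : ℕ → ℝ) (x : ℝ) :
    rieszSum (fun n ↦ c * f n) x = c * rieszSum f x := by
  simp only [rieszSum, mul_assoc, summatory_const_mul]

theorem isRelClose_summatory_residueClass_mul_log_sq (ha : IsUnit a) :
    IsRelClose atTop logLogRatio (summatory fun n ↦ residueClass a n * Real.log n ^ 2)
      fun x ↦ (q.totient : ℝ)⁻¹ * (x * Real.log x ^ 2) := by
  have hdiff := isBigO_summatory_sub (K := (q.totient : ℝ)⁻¹)
    (fun n ↦ mul_nonneg (residueClass_nonneg a n) (sq_nonneg _)) (fun n ↦ by positivity)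
    (fun _ ↦ le_rfl) (rieszSum_residueClass_sub_isBigO ha)
  have hmain := (isRelClose_summatory_log_pow 2).const_mul (q.totient : ℝ)⁻¹
  refine (hmain.add_isBigO (isBigO_logLogRatio_mul (hdiff.trans ?_))).congr'
    (.of_forall fun x ↦ ?_) .rfl
  · refine (isBigO_self_const_mul (inv_totient_ne_zero q) _ _).congr' .rfl ?_
    filter_upwards [Real.tendsto_log_atTop.eventually_gt_atTop 0] with x hx
    field_simp
  · simp only [summatory_const_mul]
    ring

theorem isRelClose_rieszSum_residueClass_mul_log_sq (ha : IsUnit a) :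
    IsRelClose atTop logLogRatio (rieszSum fun n ↦ residueClass a n * Real.log n ^ 2)
      fun x ↦ (q.totient : ℝ)⁻¹ * (2⁻¹ * x ^ 2 * Real.log x ^ 2) := by
  have hmain := (isRelClose_rieszSum_log_pow 2).const_mul (q.totient : ℝ)⁻¹
  refine (hmain.add_isBigO (isBigO_logLogRatio_mul
    ((rieszSum_residueClass_sub_isBigO ha).trans ?_))).congr' (.of_forall fun x ↦ ?_) .rfl
  · have hlog : (fun _ ↦ (1 : ℝ)) =O[atTop] Real.log :=
      Real.isLittleO_const_log_atTop.isBigO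
    refine (((isBigO_refl (fun x ↦ x ^ 2) _).mul hlog).const_mul_right
      (mul_ne_zero (inv_totient_ne_zero q) (inv_ne_zero two_ne_zero))).congr'
      (.of_forall fun x ↦ mul_one _) ?_
    filter_upwards [Real.tendsto_log_atTop.eventually_gt_atTop 0] with x hx
    field_simp
  · simp only [rieszSum_const_mul]
    ring

theorem isRelClose_summatory_primeIndicator (ha : IsUnit a) :
    IsRelClose atTop logLogRatio (summatory (primeIndicator a))
      fun x ↦ (q.totient : ℝ)⁻¹ * x / Real.log x := by
  have h := (isRelClose_summatory_residueClass_mul_log_sq ha).congr'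
    (f₁ := fun x ↦ summatory (fun n ↦ residueClass a n * Real.log n ^ 2 * 1) x)
    (g₁ := fun x ↦ (q.totient : ℝ)⁻¹ * (1 * x) * Real.log x ^ 2)
    (.of_forall fun x ↦ by simp only [mul_one]) (.of_forall fun x ↦ by ring)
  simpa only [mul_one, one_mul] using
    h.summatory_primeIndicator (inv_totient_ne_zero q) fun _ _ _ ↦ by simp

theorem isRelClose_rieszSum_primeIndicator (ha : IsUnit a) :
    IsRelClose atTop logLogRatio (rieszSum (primeIndicator a))
      fun x ↦ (2 * q.totient : ℝ)⁻¹ * x ^ 2 / Real.log x := by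
  have hφ : (2 * q.totient : ℝ)⁻¹ ≠ 0 := by simpa using NeZero.ne q
  have h := (isRelClose_rieszSum_residueClass_mul_log_sq ha).congr'
    (g₁ := fun x ↦ (2 * q.totient : ℝ)⁻¹ * (x * x) * Real.log x ^ 2) .rfl
    (.of_forall fun x ↦ by ring)
  simp only [sq]
  exact h.summatory_primeIndicator hφ (w := fun x n ↦ x - n) fun x n hn ↦ ⟨by linarith, by simp⟩

end PrimeNumberTheorem

end PrimesInProgressions

/-! ### Values of `δ` -/

section GaussianIntegers

/-- The Gaussian integers of norm `n`, of which there are `r2 n`. -/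
def normFiber (n : ℕ) : Set GaussianInt := {z | z.norm = n}

theorem gaussianInt_norm_eq_sq_add_sq (z : GaussianInt) : z.norm = z.re ^ 2 + z.im ^ 2 := by
  rw [Zsqrtd.norm_def]
  ring

theorem r2_eq_ncard_normFiber (n : ℕ) : r2 n = (normFiber n).ncard :=
  Nat.card_congr
    { toFun p := ⟨⟨p.1.1, p.1.2⟩, (gaussianInt_norm_eq_sq_add_sq _).trans p.2⟩
      invFun z := ⟨(z.1.re, z.1.im), (gaussianInt_norm_eq_sq_add_sq _).symm.trans z.2⟩
      left_inv _ := rfl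
      right_inv _ := rfl }

theorem finite_normFiber (n : ℕ) : (normFiber n).Finite := by
  refine Set.Finite.of_injOn (f := fun z ↦ (z.re, z.im))
    (t := Set.Icc (-n : ℤ) n ×ˢ Set.Icc (-n : ℤ) n)
    (fun z hz ↦ ?_) (fun z _ w _ h ↦ Zsqrtd.ext (congrArg Prod.fst h) (congrArg Prod.snd h))
    ((Set.finite_Icc _ _).prod (Set.finite_Icc _ _))
  have hnorm : z.re ^ 2 + z.im ^ 2 = n := (gaussianInt_norm_eq_sq_add_sq z).symm.trans hz
  have hre : |z.re| ≤ n := by nlinarith [Int.le_self_sq |z.re|, sq_abs z.re, sq_nonneg z.im]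
  have him : |z.im| ≤ n := by nlinarith [Int.le_self_sq |z.im|, sq_abs z.im, sq_nonneg z.re]
  exact ⟨abs_le.1 hre, abs_le.1 him⟩

theorem mul_image_normFiber {c : GaussianInt} {m : ℕ} (hc : c.norm = m) (hm : m ≠ 0) (n : ℕ) :
    (c * ·) '' normFiber n = {z ∈ normFiber (m * n) | c ∣ z} := by
  have hmul (w : GaussianInt) : c * w ∈ normFiber (m * n) ↔ w ∈ normFiber n := by
    simp [normFiber, Zsqrtd.norm_mul, hc, hm]
  ext z
  constructor
  · rintro ⟨w, hw, rfl⟩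
    exact ⟨(hmul w).2 hw, dvd_mul_right c w⟩
  · rintro ⟨hz, w, rfl⟩
    exact ⟨w, (hmul w).1 hz, rfl⟩

theorem ncard_dvd_normFiber {c : GaussianInt} {m : ℕ} (hc : c.norm = m) (hm : m ≠ 0) (n : ℕ) :
    {z ∈ normFiber (m * n) | c ∣ z}.ncard = r2 n := by
  have hc₀ : c ≠ 0 := by
    rintro rfl
    simp_all [eq_comm]
  rw [← mul_image_normFiber hc hm, Set.ncard_image_of_injective _ (mul_right_injective₀ hc₀),
    r2_eq_ncard_normFiber]

theorem r2_mul_of_forall_dvd {c : GaussianInt} {m n : ℕ} (hc : c.norm = m) (hm : m ≠ 0)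
    (hdvd : ∀ z ∈ normFiber (m * n), c ∣ z) : r2 (m * n) = r2 n := by
  rw [← ncard_dvd_normFiber hc hm n, r2_eq_ncard_normFiber, Set.sep_eq_self_iff_mem_true.2 hdvd]

theorem prime_of_norm_prime {z : GaussianInt} (hz : Prime z.norm) : Prime z := by
  have : IsLocalHom (Zsqrtd.normMonoidHom (d := -1)) :=
    ⟨fun z ↦ (Zsqrtd.isUnit_iff_norm_isUnit z).2⟩
  exact (Irreducible.of_map (f := Zsqrtd.normMonoidHom) hz.irreducible).prime

theorem dvd_or_star_dvd_of_mem_normFiber {π z : GaussianInt} {p n : ℕ} (hπ : Prime π)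
    (hπp : π ∣ p) (hz : z ∈ normFiber n) (hpn : p ∣ n) : π ∣ z ∨ star π ∣ z := by
  have hnorm : π ∣ z * star z := by
    rw [← Zsqrtd.norm_eq_mul_conj, show z.norm = n from hz, Int.cast_natCast]
    exact hπp.trans (mod_cast Nat.cast_dvd_cast hpn)
  refine (hπ.dvd_or_dvd hnorm).imp_right fun h ↦ ?_
  simpa only [starRingEnd_apply, star_star] using map_dvd (starRingEnd GaussianInt) h

end GaussianIntegers

section PrimePowers

variable {p n : ℕ}

theorem r2_two_mul (n : ℕ) : r2 (2 * n) = r2 n := by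
  have hnorm : Zsqrtd.norm (⟨1, 1⟩ : GaussianInt) = (2 : ℕ) := by simp [Zsqrtd.norm_def]
  have hprime : Prime (⟨1, 1⟩ : GaussianInt) :=
    prime_of_norm_prime (hnorm ▸ Nat.prime_iff_prime_int.1 Nat.prime_two)
  refine r2_mul_of_forall_dvd hnorm two_ne_zero fun z hz ↦ ?_
  have hstar : (⟨1, 1⟩ : GaussianInt) ∣ star ⟨1, 1⟩ := ⟨⟨0, -1⟩, by decide⟩
  exact (dvd_or_star_dvd_of_mem_normFiber hprime ⟨⟨1, -1⟩, by decide⟩ hz (dvd_mul_right 2 n)).elim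
    id hstar.trans

theorem r2_two_pow_mul (k n : ℕ) : r2 (2 ^ k * n) = r2 n := by
  induction k with
  | zero => simp
  | succ k ih => rw [pow_succ', mul_assoc, r2_two_mul, ih]

theorem natCast_dvd_of_mem_normFiber (hp : p.Prime) (hp₃ : p % 4 = 3) {z : GaussianInt}
    (hz : z ∈ normFiber n) (hpn : p ∣ n) : (p : GaussianInt) ∣ z := by
  have := Fact.mk hp
  simpa using dvd_or_star_dvd_of_mem_normFiber
    (GaussianInt.prime_of_nat_prime_of_mod_four_eq_three p hp₃) dvd_rfl hz hpn

theorem r2_inert_sq_mul (hp : p.Prime) (hp₃ : p % 4 = 3) (n : ℕ) : r2 (p ^ 2 * n) = r2 n :=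
  r2_mul_of_forall_dvd (by simp [sq]) (pow_ne_zero 2 hp.ne_zero) fun _ hz ↦
    natCast_dvd_of_mem_normFiber hp hp₃ hz ((dvd_pow_self p two_ne_zero).mul_right n)

theorem not_natCast_dvd_of_mem_normFiber (hp : p.Prime) (hn : ¬p ∣ n) {z : GaussianInt}
    (hz : z ∈ normFiber (p * n)) : ¬(p : GaussianInt) ∣ z := by
  rintro ⟨w, rfl⟩
  have hnorm : (p : ℤ) * (p * w.norm) = p * n := by
    simpa [normFiber, Zsqrtd.norm_mul, mul_assoc] using hz
  have hdvd : (p : ℤ) ∣ n := ⟨w.norm, (mul_left_cancel₀ (mod_cast hp.ne_zero) hnorm).symm⟩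
  exact hn (mod_cast hdvd)

theorem r2_inert_mul (hp : p.Prime) (hp₃ : p % 4 = 3) (hn : ¬p ∣ n) : r2 (p * n) = 0 := by
  rw [r2_eq_ncard_normFiber, Set.ncard_eq_zero (finite_normFiber _)]
  exact Set.eq_empty_of_forall_notMem fun z hz ↦ not_natCast_dvd_of_mem_normFiber hp hn hz
    (natCast_dvd_of_mem_normFiber hp hp₃ hz (dvd_mul_right p n))

theorem r2_inert_pow_mul (hp : p.Prime) (hp₃ : p % 4 = 3) (hn : ¬p ∣ n) (k : ℕ) :
    r2 (p ^ k * n) = if Even k then r2 n else 0 := by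
  induction k using Nat.twoStepInduction with
  | zero => simp
  | one => simp [r2_inert_mul hp hp₃ hn]
  | more k ih _ =>
    rw [pow_add, mul_comm (p ^ k), mul_assoc, r2_inert_sq_mul hp hp₃, ih]
    simp [Nat.even_add]

theorem not_dvd_star_of_norm_eq_prime {π : GaussianInt} (hp : p.Prime) (hp₂ : p ≠ 2)
    (hπ : π.norm = p) : ¬π ∣ star π := by
  intro hdvd
  obtain ⟨w, hw⟩ := (dvd_add_right (dvd_refl π)).2 hdvd
  have htrace : π + star π = (2 * π.re : ℤ) := by ext <;> simp [two_mul]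
  have hpℤ := Nat.prime_iff_prime_int.1 hp
  have hre₂ : (p : ℤ) ∣ 2 * π.re := by
    have hnorm := congrArg Zsqrtd.norm (htrace.symm.trans hw)
    rw [Zsqrtd.norm_intCast, Zsqrtd.norm_mul, hπ] at hnorm
    exact (hpℤ.dvd_mul.1 ⟨_, hnorm⟩).elim id id
  have hre : (p : ℤ) ∣ π.re := by
    refine (hpℤ.dvd_mul.1 hre₂).resolve_left fun h ↦ hp₂ ?_
    exact (Nat.prime_dvd_prime_iff_eq hp Nat.prime_two).1 (mod_cast h)
  have hsq : π.re ^ 2 + π.im ^ 2 = p := (gaussianInt_norm_eq_sq_add_sq π).symm.trans hπ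
  have him : (p : ℤ) ∣ π.im := hpℤ.dvd_of_dvd_pow
    ((dvd_add_right (dvd_pow hre two_ne_zero)).1 hsq.symm.dvd)
  have hpp : (p : ℤ) ^ 2 ∣ p :=
    (dvd_add (pow_dvd_pow_of_dvd hre 2) (pow_dvd_pow_of_dvd him 2)).trans hsq.dvd
  exact hpℤ.not_isUnit (isUnit_of_dvd_one ((mul_dvd_mul_iff_left hpℤ.ne_zero).1
    (by simpa only [sq, mul_one] using hpp)))

theorem exists_gaussianInt_norm_eq (hp : p.Prime) (hp₁ : p % 4 = 1) :
    ∃ π : GaussianInt, π.norm = p := by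
  have := Fact.mk hp
  obtain ⟨a, b, hab⟩ := Nat.Prime.sq_add_sq (p := p) (by lia)
  exact ⟨⟨a, b⟩, by rw [gaussianInt_norm_eq_sq_add_sq, ← hab]; push_cast; rfl⟩

theorem normFiber_prime_mul_eq_union {π : GaussianInt} (hp : p.Prime) (hπ : π.norm = p) (n : ℕ) :
    {z ∈ normFiber (p * n) | π ∣ z} ∪ {z ∈ normFiber (p * n) | star π ∣ z} =
      normFiber (p * n) := by
  have hprime : Prime π := prime_of_norm_prime (hπ ▸ Nat.prime_iff_prime_int.1 hp)
  have hdvd : π ∣ p := ⟨star π, by rw [← Zsqrtd.norm_eq_mul_conj, hπ, Int.cast_natCast]⟩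
  rw [← Set.sep_or]
  exact Set.sep_eq_self_iff_mem_true.2 fun z hz ↦
    dvd_or_star_dvd_of_mem_normFiber hprime hdvd hz (dvd_mul_right p n)

theorem natCast_dvd_iff_dvd_and_star_dvd {π z : GaussianInt} (hp : p.Prime) (hp₂ : p ≠ 2)
    (hπ : π.norm = p) : (p : GaussianInt) ∣ z ↔ π ∣ z ∧ star π ∣ z := by
  have hprime : Prime π := prime_of_norm_prime (hπ ▸ Nat.prime_iff_prime_int.1 hp)
  have hcoprime : IsCoprime π (star π) :=
    (hprime.coprime_iff_not_dvd).2 (not_dvd_star_of_norm_eq_prime hp hp₂ hπ)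
  have hmul : (p : GaussianInt) = π * star π := by
    rw [← Zsqrtd.norm_eq_mul_conj, hπ, Int.cast_natCast]
  rw [hmul]
  exact ⟨fun h ↦ ⟨dvd_of_mul_right_dvd h, dvd_of_mul_left_dvd h⟩, fun h ↦ hcoprime.mul_dvd h.1 h.2⟩

theorem r2_split_mul_add_ncard (hp : p.Prime) (hp₁ : p % 4 = 1) (n : ℕ) :
    r2 (p * n) + {z ∈ normFiber (p * n) | (p : GaussianInt) ∣ z}.ncard = 2 * r2 n := by
  obtain ⟨π, hπ⟩ := exists_gaussianInt_norm_eq hp hp₁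
  have hstar : (star π).norm = p := (Zsqrtd.norm_conj π).trans hπ
  have hcount := Set.ncard_union_add_ncard_inter {z ∈ normFiber (p * n) | π ∣ z}
    {z ∈ normFiber (p * n) | star π ∣ z} ((finite_normFiber _).sep _) ((finite_normFiber _).sep _)
  rwa [normFiber_prime_mul_eq_union hp hπ, ← Set.sep_and, ncard_dvd_normFiber hπ hp.ne_zero,
    ncard_dvd_normFiber hstar hp.ne_zero, ← r2_eq_ncard_normFiber, ← two_mul,
    Set.sep_ext_iff.2 fun z _ ↦
      (natCast_dvd_iff_dvd_and_star_dvd (z := z) hp (by lia) hπ).symm] at hcount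

theorem r2_split_mul (hp : p.Prime) (hp₁ : p % 4 = 1) (hn : ¬p ∣ n) : r2 (p * n) = 2 * r2 n := by
  have hempty : {z ∈ normFiber (p * n) | (p : GaussianInt) ∣ z} = ∅ :=
    Set.eq_empty_of_forall_notMem fun z hz ↦ not_natCast_dvd_of_mem_normFiber hp hn hz.1 hz.2
  simpa only [hempty, Set.ncard_empty, add_zero] using r2_split_mul_add_ncard hp hp₁ n

theorem r2_split_sq_mul (hp : p.Prime) (hp₁ : p % 4 = 1) (n : ℕ) :
    r2 (p ^ 2 * n) + r2 n = 2 * r2 (p * n) := by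
  have hnorm : (p : GaussianInt).norm = (p ^ 2 : ℕ) := by simp [sq]
  have h := r2_split_mul_add_ncard hp hp₁ (p * n)
  rwa [← mul_assoc, ← sq, ncard_dvd_normFiber hnorm (pow_ne_zero 2 hp.ne_zero)] at h

theorem r2_split_pow_mul (hp : p.Prime) (hp₁ : p % 4 = 1) (hn : ¬p ∣ n) (k : ℕ) :
    r2 (p ^ k * n) = (k + 1) * r2 n := by
  induction k using Nat.twoStepInduction with
  | zero => simp
  | one => simp [r2_split_mul hp hp₁ hn]
  | more k ih ih' =>
    have h := r2_split_sq_mul hp hp₁ (p ^ k * n)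
    rw [← mul_assoc, ← mul_assoc, ← pow_add, ← pow_succ', add_comm 2, ih, ih'] at h
    linarith

end PrimePowers

section Delta

/-- The value `δ(p ^ k)` at a prime power. -/
def deltaFactor (p k : ℕ) : ℕ :=
  if p % 4 = 1 then k + 1 else if p % 4 = 3 ∧ Odd k then 0 else 1

/-- The function `δ` with values in `ℕ`, given by its Euler product. -/
def deltaNat (n : ℕ) : ℕ := n.factorization.prod deltaFactor

theorem deltaFactor_zero (p : ℕ) : deltaFactor p 0 = 1 := by
  simp [deltaFactor]

theorem deltaFactor_le (p k : ℕ) : deltaFactor p k ≤ k + 1 := by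
  unfold deltaFactor
  split_ifs <;> lia

theorem r2_prime_pow_mul {p n : ℕ} (hp : p.Prime) (hn : ¬p ∣ n) (k : ℕ) :
    r2 (p ^ k * n) = deltaFactor p k * r2 n := by
  have hcases : p = 2 ∨ p % 4 = 1 ∨ p % 4 = 3 := by
    have := hp.eq_two_or_odd
    lia
  rcases hcases with rfl | hp₁ | hp₃
  · simp [r2_two_pow_mul, deltaFactor]
  · simp [r2_split_pow_mul hp hp₁ hn, deltaFactor, hp₁]
  · rw [r2_inert_pow_mul hp hp₃ hn]
    rcases k.even_or_odd with hk | hk <;> simp [deltaFactor, hp₃, hk]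

theorem deltaNat_prime_pow_mul {p n : ℕ} (hp : p.Prime) (hn : ¬p ∣ n) (k : ℕ) :
    deltaNat (p ^ k * n) = deltaFactor p k * deltaNat n := by
  have hn₀ : n ≠ 0 := fun h ↦ hn (h ▸ dvd_zero p)
  rw [deltaNat, Nat.factorization_mul (pow_ne_zero _ hp.ne_zero) hn₀, hp.factorization_pow,
    Finsupp.prod_add_index_of_disjoint, Finsupp.prod_single_index (deltaFactor_zero p), deltaNat]
  exact Finset.disjoint_of_subset_left Finsupp.support_single_subset (by simp [hn])

theorem r2_zero : r2 0 = 1 := by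
  have hzero : normFiber 0 = {0} := by
    ext z
    simp [normFiber, GaussianInt.norm_eq_zero]
  rw [r2_eq_ncard_normFiber, hzero, Set.ncard_singleton]

theorem r2_one : r2 1 = 4 := by
  have hunits : normFiber 1 = ({⟨1, 0⟩, ⟨-1, 0⟩, ⟨0, 1⟩, ⟨0, -1⟩} : Finset GaussianInt) := by
    ext ⟨a, b⟩
    suffices a ^ 2 + b ^ 2 = 1 ↔ a = 1 ∧ b = 0 ∨ a = -1 ∧ b = 0 ∨ a = 0 ∧ b = 1 ∨ a = 0 ∧ b = -1 by
      simpa [normFiber, gaussianInt_norm_eq_sq_add_sq, Zsqrtd.ext_iff]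
    refine ⟨fun h ↦ ?_, by rintro (⟨rfl, rfl⟩ | ⟨rfl, rfl⟩ | ⟨rfl, rfl⟩ | ⟨rfl, rfl⟩) <;> norm_num⟩
    obtain ⟨ha₁, ha₂⟩ := abs_le_one_iff_mul_self_le_one.2 (by nlinarith : a * a ≤ 1) |> abs_le.1
    obtain ⟨hb₁, hb₂⟩ := abs_le_one_iff_mul_self_le_one.2 (by nlinarith : b * b ≤ 1) |> abs_le.1
    interval_cases a <;> interval_cases b <;> simp_all
  rw [r2_eq_ncard_normFiber, hunits, Set.ncard_coe_finset]
  rfl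

theorem r2_eq_four_mul_deltaNat {n : ℕ} (hn : n ≠ 0) : r2 n = 4 * deltaNat n := by
  induction n using Nat.recOnPrimePow with
  | zero => exact (hn rfl).elim
  | one => simp [r2_one, deltaNat]
  | prime_pow_mul n p k hp hpn _ ih =>
    have hn₀ : n ≠ 0 := fun h ↦ hpn (h ▸ dvd_zero p)
    rw [r2_prime_pow_mul hp hpn, deltaNat_prime_pow_mul hp hpn, ih hn₀]
    ring

theorem delta_natCast (n : ℕ) : delta n = r2 n / 4 := by
  have h : ∃ m : ℕ, (m : ℝ) = n := ⟨n, rfl⟩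
  rw [delta, dif_pos h, Nat.cast_injective h.choose_spec]

theorem delta_natCast_eq_deltaNat {n : ℕ} (hn : n ≠ 0) : delta n = deltaNat n := by
  rw [delta_natCast, r2_eq_four_mul_deltaNat hn]
  push_cast
  ring

theorem deltaNat_prod_pow {ι : Type*} {s : Finset ι} {f : ι → ℕ} (hinj : Set.InjOn f s)
    (hf : ∀ i ∈ s, (f i).Prime ∧ f i % 4 = 1) (k : ι → ℕ) :
    deltaNat (∏ i ∈ s, f i ^ k i) = ∏ i ∈ s, (k i + 1) := by
  classical
  induction s using Finset.induction_on with
  | empty => simp [deltaNat]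
  | insert i s hi ih =>
    rw [Finset.coe_insert, Set.injOn_insert (Finset.mem_coe.not.2 hi)] at hinj
    have hf' := fun j hj ↦ hf j (Finset.mem_insert_of_mem hj)
    obtain ⟨hprime, hmod⟩ := hf i (Finset.mem_insert_self i s)
    have hndvd : ¬f i ∣ ∏ j ∈ s, f j ^ k j := by
      rw [hprime.prime.dvd_finsetProd_iff]
      rintro ⟨j, hj, hdvd⟩
      have heq := (Nat.prime_dvd_prime_iff_eq hprime (hf' j hj).1).1 (hprime.dvd_of_dvd_pow hdvd)
      exact hinj.2 ⟨j, hj, heq.symm⟩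
    rw [Finset.prod_insert hi, Finset.prod_insert hi, deltaNat_prime_pow_mul hprime hndvd,
      ih hinj.1 hf', deltaFactor, if_pos hmod]

end Delta

/-! ### Sums over dilates and over split primes -/

section DilatedSums

variable {F : ℝ → ℝ} {κ B y z α : ℝ}

theorem half_log_le_log_of_sqrt_le (hy : 0 < y) (hz : √y ≤ z) :
    Real.log y / 2 ≤ Real.log z := by
  rw [← Real.log_sqrt hy.le]
  exact Real.log_le_log (Real.sqrt_pos.2 hy) hz

theorem logLogRatio_div_log_le (hy : 2 ≤ Real.log y) (hy₀ : 0 < y) (hz : √y ≤ z) (hzy : z ≤ y) :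
    logLogRatio z / Real.log z ≤ 4 * (logLogRatio y / Real.log y) := by
  have hlog := half_log_le_log_of_sqrt_le hy₀ hz
  have hz₀ : 0 < z := (Real.sqrt_pos.2 hy₀).trans_le hz
  have hloglog : 0 ≤ Real.log (Real.log y) := Real.log_nonneg (by linarith)
  calc logLogRatio z / Real.log z = Real.log (Real.log z) / Real.log z ^ 2 := by
        rw [logLogRatio, div_div, sq]
    _ ≤ Real.log (Real.log y) / (Real.log y / 2) ^ 2 := by gcongr; linarith
    _ = 4 * (logLogRatio y / Real.log y) := by
        rw [logLogRatio]
        field_simp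
        norm_num

theorem abs_inv_log_mul_sub_inv_log_le (hα : α ∈ Set.Ioc 0 1) (hy : 0 < Real.log y) (hy₀ : 0 < y)
    (hz : √y ≤ α * y) :
    |(Real.log (α * y))⁻¹ - (Real.log y)⁻¹| ≤ 4 / (√α * Real.log y ^ 2) := by
  obtain ⟨hα₀, hα₁⟩ := hα
  have hlog := half_log_le_log_of_sqrt_le hy₀ hz
  have := Real.sqrt_pos.2 hα₀
  have hinv : -Real.log α ≤ 2 / √α := by
    have := Real.log_le_self (x := (√α)⁻¹) (by positivity)
    rw [Real.log_inv, Real.log_sqrt hα₀.le] at this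
    rw [div_eq_mul_inv]
    linarith
  have hdiff : (Real.log (α * y))⁻¹ - (Real.log y)⁻¹ =
      -Real.log α / (Real.log (α * y) * Real.log y) := by
    have hlogz : Real.log (α * y) ≠ 0 := by linarith
    rw [inv_sub_inv hlogz hy.ne', Real.log_mul hα₀.ne' hy₀.ne']
    ring
  have hnonneg : 0 ≤ -Real.log α := neg_nonneg.2 (Real.log_nonpos hα₀.le hα₁)
  have : 0 < Real.log (α * y) := by linarith
  rw [hdiff, abs_of_nonneg (by positivity)]
  calc -Real.log α / (Real.log (α * y) * Real.log y)
      ≤ (2 / √α) / (Real.log y / 2 * Real.log y) := by gcongr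
    _ = 4 / (√α * Real.log y ^ 2) := by
        field_simp
        norm_num

theorem sq_eq_mul_sqrt_mul_sqrt (hα : 0 ≤ α) : α ^ 2 = α * √α * √α := by
  rw [mul_assoc, Real.mul_self_sqrt hα, sq]

theorem sq_le_mul_sqrt (hα : α ∈ Set.Ioc 0 1) : α ^ 2 ≤ α * √α := by
  rw [sq_eq_mul_sqrt_mul_sqrt hα.1.le]
  exact mul_le_of_le_one_right (mul_nonneg hα.1.le (Real.sqrt_nonneg α))
    (Real.sqrt_le_one.2 hα.2)

theorem mul_abs_sub_div_log_le (hα : α ∈ Set.Ioc 0 1) (hy : 0 < y)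
    (hlog : 2 ≤ Real.log y) (hloglog : 1 ≤ Real.log (Real.log y)) (hz : √y ≤ α * y) :
    |κ * (α * y) ^ 2 / Real.log (α * y) - κ * (α * y) ^ 2 / Real.log y| ≤
      4 * |κ| * (α * √α) * (logLogRatio y * (y ^ 2 / Real.log y)) := by
  have hinv := abs_inv_log_mul_sub_inv_log_le hα (by linarith) hy hz
  have hα₀ := hα.1
  have := Real.sqrt_pos.2 hα₀
  have hsq := sq_eq_mul_sqrt_mul_sqrt hα₀.le
  rw [div_eq_mul_inv, div_eq_mul_inv, ← mul_sub, abs_mul, abs_mul,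
    abs_of_nonneg (sq_nonneg (α * y))]
  calc |κ| * (α * y) ^ 2 * |(Real.log (α * y))⁻¹ - (Real.log y)⁻¹|
      ≤ |κ| * (α * y) ^ 2 * (4 / (√α * Real.log y ^ 2)) := by gcongr
    _ = 4 * |κ| * (α * √α) * (1 / Real.log y * (y ^ 2 / Real.log y)) := by
        rw [mul_pow, hsq]
        field_simp
    _ ≤ 4 * |κ| * (α * √α) * (logLogRatio y * (y ^ 2 / Real.log y)) := by
        rw [logLogRatio]
        gcongr

theorem exists_abs_dilate_sub_le_of_sqrt_le
    (hF : IsRelClose atTop logLogRatio F fun z ↦ κ * z ^ 2 / Real.log z) :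
    ∃ C, ∀ᶠ y in atTop, ∀ α ∈ Set.Ioc 0 1, √y ≤ α * y →
      |F (α * y) - κ * (α * y) ^ 2 / Real.log y| ≤
        C * (α * √α) * (logLogRatio y * (y ^ 2 / Real.log y)) := by
  obtain ⟨C, hC, hbound⟩ := hF.exists_abs_sub_le
  obtain ⟨Z, hZ⟩ := eventually_atTop.1 hbound
  refine ⟨4 * C * |κ| + 4 * |κ|, ?_⟩
  filter_upwards [Real.tendsto_sqrt_atTop.eventually_ge_atTop Z, eventually_gt_atTop 0,
    Real.tendsto_log_atTop.eventually_ge_atTop 2, tendsto_log_log_atTop.eventually_ge_atTop 1]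
    with y hyZ hy hlog hloglog α hα hz
  have hzy : α * y ≤ y := mul_le_of_le_one_left hy.le hα.2
  have hlogz := half_log_le_log_of_sqrt_le hy hz
  have hratio : 0 ≤ logLogRatio (α * y) / Real.log (α * y) := by
    have : 0 ≤ Real.log (Real.log (α * y)) := Real.log_nonneg (by linarith)
    unfold logLogRatio
    have : 0 < Real.log (α * y) := by linarith
    positivity
  have hnear : |F (α * y) - κ * (α * y) ^ 2 / Real.log (α * y)| ≤
      4 * C * |κ| * (α * √α) * (logLogRatio y * (y ^ 2 / Real.log y)) :=
    calc _ ≤ C * |logLogRatio (α * y) * (κ * (α * y) ^ 2 / Real.log (α * y))| :=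
          hZ _ (hyZ.trans hz)
      _ = C * |κ| * (α ^ 2 * y ^ 2) * (logLogRatio (α * y) / Real.log (α * y)) := by
          rw [show logLogRatio (α * y) * (κ * (α * y) ^ 2 / Real.log (α * y)) =
            κ * (α ^ 2 * y ^ 2) * (logLogRatio (α * y) / Real.log (α * y)) by ring, abs_mul,
            abs_mul, abs_of_nonneg hratio, abs_of_nonneg (a := α ^ 2 * y ^ 2) (by positivity)]
          ring
      _ ≤ C * |κ| * (α * √α * y ^ 2) * (4 * (logLogRatio y / Real.log y)) := by
          have := hα.1
          gcongr
          · exact sq_le_mul_sqrt hα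
          · exact logLogRatio_div_log_le hlog hy hz hzy
      _ = _ := by ring
  refine (abs_sub_le _ (κ * (α * y) ^ 2 / Real.log (α * y)) _).trans ?_
  linarith [mul_abs_sub_div_log_le (κ := κ) hα hy hlog hloglog hz]

theorem eventually_inv_sqrt_sqrt_le :
    ∀ᶠ y : ℝ in atTop, (√√y)⁻¹ ≤ logLogRatio y / Real.log y := by
  have hlittle : (fun y ↦ Real.log y ^ 2) =o[atTop] fun y ↦ y ^ (1 / 4 : ℝ) := by
    simpa using isLittleO_log_rpow_rpow_atTop 2 (by norm_num : (0 : ℝ) < 1 / 4)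
  filter_upwards [hlittle.bound one_pos, eventually_gt_atTop 0,
    Real.tendsto_log_atTop.eventually_gt_atTop 0, tendsto_log_log_atTop.eventually_ge_atTop 1]
    with y hbound hy hlog hloglog
  have hroot : y ^ (1 / 4 : ℝ) = √√y := by
    rw [Real.sqrt_eq_rpow, Real.sqrt_eq_rpow, ← Real.rpow_mul hy.le]
    norm_num
  rw [hroot, one_mul, Real.norm_of_nonneg (by positivity), Real.norm_of_nonneg (by positivity)]
    at hbound
  calc (√√y)⁻¹ ≤ (Real.log y ^ 2)⁻¹ := by gcongr
    _ ≤ Real.log (Real.log y) / Real.log y ^ 2 := by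
        rw [inv_eq_one_div]
        gcongr
    _ = logLogRatio y / Real.log y := by rw [logLogRatio, div_div, sq]

theorem eventually_abs_dilate_sub_le_of_lt_sqrt (hB : ∀ z, 0 ≤ z → |F z| ≤ B * z ^ 2) :
    ∀ᶠ y in atTop, ∀ α ∈ Set.Ioc 0 1, α * y < √y →
      |F (α * y) - κ * (α * y) ^ 2 / Real.log y| ≤
        (B + |κ|) * (α * √α) * (logLogRatio y * (y ^ 2 / Real.log y)) := by
  have hB₀ : 0 ≤ B := by simpa using (abs_nonneg _).trans (hB 1 zero_le_one)
  filter_upwards [eventually_inv_sqrt_sqrt_le, eventually_gt_atTop 0,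
    Real.tendsto_log_atTop.eventually_ge_atTop 1] with y hroot hy hlog α hα hz
  have hα₀ := hα.1
  have hsqrt : √α ≤ (√√y)⁻¹ := by
    rw [← Real.sqrt_inv]
    refine Real.sqrt_le_sqrt ?_
    rw [← one_div, le_div_iff₀ (Real.sqrt_pos.2 hy)]
    nlinarith [Real.mul_self_sqrt hy.le, Real.sqrt_pos.2 hy]
  have hmain : |κ * (α * y) ^ 2 / Real.log y| ≤ |κ| * (α * y) ^ 2 := by
    rw [abs_div, abs_mul, abs_of_nonneg (sq_nonneg (α * y)),
      abs_of_pos (zero_lt_one.trans_le hlog)]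
    exact div_le_self (by positivity) hlog
  calc |F (α * y) - κ * (α * y) ^ 2 / Real.log y|
      ≤ |F (α * y)| + |κ * (α * y) ^ 2 / Real.log y| := abs_sub _ _
    _ ≤ (B + |κ|) * (α * √α) * (√α * y ^ 2) := by
        rw [show (B + |κ|) * (α * √α) * (√α * y ^ 2) = B * (α * y) ^ 2 + |κ| * (α * y) ^ 2 by
          rw [mul_pow, sq_eq_mul_sqrt_mul_sqrt hα₀.le]; ring]
        exact add_le_add (hB _ (by positivity)) hmain
    _ ≤ (B + |κ|) * (α * √α) * (logLogRatio y / Real.log y * y ^ 2) := by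
        gcongr
        exact hsqrt.trans hroot
    _ = _ := by ring

-- The exponent `3 / 2 < 2` in the error absorbs the factor `log (1 / α)` that arises when
-- `log (α * y)` is replaced by `log y`.
theorem exists_abs_dilate_sub_le (hB : ∀ z, 0 ≤ z → |F z| ≤ B * z ^ 2)
    (hF : IsRelClose atTop logLogRatio F fun z ↦ κ * z ^ 2 / Real.log z) :
    ∃ C, ∀ᶠ y in atTop, ∀ α ∈ Set.Ioc 0 1, |F (α * y) - κ * (α * y) ^ 2 / Real.log y| ≤
      C * (α * √α) * (logLogRatio y * (y ^ 2 / Real.log y)) := by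
  obtain ⟨C, hnear⟩ := exists_abs_dilate_sub_le_of_sqrt_le hF
  refine ⟨max C (B + |κ|), ?_⟩
  filter_upwards [hnear, eventually_abs_dilate_sub_le_of_lt_sqrt (κ := κ) hB,
    logLogRatio_eventually_pos, Real.tendsto_log_atTop.eventually_gt_atTop 0]
    with y hnear hfar hratio hlog α hα
  have hα₀ := hα.1
  rcases le_or_gt √y (α * y) with hz | hz
  · refine (hnear α hα hz).trans ?_
    gcongr
    exact le_max_left _ _
  · refine (hfar α hα hz).trans ?_
    gcongr
    exact le_max_right _ _

variable {a : ℕ → ℝ}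

theorem summable_sq_of_summable_mul_sqrt (ha : ∀ l, a l ∈ Set.Ioc 0 1)
    (hsum : Summable fun l ↦ a l * √(a l)) : Summable fun l ↦ a l ^ 2 :=
  hsum.of_nonneg_of_le (fun _ ↦ sq_nonneg _) fun l ↦ sq_le_mul_sqrt (ha l)

theorem isRelClose_tsum_dilate (ha : ∀ l, a l ∈ Set.Ioc 0 1)
    (hsum : Summable fun l ↦ a l * √(a l)) (hκ : κ ≠ 0) (hB : ∀ z, 0 ≤ z → |F z| ≤ B * z ^ 2)
    (hF : IsRelClose atTop logLogRatio F fun z ↦ κ * z ^ 2 / Real.log z) :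
    IsRelClose atTop logLogRatio (fun y ↦ ∑' l, F (a l * y))
      (fun y ↦ κ * (∑' l, a l ^ 2) * y ^ 2 / Real.log y) := by
  obtain ⟨C, hC⟩ := exists_abs_dilate_sub_le hB hF
  have hsq := summable_sq_of_summable_mul_sqrt ha hsum
  have hsq_pos : 0 < ∑' l, a l ^ 2 :=
    hsq.tsum_pos (fun _ ↦ sq_nonneg _) 0 (pow_pos (ha 0).1 2)
  have herror : (fun y ↦ ∑' l, F (a l * y) - κ * (∑' l, a l ^ 2) * y ^ 2 / Real.log y) =O[atTop]
      fun y ↦ logLogRatio y * (y ^ 2 / Real.log y) := by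
    refine .of_bound (C * ∑' l, a l * √(a l)) ?_
    filter_upwards [hC, eventually_ge_atTop 0, logLogRatio_eventually_pos,
      Real.tendsto_log_atTop.eventually_gt_atTop 0] with y hy hy₀ hratio hlog
    have hFsum : Summable fun l ↦ F (a l * y) := by
      refine (hsq.mul_left (B * y ^ 2)).of_norm_bounded fun l ↦ ?_
      exact (hB _ (mul_nonneg (ha l).1.le hy₀)).trans_eq (by ring)
    have hmain : κ * (∑' l, a l ^ 2) * y ^ 2 / Real.log y =
        ∑' l, κ * (a l * y) ^ 2 / Real.log y := by
      rw [show κ * (∑' l, a l ^ 2) * y ^ 2 / Real.log y =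
        (κ * y ^ 2 / Real.log y) * ∑' l, a l ^ 2 by ring, ← tsum_mul_left]
      exact tsum_congr fun l ↦ by ring
    have hmainsum : Summable fun l ↦ κ * (a l * y) ^ 2 / Real.log y :=
      (hsq.mul_left (κ * y ^ 2 / Real.log y)).congr fun l ↦ by ring
    rw [hmain, ← hFsum.tsum_sub hmainsum, Real.norm_of_nonneg (r := _ * _) (by positivity)]
    exact tsum_of_norm_bounded ((hsum.hasSum.mul_left C).mul_right _) fun l ↦ hy _ (ha l)
  refine (herror.const_mul_right (mul_ne_zero hκ hsq_pos.ne')).congr_right fun y ↦ ?_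
  ring

end DilatedSums

section LogIncrement

/-- The increments `log (1 + 1 / (l + 1)) = log (l + 2) - log (l + 1)`, whose partial sums are the
values of `log δ` at prime powers; the sum of their squares is the series in `cBEFS`. -/
noncomputable def logIncrement (l : ℕ) : ℝ := Real.log (1 + 1 / ((l : ℝ) + 1))

theorem sum_range_logIncrement (k : ℕ) :
    ∑ l ∈ Finset.range k, logIncrement l = Real.log (k + 1) := by
  have hstep (l : ℕ) : logIncrement l = Real.log ((l + 1 : ℕ) + 1) - Real.log (l + 1) := by
    rw [← Real.log_div (by positivity) (by positivity), logIncrement]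
    congr 1
    push_cast
    field_simp
  rw [Finset.sum_congr rfl fun l _ ↦ hstep l,
    Finset.sum_range_sub fun l : ℕ ↦ Real.log ((l : ℝ) + 1)]
  simp

theorem logIncrement_le_inv (l : ℕ) : logIncrement l ≤ ((l : ℝ) + 1)⁻¹ := by
  have := Real.log_le_sub_one_of_pos (x := 1 + 1 / ((l : ℝ) + 1)) (by positivity)
  rwa [add_sub_cancel_left, ← logIncrement, one_div] at this

theorem logIncrement_mem_Ioc (l : ℕ) : logIncrement l ∈ Set.Ioc 0 1 :=
  ⟨Real.log_pos (lt_add_of_pos_right 1 (by positivity)),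
    (logIncrement_le_inv l).trans (inv_le_one_of_one_le₀ (by simp))⟩

theorem antitone_logIncrement : Antitone logIncrement := fun l m hlm ↦ by
  unfold logIncrement
  gcongr

theorem summable_logIncrement_mul_sqrt :
    Summable fun l ↦ logIncrement l * √(logIncrement l) := by
  have hsum : Summable fun l : ℕ ↦ ((l + 1 : ℕ) : ℝ) ^ (-(3 / 2) : ℝ) :=
    (summable_nat_add_iff 1).2 (Real.summable_nat_rpow.2 (by norm_num))
  refine hsum.of_nonneg_of_le
    (fun l ↦ mul_nonneg (logIncrement_mem_Ioc l).1.le (Real.sqrt_nonneg _)) fun l ↦ ?_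
  calc logIncrement l * √(logIncrement l)
      ≤ ((l : ℝ) + 1)⁻¹ * √((l : ℝ) + 1)⁻¹ := by
        gcongr <;> exact logIncrement_le_inv l
    _ = ((l + 1 : ℕ) : ℝ) ^ (-(3 / 2) : ℝ) := by
        rw [Real.sqrt_eq_rpow, ← Real.rpow_one_add' (by positivity) (by norm_num),
          Real.inv_rpow (by positivity), ← Real.rpow_neg (by positivity)]
        norm_num

/-- The constant `∑ log (1 + 1 / l) ^ 2`, in terms of which `cBEFS = √(8 * logIncrementEnergy)`. -/
noncomputable def logIncrementEnergy : ℝ := ∑' l, logIncrement l ^ 2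

theorem logIncrementEnergy_pos : 0 < logIncrementEnergy :=
  (summable_sq_of_summable_mul_sqrt logIncrement_mem_Ioc summable_logIncrement_mul_sqrt).tsum_pos
    (fun _ ↦ sq_nonneg _) 0 (pow_pos (logIncrement_mem_Ioc 0).1 2)

end LogIncrement

section SplitPrimes

variable {z : ℝ}

/-- The primes `p ≤ z` with `p ≡ 1 mod 4`, that is, those that split in the Gaussian integers. -/
noncomputable def splitPrimesUpTo (z : ℝ) : Finset ℕ :=
  (Finset.Icc 1 ⌊z⌋₊).filter fun p ↦ p.Prime ∧ p % 4 = 1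

theorem mem_splitPrimesUpTo {p : ℕ} : p ∈ splitPrimesUpTo z ↔ p ≤ z ∧ p.Prime ∧ p % 4 = 1 := by
  rw [splitPrimesUpTo, Finset.mem_filter, Finset.mem_Icc]
  refine and_congr_left fun hp ↦ ?_
  rw [Nat.le_floor_iff' hp.1.ne_zero]
  exact and_iff_right hp.1.one_le

theorem primeIndicator_one_four (n : ℕ) :
    primeIndicator (1 : ZMod 4) n = if n.Prime ∧ n % 4 = 1 then 1 else 0 := by
  have hmod : (n : ZMod 4) = 1 ↔ n % 4 = 1 := by
    simpa using ZMod.natCast_eq_natCast_iff' n 1 4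
  simp [primeIndicator, Set.indicator_apply, hmod]

theorem sum_splitPrimesUpTo (w : ℕ → ℝ) (z : ℝ) :
    ∑ p ∈ splitPrimesUpTo z, w p = summatory (fun n ↦ primeIndicator (1 : ZMod 4) n * w n) z := by
  simp only [splitPrimesUpTo, Finset.sum_filter, summatory, primeIndicator_one_four, ite_mul,
    one_mul, zero_mul]

theorem card_splitPrimesUpTo (z : ℝ) :
    ((splitPrimesUpTo z).card : ℝ) = summatory (primeIndicator (1 : ZMod 4)) z := by
  simpa using sum_splitPrimesUpTo (fun _ ↦ 1) z

theorem card_splitPrimesUpTo_le (hz : 0 ≤ z) : ((splitPrimesUpTo z).card : ℝ) ≤ z := by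
  have hcard := Finset.card_filter_le (Finset.Icc 1 ⌊z⌋₊) fun p ↦ p.Prime ∧ p % 4 = 1
  rw [Nat.card_Icc, Nat.add_sub_cancel] at hcard
  exact (Nat.cast_le.2 hcard).trans (Nat.floor_le hz)

theorem splitPrimesUpTo_eq_empty (hz : z < 2) : splitPrimesUpTo z = ∅ := by
  refine Finset.eq_empty_of_forall_notMem fun p hp ↦ ?_
  obtain ⟨hpz, hprime, -⟩ := mem_splitPrimesUpTo.1 hp
  have : (2 : ℝ) ≤ p := mod_cast hprime.two_le
  linarith

theorem isRelClose_card_splitPrimesUpTo :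
    IsRelClose atTop logLogRatio (fun z ↦ ((splitPrimesUpTo z).card : ℝ))
      fun z ↦ 2⁻¹ * z / Real.log z := by
  simpa only [card_splitPrimesUpTo, show Nat.totient 4 = 2 from rfl, Nat.cast_ofNat] using
    isRelClose_summatory_primeIndicator (isUnit_one (M := ZMod 4))

theorem isRelClose_sum_sub_splitPrimesUpTo :
    IsRelClose atTop logLogRatio (fun z ↦ ∑ p ∈ splitPrimesUpTo z, (z - p))
      fun z ↦ 4⁻¹ * z ^ 2 / Real.log z := by
  have h := isRelClose_rieszSum_primeIndicator (isUnit_one (M := ZMod 4))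
  rw [show Nat.totient 4 = 2 from rfl] at h
  norm_num at h
  exact h.congr' (.of_eq (funext fun z ↦ (sum_splitPrimesUpTo _ z).symm)) (.of_eq (by ext; ring))

theorem isRelClose_mul_card_splitPrimesUpTo :
    IsRelClose atTop logLogRatio (fun z ↦ z * ((splitPrimesUpTo z).card : ℝ))
      fun z ↦ 2⁻¹ * z ^ 2 / Real.log z :=
  ((IsRelClose.refl atTop logLogRatio fun z ↦ z).mul tendsto_logLogRatio
    isRelClose_card_splitPrimesUpTo).congr' .rfl (.of_eq (by ext; ring))

theorem isRelClose_sum_splitPrimesUpTo :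
    IsRelClose atTop logLogRatio (fun z ↦ ∑ p ∈ splitPrimesUpTo z, (p : ℝ))
      fun z ↦ 4⁻¹ * z ^ 2 / Real.log z := by
  have hmul : (fun z ↦ logLogRatio z * (2⁻¹ * z ^ 2 / Real.log z)) =O[atTop]
      fun z ↦ logLogRatio z * (4⁻¹ * z ^ 2 / Real.log z) :=
    (isBigO_const_mul_self 2 _ _).congr_left fun z ↦ by ring
  refine ((IsBigO.trans isRelClose_mul_card_splitPrimesUpTo hmul).sub
    isRelClose_sum_sub_splitPrimesUpTo).congr_left fun z ↦ ?_
  simp only [Finset.sum_sub_distrib, Finset.sum_const, nsmul_eq_mul]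
  ring

theorem isBigO_logLogRatio_mul_sq_div_log :
    (fun z ↦ z) =O[atTop] fun z ↦ logLogRatio z * (4⁻¹ * z ^ 2 / Real.log z) := by
  refine isBigO_logLogRatio_mul (.of_bound 4 ?_)
  filter_upwards [(Real.isLittleO_pow_log_id_atTop (n := 2)).bound one_pos, eventually_gt_atTop 0,
    Real.tendsto_log_atTop.eventually_gt_atTop 0] with z hbound hz hlog
  simp only [id, one_mul, norm_pow, Real.norm_of_nonneg hz.le, Real.norm_of_nonneg hlog.le]
    at hbound
  rw [Real.norm_of_nonneg hz.le, Real.norm_of_nonneg (by positivity), div_div, ← sq,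
    mul_div_assoc', le_div_iff₀ (by positivity)]
  nlinarith

theorem isRelClose_sum_add_one_sub_splitPrimesUpTo :
    IsRelClose atTop logLogRatio (fun z ↦ ∑ p ∈ splitPrimesUpTo (z + 1), (z + 1 - p))
      fun z ↦ 4⁻¹ * z ^ 2 / Real.log z := by
  have hstep : (fun z ↦ ∑ p ∈ splitPrimesUpTo (z + 1), (z + 1 - p) -
      ∑ p ∈ splitPrimesUpTo z, (z - p)) =O[atTop] fun z ↦ z := by
    refine .of_bound 2 ?_
    filter_upwards [eventually_ge_atTop 1] with z hz
    have hz₀ : 0 ≤ z := zero_le_one.trans hz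
    have hind (n : ℕ) : 0 ≤ primeIndicator (1 : ZMod 4) n := (primeIndicator_mem_Icc _ n).1
    have hlow := mul_summatory_le_rieszSum_sub hind zero_le_one hz₀
    have hupp := rieszSum_sub_le_mul_summatory hind zero_le_one hz₀
    have hcard := card_splitPrimesUpTo_le (z := z + 1) (by linarith)
    rw [← card_splitPrimesUpTo, one_mul] at hlow hupp
    rw [sum_splitPrimesUpTo, sum_splitPrimesUpTo, ← rieszSum, ← rieszSum, Real.norm_of_nonneg hz₀,
      Real.norm_of_nonneg (hlow.trans' (Nat.cast_nonneg _))]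
    linarith
  exact (isRelClose_sum_sub_splitPrimesUpTo.add_isBigO
    (hstep.trans isBigO_logLogRatio_mul_sq_div_log)).congr' (.of_eq (by ext; ring)) .rfl

theorem abs_mul_card_splitPrimesUpTo_le (hz : 0 ≤ z) :
    |z * ((splitPrimesUpTo z).card : ℝ)| ≤ 1 * z ^ 2 := by
  rw [abs_of_nonneg (by positivity), one_mul, sq]
  exact mul_le_mul_of_nonneg_left (card_splitPrimesUpTo_le hz) hz

theorem abs_sum_splitPrimesUpTo_le (hz : 0 ≤ z) :
    |∑ p ∈ splitPrimesUpTo z, (p : ℝ)| ≤ 1 * z ^ 2 := by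
  refine le_trans ?_ (abs_mul_card_splitPrimesUpTo_le hz)
  rw [abs_of_nonneg (by positivity), abs_of_nonneg (by positivity), mul_comm, ← nsmul_eq_mul]
  exact Finset.sum_le_card_nsmul _ _ _ fun p hp ↦ (mem_splitPrimesUpTo.1 hp).1

theorem abs_sum_add_one_sub_splitPrimesUpTo_le (hz : 0 ≤ z) :
    |∑ p ∈ splitPrimesUpTo (z + 1), (z + 1 - p)| ≤ 2 * z ^ 2 := by
  rcases lt_or_ge z 1 with hz₁ | hz₁
  · rw [splitPrimesUpTo_eq_empty (by linarith), Finset.sum_empty, abs_zero]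
    positivity
  rw [abs_of_nonneg (Finset.sum_nonneg fun p hp ↦ sub_nonneg.2 (mem_splitPrimesUpTo.1 hp).1)]
  calc ∑ p ∈ splitPrimesUpTo (z + 1), (z + 1 - p)
      ≤ (splitPrimesUpTo (z + 1)).card • z := by
        refine Finset.sum_le_card_nsmul _ _ _ fun p hp ↦ ?_
        have : (1 : ℝ) ≤ p := mod_cast (mem_splitPrimesUpTo.1 hp).2.1.one_le
        linarith
    _ ≤ (z + 1) * z := by
        rw [nsmul_eq_mul]
        gcongr
        exact card_splitPrimesUpTo_le (by linarith)
    _ ≤ 2 * z ^ 2 := by nlinarith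

end SplitPrimes

/-! ### The extremal problem -/

section LogDivisorCount

variable {s : Finset ℕ} {m n : ℕ}

/-- The logarithm of the number of divisors of `m` composed of primes in `s`. -/
noncomputable def logDivisorCount (s : Finset ℕ) (m : ℕ) : ℝ :=
  ∑ p ∈ s, Real.log (m.factorization p + 1)

theorem deltaNat_eq_prod_primeFactors (m : ℕ) :
    deltaNat m = ∏ p ∈ m.primeFactors, deltaFactor p (m.factorization p) :=
  Nat.prod_factorization_eq_prod_primeFactors _

theorem log_deltaNat_le_logDivisorCount (m : ℕ) :
    Real.log (deltaNat m) ≤ logDivisorCount {p ∈ m.primeFactors | p % 4 = 1} m := by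
  have hle : deltaNat m ≤ ∏ p ∈ m.primeFactors with p % 4 = 1, (m.factorization p + 1) := by
    rw [deltaNat_eq_prod_primeFactors, Finset.prod_filter]
    refine Finset.prod_le_prod (fun _ _ ↦ Nat.zero_le _) fun p _ ↦ ?_
    unfold deltaFactor
    split_ifs <;> lia
  rcases (deltaNat m).eq_zero_or_pos with hzero | hpos
  · rw [hzero, Nat.cast_zero, Real.log_zero]
    exact Finset.sum_nonneg fun p _ ↦ Real.log_nonneg (by simp)
  · calc Real.log (deltaNat m)
        ≤ Real.log (∏ p ∈ m.primeFactors with p % 4 = 1, (m.factorization p + 1) : ℕ) :=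
          Real.log_le_log (mod_cast hpos) (mod_cast hle)
      _ = logDivisorCount {p ∈ m.primeFactors | p % 4 = 1} m := by
          push_cast
          exact Real.log_prod fun p _ ↦ by positivity

theorem logDivisorCount_mul_le (s : Finset ℕ) (hm : m ≠ 0) (hn : n ≠ 0) :
    logDivisorCount s (m * n) ≤ logDivisorCount s m + logDivisorCount s n := by
  rw [logDivisorCount, logDivisorCount, logDivisorCount, ← Finset.sum_add_distrib]
  refine Finset.sum_le_sum fun p _ ↦ ?_
  rw [← Real.log_mul (by positivity) (by positivity), Nat.factorization_mul hm hn,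
    Finsupp.add_apply, Nat.cast_add]
  refine Real.log_le_log (by positivity) ?_
  nlinarith [(m.factorization p).cast_nonneg (α := ℝ), (n.factorization p).cast_nonneg (α := ℝ)]

theorem logDivisorCount_prod_le {ι : Type*} (s : Finset ℕ) (t : Finset ι) {w : ι → ℕ}
    (hw : ∀ i ∈ t, w i ≠ 0) :
    logDivisorCount s (∏ i ∈ t, w i) ≤ ∑ i ∈ t, logDivisorCount s (w i) := by
  classical
  induction t using Finset.induction_on with
  | empty => simp [logDivisorCount]
  | insert i t hi ih =>
    rw [Finset.prod_insert hi, Finset.sum_insert hi]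
    have hw' := fun j hj ↦ hw j (Finset.mem_insert_of_mem hj)
    exact (logDivisorCount_mul_le s (hw i (Finset.mem_insert_self i t))
      (Finset.prod_ne_zero_iff.2 hw')).trans (add_le_add_right (ih hw') _)

theorem logDivisorCount_le_log (s : Finset ℕ) (hm : m ≠ 0) :
    logDivisorCount s m ≤ Real.log m := by
  have hcard : logDivisorCount m.primeFactors m = Real.log m.divisors.card := by
    rw [Nat.card_divisors hm]
    push_cast
    exact (Real.log_prod fun p _ ↦ by positivity).symm
  calc logDivisorCount s m ≤ logDivisorCount (s ∪ m.primeFactors) m :=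
        Finset.sum_le_sum_of_subset_of_nonneg Finset.subset_union_left
          fun p _ _ ↦ Real.log_nonneg (by simp)
    _ = logDivisorCount m.primeFactors m :=
        (Finset.sum_subset Finset.subset_union_right fun p _ hp ↦ by
          simp [Finsupp.notMem_support_iff.1 (m.support_factorization ▸ hp)]).symm
    _ ≤ Real.log m := hcard.trans_le (Real.log_le_log
        (mod_cast Finset.card_pos.2 ⟨1, Nat.one_mem_divisors.2 hm⟩)
        (mod_cast Nat.card_divisors_le_self m))

theorem sum_factorization_mul_sub_one_le (s : Finset ℕ) (hm : m ≠ 0) :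
    ∑ p ∈ s, (m.factorization p : ℝ) * (p - 1) ≤ m - 1 := by
  induction m using Nat.recOnMul with
  | zero => exact (hm rfl).elim
  | one => simp
  | prime q hq =>
    have hq₁ : (1 : ℝ) ≤ q := mod_cast hq.one_le
    simp only [hq.factorization, Finsupp.single_apply, Nat.cast_ite, Nat.cast_one, Nat.cast_zero,
      ite_mul, one_mul, zero_mul, Finset.sum_ite_eq]
    split_ifs <;> linarith
  | mul a b iha ihb =>
    obtain ⟨ha, hb⟩ := mul_ne_zero_iff.1 hm
    have ha₁ : (1 : ℝ) ≤ a := mod_cast Nat.one_le_iff_ne_zero.2 ha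
    have hb₁ : (1 : ℝ) ≤ b := mod_cast Nat.one_le_iff_ne_zero.2 hb
    simp only [Nat.factorization_mul ha hb, Finsupp.add_apply, Nat.cast_add, add_mul,
      Finset.sum_add_distrib, Nat.cast_mul]
    nlinarith [iha ha, ihb hb]

theorem sum_factorization_prod_mul_sub_one_le {ι : Type*} (s : Finset ℕ) (t : Finset ι)
    {w : ι → ℕ} (hw : ∀ i ∈ t, w i ≠ 0) :
    ∑ p ∈ s, ((∏ i ∈ t, w i).factorization p : ℝ) * (p - 1) ≤ ∑ i ∈ t, ((w i : ℝ) - 1) := by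
  simp only [Nat.factorization_prod_apply hw, Nat.cast_sum, Finset.sum_mul]
  rw [Finset.sum_comm]
  exact Finset.sum_le_sum fun i hi ↦ sum_factorization_mul_sub_one_le s (hw i hi)

theorem log_add_one_le_mul_add_sum_max {N : ℕ} {c : ℝ} (hc : ∀ l, N ≤ l → logIncrement l ≤ c)
    (k : ℕ) :
    Real.log (k + 1) ≤ k * c + ∑ l ∈ Finset.range N, max 0 (logIncrement l - c) := by
  have hsum : ∑ l ∈ Finset.range k, (logIncrement l - c) ≤
      ∑ l ∈ Finset.range (max k N), max 0 (logIncrement l - c) :=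
    (Finset.sum_le_sum fun l _ ↦ le_max_right 0 _).trans <|
      Finset.sum_le_sum_of_subset_of_nonneg (by simp) fun l _ _ ↦ le_max_left 0 _
  have htail : ∑ l ∈ Finset.range N, max 0 (logIncrement l - c) =
      ∑ l ∈ Finset.range (max k N), max 0 (logIncrement l - c) :=
    Finset.sum_subset (by simp) fun l _ hl ↦
      max_eq_left (sub_nonpos.2 (hc l (by simpa using hl)))
  rw [Finset.sum_sub_distrib, sum_range_logIncrement, Finset.sum_const, Finset.card_range,
    nsmul_eq_mul] at hsum
  linarith

variable {y : ℝ}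

theorem sum_max_le_sum_splitPrimesUpTo (hs : ∀ p ∈ s, p.Prime ∧ p % 4 = 1) (z : ℝ) :
    ∑ p ∈ s, max 0 (z - (p - 1)) ≤ ∑ p ∈ splitPrimesUpTo (z + 1), (z + 1 - p) := by
  calc ∑ p ∈ s, max 0 (z - (p - 1)) ≤ ∑ p ∈ s ∪ splitPrimesUpTo (z + 1), max 0 (z - (p - 1)) :=
        Finset.sum_le_sum_of_subset_of_nonneg Finset.subset_union_left
          fun _ _ _ ↦ le_max_left _ _
    _ = ∑ p ∈ splitPrimesUpTo (z + 1), max 0 (z - (p - 1)) := by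
        refine (Finset.sum_subset Finset.subset_union_right fun p hp hp' ↦ ?_).symm
        have hps : p ∈ s := (Finset.mem_union.1 hp).resolve_right hp'
        have hlt : z + 1 < p := lt_of_not_ge fun h ↦ hp' (mem_splitPrimesUpTo.2 ⟨h, hs p hps⟩)
        exact max_eq_left (by linarith)
    _ = ∑ p ∈ splitPrimesUpTo (z + 1), (z + 1 - p) := by
        refine Finset.sum_congr rfl fun p hp ↦ ?_
        have := (mem_splitPrimesUpTo.1 hp).1
        rw [max_eq_right (by linarith)]
        ring

theorem logIncrement_mul_lt_one (hy : 0 < y) {l : ℕ} (hl : ⌊y⌋₊ ≤ l) :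
    logIncrement l * y < 1 := by
  have hyl : y < l + 1 := (Nat.lt_floor_add_one y).trans_le (by gcongr)
  calc logIncrement l * y ≤ ((l : ℝ) + 1)⁻¹ * y := by
        gcongr
        exact logIncrement_le_inv l
    _ < 1 := by rwa [inv_mul_lt_iff₀ (by positivity), mul_one]

theorem tsum_logIncrement_mul_eq_sum {G : ℝ → ℝ} (hG : ∀ z < 1, G z = 0) (hy : 0 < y) :
    ∑' l, G (logIncrement l * y) = ∑ l ∈ Finset.range ⌊y⌋₊, G (logIncrement l * y) :=
  tsum_eq_sum fun l hl ↦ hG _ (logIncrement_mul_lt_one hy (by simpa using hl))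

-- Linear programming duality: `1 / y` is the multiplier of the constraint that bounds
-- `∑ p ∈ s, m.factorization p * (p - 1)`.
theorem mul_logDivisorCount_le (hs : ∀ p ∈ s, p.Prime ∧ p % 4 = 1) (hy : 0 < y) (m : ℕ) :
    y * logDivisorCount s m ≤ ∑ p ∈ s, (m.factorization p : ℝ) * (p - 1) +
      ∑' l, ∑ p ∈ splitPrimesUpTo (logIncrement l * y + 1), (logIncrement l * y + 1 - p) := by
  rw [tsum_logIncrement_mul_eq_sum (G := fun z ↦ ∑ p ∈ splitPrimesUpTo (z + 1), (z + 1 - p))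
    (fun z hz ↦ by rw [splitPrimesUpTo_eq_empty (by linarith), Finset.sum_empty]) hy]
  have hterm : ∀ p ∈ s, y * Real.log (m.factorization p + 1) ≤
      m.factorization p * ((p : ℝ) - 1) +
        ∑ l ∈ Finset.range ⌊y⌋₊, max 0 (logIncrement l * y - (p - 1)) := fun p hp ↦ by
    have hp₂ : (2 : ℝ) ≤ p := mod_cast (hs p hp).1.two_le
    have hbound := mul_le_mul_of_nonneg_left (log_add_one_le_mul_add_sum_max
      (N := ⌊y⌋₊) (c := (p - 1) / y) (fun l hl ↦ (le_div_iff₀ hy).2 <| by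
        linarith [logIncrement_mul_lt_one hy hl]) (m.factorization p)) hy.le
    refine hbound.trans_eq ?_
    rw [mul_add, Finset.mul_sum]
    congr 1
    · field_simp
    · refine Finset.sum_congr rfl fun l _ ↦ ?_
      rw [mul_max_of_nonneg _ _ hy.le, mul_zero, mul_sub, mul_div_cancel₀ _ hy.ne', mul_comm y]
  rw [logDivisorCount, Finset.mul_sum]
  refine (Finset.sum_le_sum hterm).trans ?_
  rw [Finset.sum_add_distrib, Finset.sum_comm]
  gcongr with l
  exact sum_max_le_sum_splitPrimesUpTo hs _

end LogDivisorCount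

section UpperBound

variable {n : ℕ} {X Q y : ℝ}

theorem factorization_le_two_mul_log (q : ℕ) : n.factorization q ≤ 2 * Real.log n := by
  rcases eq_or_ne n 0 with rfl | hn
  · simp
  by_cases hq : q.Prime
  · have hpow : (2 : ℝ) ^ n.factorization q ≤ n :=
      mod_cast (Nat.pow_le_pow_left hq.two_le _).trans (Nat.ordProj_le q hn)
    have hlog := Real.log_le_log (by positivity) hpow
    rw [Real.log_pow] at hlog
    nlinarith [Real.log_two_gt_d9, (n.factorization q).cast_nonneg (α := ℝ)]
  · rw [Nat.factorization_eq_zero_of_not_prime n hq, Nat.cast_zero]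
    exact mul_nonneg zero_le_two (Real.log_natCast_nonneg n)

theorem sum_log_deltaFactor_le (hX : Real.log n ≤ X) (hQ : 0 ≤ Q) :
    ∑ q ∈ n.primeFactors with q ≤ ⌊Q⌋₊, Real.log (deltaFactor q (n.factorization q)) ≤
      Q * Real.log (2 * X + 1) := by
  have hX₀ : 0 ≤ X := (Real.log_natCast_nonneg n).trans hX
  have hterm (q : ℕ) : Real.log (deltaFactor q (n.factorization q)) ≤ Real.log (2 * X + 1) := by
    rcases (deltaFactor q (n.factorization q)).eq_zero_or_pos with hzero | hpos
    · rw [hzero, Nat.cast_zero, Real.log_zero]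
      exact Real.log_nonneg (by linarith)
    refine Real.log_le_log (mod_cast hpos) ?_
    have hle : (deltaFactor q (n.factorization q) : ℝ) ≤ n.factorization q + 1 :=
      mod_cast deltaFactor_le _ _
    linarith [factorization_le_two_mul_log (n := n) q]
  have hcard : (({q ∈ n.primeFactors | q ≤ ⌊Q⌋₊}.card : ℕ) : ℝ) ≤ Q := by
    refine (Nat.cast_le.2 ?_).trans (Nat.floor_le hQ)
    refine (Finset.card_le_card (t := Finset.Icc 1 ⌊Q⌋₊) fun q hq ↦ ?_).trans (by simp)
    obtain ⟨hq, hqQ⟩ := Finset.mem_filter.1 hq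
    exact Finset.mem_Icc.2 ⟨(Nat.prime_of_mem_primeFactors hq).one_le, hqQ⟩
  refine (Finset.sum_le_card_nsmul _ _ _ fun q _ ↦ hterm q).trans ?_
  rw [nsmul_eq_mul]
  gcongr
  exact Real.log_nonneg (by linarith)

theorem sum_deltaFactor_sub_one_le (hX : Real.log n ≤ X) (hQ : 1 < Q) :
    ∑ q ∈ n.primeFactors with ¬q ≤ ⌊Q⌋₊, ((deltaFactor q (n.factorization q) : ℝ) - 1) ≤
      X / Real.log Q := by
  rw [le_div_iff₀ (Real.log_pos hQ), Finset.sum_mul]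
  have hterm : ∀ q ∈ {q ∈ n.primeFactors | ¬q ≤ ⌊Q⌋₊},
      ((deltaFactor q (n.factorization q) : ℝ) - 1) * Real.log Q ≤
        n.factorization q * Real.log q := fun q hq ↦ by
    have hlog : 0 ≤ Real.log Q := Real.log_nonneg hQ.le
    have hle : (deltaFactor q (n.factorization q) : ℝ) - 1 ≤ n.factorization q :=
      sub_le_iff_le_add.2 (mod_cast deltaFactor_le _ _)
    have hqQ : Q ≤ q := (Nat.lt_of_floor_lt (not_le.1 (Finset.mem_filter.1 hq).2)).le
    gcongr
  refine (Finset.sum_le_sum hterm).trans (le_trans ?_ hX)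
  rw [Real.log_nat_eq_sum_factorization]
  exact Finset.sum_le_sum_of_subset_of_nonneg (Finset.filter_subset _ _) fun q _ _ ↦
    mul_nonneg (Nat.cast_nonneg _) (Real.log_natCast_nonneg q)

theorem log_deltaNat_deltaNat_le (hX : Real.log n ≤ X) (hQ : 1 < Q) (hy : 0 < y)
    (hn : deltaNat n ≠ 0) :
    Real.log (deltaNat (deltaNat n)) ≤ Q * Real.log (2 * X + 1) + (X / Real.log Q +
      ∑' l, ∑ p ∈ splitPrimesUpTo (logIncrement l * y + 1),
        (logIncrement l * y + 1 - p)) / y := by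
  set s := {p ∈ (deltaNat n).primeFactors | p % 4 = 1}
  set w := fun q ↦ deltaFactor q (n.factorization q)
  have hs : ∀ p ∈ s, p.Prime ∧ p % 4 = 1 := fun p hp ↦
    (Finset.mem_filter.1 hp).imp_left Nat.prime_of_mem_primeFactors
  have hw : ∀ q ∈ n.primeFactors, w q ≠ 0 :=
    Finset.prod_ne_zero_iff.1 (deltaNat_eq_prod_primeFactors n ▸ hn)
  have hsmall : ∀ q ∈ {q ∈ n.primeFactors | q ≤ ⌊Q⌋₊}, w q ≠ 0 :=
    fun q hq ↦ hw q (Finset.filter_subset _ _ hq)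
  have hlarge : ∀ q ∈ {q ∈ n.primeFactors | ¬q ≤ ⌊Q⌋₊}, w q ≠ 0 :=
    fun q hq ↦ hw q (Finset.filter_subset _ _ hq)
  have hsplit : deltaNat n = (∏ q ∈ n.primeFactors with q ≤ ⌊Q⌋₊, w q) *
      ∏ q ∈ n.primeFactors with ¬q ≤ ⌊Q⌋₊, w q :=
    (deltaNat_eq_prod_primeFactors n).trans (Finset.prod_filter_mul_prod_filter_not _ _ _).symm
  have hmul : logDivisorCount s (deltaNat n) ≤
      logDivisorCount s (∏ q ∈ n.primeFactors with q ≤ ⌊Q⌋₊, w q) +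
        logDivisorCount s (∏ q ∈ n.primeFactors with ¬q ≤ ⌊Q⌋₊, w q) :=
    hsplit ▸ logDivisorCount_mul_le s (Finset.prod_ne_zero_iff.2 hsmall)
      (Finset.prod_ne_zero_iff.2 hlarge)
  refine (log_deltaNat_le_logDivisorCount _).trans (hmul.trans (add_le_add ?_ ?_))
  · exact (logDivisorCount_prod_le s _ hsmall).trans <|
      (Finset.sum_le_sum fun q hq ↦ logDivisorCount_le_log s (hsmall q hq)).trans
        (sum_log_deltaFactor_le hX (by linarith))
  · rw [le_div_iff₀' hy]
    refine (mul_logDivisorCount_le hs hy _).trans (add_le_add_left ?_ _)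
    exact (sum_factorization_prod_mul_sub_one_le s _ hlarge).trans
      (sum_deltaFactor_sub_one_le hX hQ)

theorem delta_zero : delta 0 = 4⁻¹ := by
  have h := delta_natCast 0
  rwa [r2_zero, Nat.cast_zero, Nat.cast_one, one_div] at h

theorem log_delta_delta_le (hn : n ≠ 0) (hX : Real.log n ≤ X) (hQ : 1 < Q) (hy : 0 < y) :
    Real.log (delta (delta n)) ≤ Q * Real.log (2 * X + 1) + (X / Real.log Q +
      ∑' l, ∑ p ∈ splitPrimesUpTo (logIncrement l * y + 1),
        (logIncrement l * y + 1 - p)) / y := by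
  rw [delta_natCast_eq_deltaNat hn]
  rcases eq_or_ne (deltaNat n) 0 with hzero | hne
  · have hX₀ : 0 ≤ X := (Real.log_natCast_nonneg n).trans hX
    have hlogX : 0 ≤ Real.log (2 * X + 1) := Real.log_nonneg (by linarith)
    have hlogQ : 0 < Real.log Q := Real.log_pos hQ
    have hsum : 0 ≤ ∑' l, ∑ p ∈ splitPrimesUpTo (logIncrement l * y + 1),
        (logIncrement l * y + 1 - p) :=
      tsum_nonneg fun l ↦ Finset.sum_nonneg fun p hp ↦ sub_nonneg.2 (mem_splitPrimesUpTo.1 hp).1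
    rw [hzero, Nat.cast_zero, delta_zero]
    exact (Real.log_nonpos (by norm_num) (by norm_num)).trans (by positivity)
  · rw [delta_natCast_eq_deltaNat hne]
    exact log_deltaNat_deltaNat_le hX hQ hy hne

end UpperBound

section LowerBound

variable {Q y : ℝ}

theorem exists_deltaNat_eq_prod {ι : Type*} {t : Finset ι} {w : ι → ℕ} (hw : ∀ i ∈ t, w i ≠ 0)
    (ht : t.card ≤ (splitPrimesUpTo Q).card) :
    ∃ n, n ≠ 0 ∧ deltaNat n = ∏ i ∈ t, w i ∧ Real.log n ≤ Real.log Q * ∑ i ∈ t, (w i : ℝ) := by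
  obtain ⟨f, hft, hinj⟩ := t.finite_toSet.exists_injOn_of_encard_le
    (t := (splitPrimesUpTo Q : Set ℕ)) (by simpa using ht)
  have hf : ∀ i ∈ t, f i ≤ Q ∧ (f i).Prime ∧ f i % 4 = 1 := fun i hi ↦
    mem_splitPrimesUpTo.1 (hft hi)
  have hf₀ : ∀ i ∈ t, f i ^ (w i - 1) ≠ 0 := fun i hi ↦ pow_ne_zero _ (hf i hi).2.1.ne_zero
  refine ⟨∏ i ∈ t, f i ^ (w i - 1), Finset.prod_ne_zero_iff.2 hf₀, ?_, ?_⟩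
  · rw [deltaNat_prod_pow hinj fun i hi ↦ (hf i hi).2]
    exact Finset.prod_congr rfl fun i hi ↦ Nat.sub_add_cancel (Nat.one_le_iff_ne_zero.2 (hw i hi))
  · rw [Nat.cast_prod, Real.log_prod fun i hi ↦ Nat.cast_ne_zero.2 (hf₀ i hi), Finset.mul_sum]
    refine Finset.sum_le_sum fun i hi ↦ ?_
    have hpos : (0 : ℝ) < f i := mod_cast (hf i hi).2.1.pos
    have hlog : Real.log (f i) ≤ Real.log Q := Real.log_le_log hpos (hf i hi).1
    rw [Nat.cast_pow, Real.log_pow, mul_comm]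
    gcongr
    · exact (Real.log_natCast_nonneg _).trans hlog
    · exact Nat.sub_le _ _

theorem sum_logIncrement_le_log_card_add_one (t : Finset ℕ) :
    ∑ l ∈ t, logIncrement l ≤ Real.log (t.card + 1) := by
  induction t using Finset.induction_on_max with
  | empty => simp
  | insert a t ht ih =>
    have hat : a ∉ t := fun h ↦ (ht a h).false
    have hcard : t.card ≤ a := by
      simpa using Finset.card_le_card (t := Finset.range a) fun l hl ↦ Finset.mem_range.2 (ht l hl)
    rw [Finset.sum_insert hat, Finset.card_insert_of_notMem hat, ← sum_range_logIncrement,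
      Finset.sum_range_succ, sum_range_logIncrement, add_comm]
    exact add_le_add ih (antitone_logIncrement hcard)

theorem sum_logIncrement_mul_card_le {t : Finset ℕ} {S : ℕ → Finset ℕ}
    (hS : ∀ l ∈ t, ∀ p ∈ S l, p.Prime ∧ p % 4 = 1) :
    ∑ l ∈ t, logIncrement l * (S l).card ≤
      Real.log (deltaNat (∏ l ∈ t, ∏ p ∈ S l, p)) := by
  have hmem (l p : ℕ) :
      l ∈ t ∧ p ∈ S l ↔ l ∈ {l ∈ t | p ∈ S l} ∧ p ∈ t.biUnion S := by
    simp only [Finset.mem_filter, Finset.mem_biUnion]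
    exact ⟨fun h ↦ ⟨h, l, h⟩, fun h ↦ h.1⟩
  have hprod : ∏ l ∈ t, ∏ p ∈ S l, p = ∏ p ∈ t.biUnion S, p ^ {l ∈ t | p ∈ S l}.card := by
    rw [Finset.prod_comm' hmem]
    simp only [Finset.prod_const]
  have hsplit : ∀ p ∈ t.biUnion S, p.Prime ∧ p % 4 = 1 := fun p hp ↦ by
    obtain ⟨l, hl, hpl⟩ := Finset.mem_biUnion.1 hp
    exact hS l hl p hpl
  calc ∑ l ∈ t, logIncrement l * (S l).card = ∑ l ∈ t, ∑ _p ∈ S l, logIncrement l := by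
        simp only [Finset.sum_const, nsmul_eq_mul, mul_comm]
    _ = ∑ p ∈ t.biUnion S, ∑ l ∈ t with p ∈ S l, logIncrement l := Finset.sum_comm' hmem
    _ ≤ ∑ p ∈ t.biUnion S, Real.log ({l ∈ t | p ∈ S l}.card + 1) :=
        Finset.sum_le_sum fun p _ ↦ sum_logIncrement_le_log_card_add_one _
    _ = Real.log (deltaNat (∏ l ∈ t, ∏ p ∈ S l, p)) := by
        rw [hprod, deltaNat_prod_pow (f := fun p ↦ p) (Set.injOn_id _) hsplit, Nat.cast_prod,
          Real.log_prod fun p _ ↦ by positivity]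
        simp only [Nat.cast_add, Nat.cast_one]

-- The witness has `δ(n) = ∏ l, ∏ p ≤ logIncrement l * y, p`, where `p` runs over split primes:
-- the integer that makes the duality bound for `log δ(m)` with multiplier `1 / y` sharp.
theorem exists_le_log_delta_delta (hy : 0 < y)
    (hQ : y * Real.log (y + 1) ≤ (splitPrimesUpTo Q).card) :
    ∃ n : ℕ, n ≠ 0 ∧
      Real.log n ≤ Real.log Q * ∑' l, ∑ p ∈ splitPrimesUpTo (logIncrement l * y), (p : ℝ) ∧
      (∑' l, logIncrement l * y * (splitPrimesUpTo (logIncrement l * y)).card) / y ≤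
        Real.log (delta (delta n)) := by
  set S := fun l ↦ splitPrimesUpTo (logIncrement l * y)
  set t := Finset.range ⌊y⌋₊
  have hS (l p : ℕ) (hp : p ∈ S l) : p.Prime ∧ p % 4 = 1 := (mem_splitPrimesUpTo.1 hp).2
  have hcard : ((t.sigma S).card : ℝ) ≤ (splitPrimesUpTo Q).card := by
    calc ((t.sigma S).card : ℝ) = ∑ l ∈ t, ((S l).card : ℝ) := by simp
      _ ≤ ∑ l ∈ t, logIncrement l * y := Finset.sum_le_sum fun l _ ↦
          card_splitPrimesUpTo_le (mul_nonneg (logIncrement_mem_Ioc l).1.le hy.le)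
      _ = y * Real.log (⌊y⌋₊ + 1) := by
          rw [← Finset.sum_mul, sum_range_logIncrement, mul_comm]
      _ ≤ y * Real.log (y + 1) := by
          gcongr
          exact Nat.floor_le hy.le
      _ ≤ (splitPrimesUpTo Q).card := hQ
  obtain ⟨n, hn, hdelta, hlog⟩ := exists_deltaNat_eq_prod (t := t.sigma S) (w := fun i ↦ i.2)
    (fun i hi ↦ (hS _ _ (Finset.mem_sigma.1 hi).2).1.ne_zero) (mod_cast hcard)
  rw [Finset.prod_sigma] at hdelta
  rw [Finset.sum_sigma] at hlog
  have hne : deltaNat n ≠ 0 := hdelta ▸ Finset.prod_ne_zero_iff.2 fun l _ ↦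
    Finset.prod_ne_zero_iff.2 fun p hp ↦ (hS l p hp).1.ne_zero
  have hempty {z : ℝ} (hz : z < 1) : splitPrimesUpTo z = ∅ :=
    splitPrimesUpTo_eq_empty (by linarith)
  refine ⟨n, hn, ?_, ?_⟩
  · rwa [tsum_logIncrement_mul_eq_sum (G := fun z ↦ ∑ p ∈ splitPrimesUpTo z, (p : ℝ))
      (fun z hz ↦ by rw [hempty hz, Finset.sum_empty]) hy]
  · rw [tsum_logIncrement_mul_eq_sum (G := fun z ↦ z * (splitPrimesUpTo z).card)
      (fun z hz ↦ by simp [hempty hz]) hy, delta_natCast_eq_deltaNat hn,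
      delta_natCast_eq_deltaNat hne, hdelta, Finset.sum_div]
    refine le_trans (Finset.sum_congr rfl fun l _ ↦ ?_).le
      (sum_logIncrement_mul_card_le fun l _ ↦ hS l)
    field_simp
    rfl

end LowerBound

section Substitution

variable {F u y : ℝ → ℝ} {a b c κ : ℝ}

theorem isRelClose_log_of_isEquivalent (hc : 0 < c) (ha : a ≠ 0)
    (hu : u ~[atTop] fun x ↦ c * (x ^ a * Real.log x ^ b)) :
    IsRelClose atTop logLogRatio (fun x ↦ Real.log (u x)) (fun x ↦ a * Real.log x) := by
  obtain ⟨v, hv, huv⟩ := hu.exists_eq_mul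
  have hlogv : (fun x ↦ Real.log (v x)) =O[atTop] fun x ↦ logLogRatio x * (a * Real.log x) := by
    have hbdd : (fun x ↦ Real.log (v x)) =O[atTop] fun _ ↦ (1 : ℝ) :=
      (hv.log one_ne_zero).isBigO_one ℝ
    refine (hbdd.trans (const_isBigO_log_log 1)).trans
      ((isBigO_const_mul_self a⁻¹ _ _).congr' ?_ .rfl)
    filter_upwards [Real.tendsto_log_atTop.eventually_gt_atTop 0] with x hlog
    rw [logLogRatio]
    field_simp
  refine ((isRelClose_log_mul_rpow_mul_log_rpow hc ha b).add_isBigO hlogv).congr' ?_ .rfl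
  filter_upwards [huv, hv.eventually_ne one_ne_zero, eventually_gt_atTop 0,
    Real.tendsto_log_atTop.eventually_gt_atTop 0] with x hx hvx hpos hlog
  rw [hx, Pi.mul_apply, Real.log_mul hvx (by positivity), add_comm]

theorem isRelClose_log_of_isEquivalent_sqrt (hc : 0 < c) (hy : y ~[atTop] fun X ↦ c * √X) :
    IsRelClose atTop logLogRatio (fun X ↦ Real.log (y X)) (fun X ↦ 2⁻¹ * Real.log X) :=
  isRelClose_log_of_isEquivalent (b := 0) hc (by norm_num)
    (hy.congr_right (.of_eq (by ext; simp [Real.sqrt_eq_rpow])))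

theorem tendsto_atTop_of_isEquivalent_sqrt (hc : 0 < c) (hy : y ~[atTop] fun X ↦ c * √X) :
    Tendsto y atTop atTop :=
  hy.symm.tendsto_atTop (Real.tendsto_sqrt_atTop.const_mul_atTop hc)

theorem isRelClose_comp_of_isRelClose_sqrt
    (hF : IsRelClose atTop logLogRatio F fun z ↦ κ * z ^ 2 / Real.log z) (hc : 0 < c)
    (hy : IsRelClose atTop logLogRatio y fun X ↦ c * √X) :
    IsRelClose atTop logLogRatio (fun X ↦ F (y X)) fun X ↦ 2 * κ * c ^ 2 * X / Real.log X := by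
  have hequiv := hy.isEquivalent tendsto_logLogRatio
  have hlog := isRelClose_log_of_isEquivalent_sqrt hc hequiv
  have hcomp := (hF.comp_tendsto (tendsto_atTop_of_isEquivalent_sqrt hc hequiv)).mono_error
    (logLogRatio_comp_isBigO (by norm_num) hlog)
  refine hcomp.trans tendsto_logLogRatio ((((hy.pow tendsto_logLogRatio 2).const_mul κ).div
    tendsto_logLogRatio hlog).congr' .rfl ?_)
  filter_upwards [eventually_ge_atTop 0] with X hX
  rw [mul_pow, Real.sq_sqrt hX]
  ring

theorem eventually_logLogRatio_comp_le (hc : 0 < c) (hy : y ~[atTop] fun X ↦ c * √X) :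
    ∀ᶠ X in atTop, logLogRatio (y X) ≤ 3 * logLogRatio X := by
  have hlog := (isRelClose_log_of_isEquivalent_sqrt hc hy).isEquivalent tendsto_logLogRatio
  filter_upwards [hlog.isLittleO.bound (c := 3⁻¹) (by norm_num),
    tendsto_log_log_atTop.eventually_ge_atTop 0, Real.tendsto_log_atTop.eventually_gt_atTop 0]
    with X hbound hloglog hlogX
  rw [Pi.sub_apply, Real.norm_eq_abs, Real.norm_of_nonneg (by positivity), abs_le] at hbound
  have hlow : Real.log X / 3 ≤ Real.log (y X) := by linarith
  have hupp : Real.log (y X) ≤ Real.log X := by linarith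
  have hpos : 0 < Real.log (y X) := hlow.trans_lt' (by positivity)
  calc logLogRatio (y X) ≤ Real.log (Real.log X) / (Real.log X / 3) := by
        unfold logLogRatio
        gcongr
    _ = 3 * logLogRatio X := by
        rw [logLogRatio]
        field_simp

-- Shrinking `√(X / κ)` by a multiple of the relative error keeps the value of `F` below `X`.
theorem exists_isRelClose_sqrt_comp_le (hκ : 0 < κ)
    (hF : IsRelClose atTop logLogRatio F fun y ↦ κ * y ^ 2) :
    ∃ y : ℝ → ℝ, IsRelClose atTop logLogRatio y (fun X ↦ √κ⁻¹ * √X) ∧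
      ∀ᶠ X in atTop, F (y X) ≤ X := by
  obtain ⟨C, hC, hbound⟩ := hF.exists_abs_sub_le
  set y := fun X ↦ √κ⁻¹ * √X * (1 - 3 * C * logLogRatio X)
  have hy : IsRelClose atTop logLogRatio y fun X ↦ √κ⁻¹ * √X :=
    (isBigO_const_mul_self (-(3 * C)) (fun X ↦ logLogRatio X * (√κ⁻¹ * √X)) atTop).congr_left
      fun X ↦ by ring
  have hκ' : 0 < √κ⁻¹ := Real.sqrt_pos.2 (inv_pos.2 hκ)
  have hequiv := hy.isEquivalent tendsto_logLogRatio
  have hytop := tendsto_atTop_of_isEquivalent_sqrt hκ' hequiv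
  refine ⟨y, hy, ?_⟩
  filter_upwards [hytop.eventually hbound,
    eventually_logLogRatio_comp_le hκ' hequiv, logLogRatio_eventually_pos,
    hytop.eventually logLogRatio_eventually_pos, eventually_ge_atTop 0,
    tendsto_logLogRatio.eventually_lt_const (u := (3 * C)⁻¹) (by positivity)]
    with X hFX hratioX hpos hposy hX hsmall
  set t := 3 * C * logLogRatio X
  have ht : t ∈ Set.Icc 0 1 :=
    ⟨by positivity, (mul_le_mul_of_nonneg_left hsmall.le (by positivity)).trans_eq
      (mul_inv_cancel₀ (by positivity))⟩
  calc F (y X) ≤ κ * y X ^ 2 * (1 + C * logLogRatio (y X)) := by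
        rw [abs_of_nonneg (a := logLogRatio (y X) * _) (by positivity)] at hFX
        linarith [le_abs_self (F (y X) - κ * y X ^ 2)]
    _ ≤ κ * y X ^ 2 * (1 + t) := by
        gcongr
        nlinarith
    _ = X * ((1 - t) * (1 - t ^ 2)) := by
        simp only [y, mul_pow, Real.sq_sqrt hX, Real.sq_sqrt (inv_nonneg.2 hκ.le)]
        field_simp
        ring
    _ ≤ X := mul_le_of_le_one_right hX (by nlinarith [ht.1, ht.2])

end Substitution

section MaximalOrder

theorem isRelClose_tsum_logIncrement {F : ℝ → ℝ} {κ B : ℝ} (hκ : κ ≠ 0)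
    (hB : ∀ z, 0 ≤ z → |F z| ≤ B * z ^ 2)
    (hF : IsRelClose atTop logLogRatio F fun z ↦ κ * z ^ 2 / Real.log z) :
    IsRelClose atTop logLogRatio (fun y ↦ ∑' l, F (logIncrement l * y))
      fun y ↦ κ * logIncrementEnergy * y ^ 2 / Real.log y :=
  isRelClose_tsum_dilate logIncrement_mem_Ioc summable_logIncrement_mul_sqrt hκ hB hF

/-- The main term of `max_{log n ≤ X} log δ(δ(n))`. -/
noncomputable def maximalOrder (X : ℝ) : ℝ := 2 * √logIncrementEnergy * √X / Real.log X

theorem isBigO_logLogRatio_mul_maximalOrder :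
    (fun X ↦ √X / Real.log X ^ 3 * Real.log (2 * X + 1)) =O[atTop]
      fun X ↦ logLogRatio X * maximalOrder X := by
  have hE := logIncrementEnergy_pos
  refine isBigO_logLogRatio_mul (.of_bound √logIncrementEnergy⁻¹ ?_)
  filter_upwards [eventually_ge_atTop 3, Real.tendsto_log_atTop.eventually_gt_atTop 0]
    with X hX hlog
  have hlog₂ : Real.log (2 * X + 1) ≤ 2 * Real.log X := by
    rw [← Nat.cast_two, ← Real.log_pow, Nat.cast_two]
    exact Real.log_le_log (by linarith) (by nlinarith)
  have hlog₀ : 0 ≤ Real.log (2 * X + 1) := Real.log_nonneg (by linarith)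
  rw [Real.norm_of_nonneg (by positivity), maximalOrder, Real.norm_of_nonneg (by positivity)]
  calc √X / Real.log X ^ 3 * Real.log (2 * X + 1) ≤ √X / Real.log X ^ 3 * (2 * Real.log X) := by
        gcongr
    _ = √logIncrementEnergy⁻¹ * (2 * √logIncrementEnergy * √X / Real.log X / Real.log X) := by
        rw [Real.sqrt_inv]
        field_simp

theorem isRelClose_log_sqrt_div_log_pow :
    IsRelClose atTop logLogRatio (fun X ↦ Real.log (√X / Real.log X ^ 3))
      fun X ↦ 2⁻¹ * Real.log X := by
  refine isRelClose_log_of_isEquivalent (c := 1) (b := -3) one_pos (by norm_num)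
    (EventuallyEq.isEquivalent ?_)
  filter_upwards [Real.tendsto_log_atTop.eventually_gt_atTop 0] with X hX
  rw [one_mul, Real.sqrt_eq_rpow, Real.rpow_neg hX.le, one_div, div_eq_mul_inv]
  norm_cast

theorem eventually_one_lt_sqrt_div_log_pow : ∀ᶠ X in atTop, 1 < √X / Real.log X ^ 3 := by
  have hequiv := isRelClose_log_sqrt_div_log_pow.isEquivalent tendsto_logLogRatio
  have htop := hequiv.symm.tendsto_atTop (Real.tendsto_log_atTop.const_mul_atTop (by norm_num))
  filter_upwards [htop.eventually_gt_atTop 0, Real.tendsto_log_atTop.eventually_gt_atTop 0]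
    with X hpos hlog
  exact (Real.log_pos_iff (by positivity)).1 hpos

theorem exists_isRelClose_log_delta_delta_le :
    ∃ U : ℝ → ℝ, IsRelClose atTop logLogRatio U maximalOrder ∧
      ∀ᶠ X in atTop, ∀ n : ℕ, n ≠ 0 → Real.log n ≤ X → Real.log (delta (delta n)) ≤ U X := by
  have hE := logIncrementEnergy_pos
  set κ := 2 / √logIncrementEnergy
  have hκ : 0 < κ := by positivity
  set D := fun y ↦ ∑' l, ∑ p ∈ splitPrimesUpTo (logIncrement l * y + 1),
    (logIncrement l * y + 1 - p)
  have hD : IsRelClose atTop logLogRatio (fun X ↦ D (κ * √X)) fun X ↦ 2 * X / Real.log X := by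
    refine (isRelClose_comp_of_isRelClose_sqrt (isRelClose_tsum_logIncrement (by norm_num)
      (fun z ↦ abs_sum_add_one_sub_splitPrimesUpTo_le)
      isRelClose_sum_add_one_sub_splitPrimesUpTo) hκ (.refl _ _ _)).congr' .rfl
      (.of_eq (funext fun X ↦ ?_))
    simp only [κ, div_pow, Real.sq_sqrt hE.le]
    field_simp
    norm_num
  have hdiv : IsRelClose atTop logLogRatio (fun X ↦ X / Real.log (√X / Real.log X ^ 3))
      fun X ↦ 2 * X / Real.log X :=
    ((IsRelClose.refl _ _ _).div tendsto_logLogRatio isRelClose_log_sqrt_div_log_pow).congr' .rfl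
      (.of_eq (by ext; ring))
  have hmain : IsRelClose atTop logLogRatio
      (fun X ↦ (X / Real.log (√X / Real.log X ^ 3) + D (κ * √X)) / (κ * √X)) maximalOrder := by
    refine ((hdiv.add hD).div tendsto_logLogRatio (.refl _ _ _)).congr' .rfl ?_
    filter_upwards [eventually_gt_atTop 0] with X hX
    rw [maximalOrder]
    simp only [κ]
    field_simp
    rw [Real.sq_sqrt hX.le]
    ring
  refine ⟨_, hmain.add_isBigO isBigO_logLogRatio_mul_maximalOrder, ?_⟩
  filter_upwards [eventually_one_lt_sqrt_div_log_pow, eventually_gt_atTop 0] with X hQX hX n hn hnX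
  rw [add_comm]
  exact log_delta_delta_le hn hnX hQX (by positivity)

theorem isRelClose_log_mul_log_pow :
    IsRelClose atTop logLogRatio (fun y ↦ Real.log (y * Real.log y ^ 3)) Real.log :=
  (isRelClose_log_of_isEquivalent (a := 1) (b := 3) one_pos one_ne_zero
    (EventuallyEq.of_eq (by ext; norm_cast; simp)).isEquivalent).congr' .rfl (.of_eq (by simp))

theorem eventually_mul_log_le_card_splitPrimesUpTo :
    ∀ᶠ y in atTop, y * Real.log (y + 1) ≤ (splitPrimesUpTo (y * Real.log y ^ 3)).card := by
  have hcard : (fun y ↦ ((splitPrimesUpTo (y * Real.log y ^ 3)).card : ℝ)) ~[atTop]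
      fun y ↦ 2⁻¹ * y * Real.log y ^ 2 := by
    have htop : Tendsto (fun y ↦ y * Real.log y ^ 3) atTop atTop :=
      tendsto_id.atTop_mul_atTop₀ ((tendsto_pow_atTop three_ne_zero).comp Real.tendsto_log_atTop)
    refine ((isRelClose_card_splitPrimesUpTo.isEquivalent tendsto_logLogRatio).comp_tendsto
      htop).trans ((IsEquivalent.refl.div (isRelClose_log_mul_log_pow.isEquivalent
        tendsto_logLogRatio)).congr_right ?_)
    filter_upwards [Real.tendsto_log_atTop.eventually_gt_atTop 0] with y hlog
    simp only [Pi.div_apply]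
    field_simp
  filter_upwards [hcard.isLittleO.bound (c := 2⁻¹) (by norm_num),
    Real.tendsto_log_atTop.eventually_ge_atTop 8, eventually_ge_atTop 2] with y hbound hlog hy
  rw [Pi.sub_apply, Real.norm_eq_abs, Real.norm_of_nonneg (by positivity), abs_le] at hbound
  have hlog_succ : Real.log (y + 1) ≤ 2 * Real.log y := by
    rw [← Nat.cast_two, ← Real.log_pow]
    exact Real.log_le_log (by linarith) (by nlinarith)
  calc y * Real.log (y + 1) ≤ y * (2 * Real.log y) := by gcongr
    _ ≤ y * (4⁻¹ * Real.log y ^ 2) := mul_le_mul_of_nonneg_left (by nlinarith) (by linarith)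
    _ ≤ (splitPrimesUpTo (y * Real.log y ^ 3)).card := by linarith

theorem exists_isRelClose_le_log_delta_delta :
    ∃ V : ℝ → ℝ, IsRelClose atTop logLogRatio V maximalOrder ∧
      ∀ᶠ X in atTop, ∃ n : ℕ, n ≠ 0 ∧ Real.log n ≤ X ∧ V X ≤ Real.log (delta (delta n)) := by
  have hE := logIncrementEnergy_pos
  set κ := 2 / √logIncrementEnergy
  have hκ : 0 < κ := by positivity
  have hκE : √(4⁻¹ * logIncrementEnergy)⁻¹ = κ := by
    rw [Real.sqrt_inv, Real.sqrt_mul (by norm_num), Real.sqrt_inv,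
      show √(4 : ℝ) = 2 by rw [Real.sqrt_eq_iff_mul_self_eq] <;> norm_num, mul_inv, inv_inv]
    exact (div_eq_mul_inv _ _).symm
  have hcost : IsRelClose atTop logLogRatio (fun y ↦ Real.log (y * Real.log y ^ 3) *
      ∑' l, ∑ p ∈ splitPrimesUpTo (logIncrement l * y), (p : ℝ))
      fun y ↦ 4⁻¹ * logIncrementEnergy * y ^ 2 := by
    refine (isRelClose_log_mul_log_pow.mul tendsto_logLogRatio (isRelClose_tsum_logIncrement
      (by norm_num) (fun z ↦ abs_sum_splitPrimesUpTo_le)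
      isRelClose_sum_splitPrimesUpTo)).congr' .rfl ?_
    filter_upwards [Real.tendsto_log_atTop.eventually_gt_atTop 0] with y hlog
    field_simp
  obtain ⟨y, hy, hyX⟩ := exists_isRelClose_sqrt_comp_le (by positivity) hcost
  rw [hκE] at hy
  have hytop := tendsto_atTop_of_isEquivalent_sqrt hκ (hy.isEquivalent tendsto_logLogRatio)
  have hgain := isRelClose_comp_of_isRelClose_sqrt (isRelClose_tsum_logIncrement (by norm_num)
    (fun z ↦ abs_mul_card_splitPrimesUpTo_le) isRelClose_mul_card_splitPrimesUpTo) hκ hy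
  refine ⟨_, (hgain.div tendsto_logLogRatio hy).congr' .rfl ?_, ?_⟩
  · filter_upwards [eventually_gt_atTop 0] with X hX
    simp only [maximalOrder, κ]
    field_simp
    rw [Real.sq_sqrt hX.le, Real.sq_sqrt hE.le]
  · filter_upwards [hyX, hytop.eventually_gt_atTop 0,
      hytop.eventually eventually_mul_log_le_card_splitPrimesUpTo] with X hX hpos hQ
    obtain ⟨n, hn, hnX, hle⟩ := exists_le_log_delta_delta hpos hQ
    exact ⟨n, hn, hnX.trans hX, hle⟩

theorem le_biSup_of_mem {ι : Type*} {s : Finset ι} {i : ι} (f : ι → ℝ) (hi : i ∈ s) :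
    f i ≤ ⨆ j ∈ s, f j := by
  obtain ⟨M, hM⟩ := (s.image f).exists_le
  have hbdd (j : ι) : ⨆ _ : j ∈ s, f j ≤ max M 0 :=
    Real.iSup_le (fun hj ↦ le_max_of_le_left (hM _ (Finset.mem_image_of_mem f hj)))
      (le_max_right M 0)
  exact (ciSup_pos (f := fun _ ↦ f i) hi).ge.trans (le_ciSup ⟨_, Set.forall_mem_range.2 hbdd⟩ i)

theorem delta_one : delta 1 = 1 := by
  simpa [deltaNat] using delta_natCast_eq_deltaNat one_ne_zero

theorem isRelClose_iSup_log_delta_delta :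
    IsRelClose atTop (fun x : ℕ ↦ logLogRatio (Real.log x))
      (fun x : ℕ ↦ ⨆ n ∈ Finset.Icc 1 x, Real.log (delta (delta n)))
      fun x : ℕ ↦ maximalOrder (Real.log x) := by
  obtain ⟨U, hU, hle⟩ := exists_isRelClose_log_delta_delta_le
  obtain ⟨V, hV, hge⟩ := exists_isRelClose_le_log_delta_delta
  have hlog : Tendsto (fun x : ℕ ↦ Real.log x) atTop atTop :=
    Real.tendsto_log_atTop.comp tendsto_natCast_atTop_atTop
  refine (hV.comp_tendsto hlog).sandwich (hU.comp_tendsto hlog) ?_ ?_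
  · filter_upwards [hlog.eventually hge, eventually_gt_atTop 0] with x ⟨n, hn, hnx, hVn⟩ hx
    have hnx' : n ≤ x := mod_cast (Real.log_le_log_iff (mod_cast hn.bot_lt) (mod_cast hx)).1 hnx
    exact hVn.trans (le_biSup_of_mem (fun n : ℕ ↦ Real.log (delta (delta n)))
      (Finset.mem_Icc.2 ⟨Nat.one_le_iff_ne_zero.2 hn, hnx'⟩))
  · filter_upwards [hlog.eventually hle] with x hUx
    have hU₀ : 0 ≤ U (Real.log x) := by
      simpa [delta_one, Real.log_natCast_nonneg] using hUx 1 one_ne_zero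
    refine Real.iSup_le (fun n ↦ Real.iSup_le (fun hn ↦ ?_) hU₀) hU₀
    obtain ⟨hn₁, hnx⟩ := Finset.mem_Icc.1 hn
    exact hUx n (by lia) (Real.log_le_log (mod_cast hn₁) (mod_cast hnx))

theorem cBEFS_div_sqrt_two : cBEFS / √2 = 2 * √logIncrementEnergy := by
  have hE := logIncrementEnergy_pos
  rw [show cBEFS = √(8 * logIncrementEnergy) from rfl, ← Real.sqrt_div (by positivity),
    show 8 * logIncrementEnergy / 2 = 2 ^ 2 * logIncrementEnergy by ring,
    Real.sqrt_mul (by norm_num), Real.sqrt_sq zero_le_two]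

end MaximalOrder

end IteratedDelta

open IteratedDelta

/-- `max_{n ≤ x} log δ(δ(n)) = (√(log x)/log₂ x)·(c/√2 + O(log₃ x/log₂ x))` as `x → ∞`. -/
theorem maxOrder_iterated_delta :
    ∃ C : ℝ, 0 < C ∧ ∀ᶠ x : ℕ in atTop,
      |(⨆ n ∈ Finset.Icc 1 x, Real.log (delta (delta (n : ℝ)))) -
          Real.sqrt (Real.log x) / Real.log (Real.log x) * (cBEFS / Real.sqrt 2)| ≤
        C * (Real.sqrt (Real.log x) / Real.log (Real.log x)) *
          (Real.log (Real.log (Real.log x)) / Real.log (Real.log x)) := by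
  obtain ⟨C, hC, hbound⟩ := isRelClose_iSup_log_delta_delta.exists_abs_sub_le
  have hE := logIncrementEnergy_pos
  have hlog : Tendsto (fun x : ℕ ↦ Real.log x) atTop atTop :=
    Real.tendsto_log_atTop.comp tendsto_natCast_atTop_atTop
  refine ⟨C * (2 * √logIncrementEnergy), by positivity, ?_⟩
  filter_upwards [hbound, hlog.eventually logLogRatio_eventually_pos,
    hlog.eventually (Real.tendsto_log_atTop.eventually_gt_atTop 0)] with x hx hratio hloglog
  rw [maximalOrder, abs_of_nonneg (a := logLogRatio _ * _) (by positivity), logLogRatio] at hx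
  rw [cBEFS_div_sqrt_two]
  convert hx using 1
  · ring_nf
  · ring
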